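/- Let X be a rearrangement-invariant space over ℝⁿ, let m ∈ ℕ with m < n, and assume t^{m/n − 1}χ_{(1,∞)}(t) ∈ X'(0,∞). Define σ_m(f) = ‖t^{m/n} f**(t)‖_{X'(0,∞)} and let X^m be the rearrangement-invariant space whose norm is the associate norm of σ_m. Then there is a constant C = C(m,n) such that for every u ∈ V^m X(ℝⁿ) there exists a polynomial P of degree at most m−1 (depending on u) with ‖u − P‖_{X^m} ≤ C ‖∇^m u‖_X. -/

import Mathlib

/-!
The Sobolev inequality is first proved for a scale of Lorentz-type functionals
`Lam Φ w = ∫₀^∞ Φ(|{|w| > τ}|) dτ` and then transferred to `X` by duality.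

First order. The Poincaré inequality on balls (`weak_poincare`) and a chaining of averages over
dyadic balls (`enorm_sub_le_riesz`) bound the oscillation of a truncation of a weakly differentiable
`w` by a Riesz potential of order one of the gradient, restricted to the set where the truncation is
not constant. Finiteness of the superlevel sets of this potential (`riesz_superlevel_finite`)
produces one constant `c` valid for all truncations, and the weak-type estimate (`riesz_weak_type`)
then bounds the measure of `{|w - c| ≥ b}` by the gradient on `{a < |w - c| < b}`
(`exists_const_trunc`). Summation over slices chosen so that the superlevel sets are dyadic in
measure (`lam_le_of_slices`) gives `first_order`: `Lam Φ (w - c) ≤ C Lam (raise n Φ) g` for every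
nondecreasing `Φ` vanishing at the origin, where `g` bounds the gradient of `w`. The constant `c`
does not depend on `Φ`.

Higher order. The estimate is iterated, from the derivatives of order `m - 1` downwards. Since the
constant subtracted from a derivative may be chosen as a function of its almost everywhere class
only, the constants are symmetric in the directions, so that they are the derivatives of a
polynomial of degree at most `m - 1` (`exists_poly_partials`). This gives `higher_order`, with one
polynomial `P` serving all gauges.

Duality. For `f` with `σ_m(f) ≤ 1`, the integral `∫ |u - P| |f|` is at most `Lam Φ (u - P)` with
`Φ(x) = ∫₀^∞ min(x, |{|f| > τ}|) dτ` (`lintegral_mul_le_lam`), and the `m`-fold iterate of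
`raise n` is at most the operator `raiseJ n m` of order `m` (`iterate_raise_le`). The functional so
obtained involves a supremum over points to the right of `t`. Moving the mass of a test function onto
dyadic intervals, which hardly changes a rearrangement-invariant norm (`lintegral_shift_le`), removes
this supremum, and Hölder's inequality in `X` bounds the functional by `4 ‖∇^m u‖_X`
(`lam_dual_le`). The condition on the weight enters through `lam_base_lt_top` only: it guarantees the
finiteness without which no constants could be chosen.
-/

open MeasureTheory ENNReal Set Filter

noncomputable section

/-- Euclidean space ℝⁿ. -/
abbrev Euc (n : ℕ) := EuclideanSpace ℝ (Fin n)

/-- Nonincreasing rearrangement of an `ℝ≥0∞`-valued function. -/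
def rearrE {α : Type*} [MeasurableSpace α] (μ : Measure α) (f : α → ℝ≥0∞) (t : ℝ) : ℝ≥0∞ :=
  sInf {l : ℝ≥0∞ | μ {x | l < f x} ≤ ENNReal.ofReal t}

/-- Unsigned nonincreasing rearrangement `f*` of a real-valued function. -/
def rearr {α : Type*} [MeasurableSpace α] (μ : Measure α) (f : α → ℝ) (t : ℝ) : ℝ≥0∞ :=
  rearrE μ (fun x => ENNReal.ofReal |f x|) t

/-- `u` is `m`-times weakly differentiable on ℝⁿ, with weak derivatives
`D k a` of order `k ≤ m` in the directions `a : Fin k → Fin n`. -/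
def HasWeakDerivs (n m : ℕ) (u : Euc n → ℝ) (D : ∀ k : ℕ, (Fin k → Fin n) → Euc n → ℝ) : Prop :=
  LocallyIntegrable u volume ∧ (∀ a : Fin 0 → Fin n, D 0 a = u) ∧
    (∀ k (a : Fin k → Fin n), k ≤ m → LocallyIntegrable (D k a) volume) ∧
    ∀ k : ℕ, k ≤ m → ∀ (a : Fin k → Fin n) (φ : Euc n → ℝ),
      ContDiff ℝ (⊤ : ℕ∞) φ → HasCompactSupport φ →
        ∫ x, u x * iteratedFDeriv ℝ k φ x (fun j => EuclideanSpace.single (a j) 1)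
          = (-1 : ℝ) ^ k * ∫ x, D k a x * φ x

/-- The ℓ¹-norm `|∇^m u|` of the vector of all `m`-th order weak derivatives. -/
def gradAbs (n m : ℕ) (D : ∀ k : ℕ, (Fin k → Fin n) → Euc n → ℝ) (x : Euc n) : ℝ :=
  ∑ a : Fin m → Fin n, |D m a x|

/-- A rearrangement-invariant Banach function norm over `(α, μ)`, acting on
nonnegative extended-real valued measurable functions (axioms (P1)–(P6)). -/
structure RINorm {α : Type*} [MeasurableSpace α] (μ : Measure α) where
  ρ : (α → ℝ≥0∞) → ℝ≥0∞
  ρ_zero : ρ (fun _ => 0) = 0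
  ρ_eq_zero : ∀ f : α → ℝ≥0∞, Measurable f → ρ f = 0 → f =ᵐ[μ] 0
  ρ_smul : ∀ (c : ℝ≥0∞) (f : α → ℝ≥0∞), ρ (fun x => c * f x) = c * ρ f
  ρ_add : ∀ f g : α → ℝ≥0∞, ρ (fun x => f x + g x) ≤ ρ f + ρ g
  ρ_mono : ∀ f g : α → ℝ≥0∞, (∀ᵐ x ∂μ, f x ≤ g x) → ρ f ≤ ρ g
  ρ_fatou : ∀ F : ℕ → α → ℝ≥0∞, (∀ k x, F k x ≤ F (k + 1) x) →
    ρ (fun x => ⨆ k, F k x) = ⨆ k, ρ (F k)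
  ρ_chi : ∀ s : Set α, MeasurableSet s → μ s < ⊤ → ρ (s.indicator 1) < ⊤
  ρ_loc : ∀ s : Set α, MeasurableSet s → μ s < ⊤ →
    ∃ C : ℝ≥0∞, C ≠ ⊤ ∧ ∀ f : α → ℝ≥0∞, ∫⁻ x in s, f x ∂μ ≤ C * ρ f
  ρ_ri : ∀ f g : α → ℝ≥0∞, rearrE μ f = rearrE μ g → ρ f = ρ g

/-- The associate norm ρ'(g) = sup { ∫ f g dμ : ρ(f) ≤ 1 }. -/
def RINorm.assoc {α : Type*} [MeasurableSpace α] {μ : Measure α} (N : RINorm μ)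
    (g : α → ℝ≥0∞) : ℝ≥0∞ :=
  ⨆ (f : α → ℝ≥0∞) (_ : N.ρ f ≤ 1), ∫⁻ x, f x * g x ∂μ

/-- The norm of a real-valued function on `(β, ν)` in the r.i. space over ℝⁿ whose
representation norm over `(0,∞)` is `N` (Luxemburg representation): ‖f‖ = ρ(f*). -/
def riNorm {β : Type*} [MeasurableSpace β] (N : RINorm (volume.restrict (Ioi (0 : ℝ))))
    (ν : Measure β) (f : β → ℝ) : ℝ≥0∞ :=
  N.ρ (rearr ν f)

/-- maximal rearrangement f**(t) = (1/t)∫₀^t f*(s) ds -/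
def doubleStar {α : Type*} [MeasurableSpace α] (μ : Measure α) (f : α → ℝ) (t : ℝ) : ℝ≥0∞ :=
  (ENNReal.ofReal t)⁻¹ * ∫⁻ s in Ioo (0 : ℝ) t, rearr μ f s

/-- The condition t^{m/n-1}χ_{(1,∞)}(t) ∈ X'(0,∞). -/
def WeightCond (N : RINorm (volume.restrict (Ioi (0 : ℝ)))) (n m : ℕ) : Prop :=
  N.assoc (fun t => ENNReal.ofReal (t ^ ((m : ℝ) / n - 1)) * (Ioi (1 : ℝ)).indicator 1 t) < ⊤

/-- The functional σ_m(f) = ‖t^{m/n} f**(t)‖_{X'(0,∞)}. -/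
def sigmaNorm (N : RINorm (volume.restrict (Ioi (0 : ℝ)))) (n m : ℕ) (f : Euc n → ℝ) : ℝ≥0∞ :=
  N.assoc (fun t => ENNReal.ofReal (t ^ ((m : ℝ) / n)) * doubleStar volume f t)

/-- The norm of the optimal space X^m: the associate norm of σ_m over ℝⁿ. -/
def XmNorm (N : RINorm (volume.restrict (Ioi (0 : ℝ)))) (n m : ℕ) (g : Euc n → ℝ) : ℝ≥0∞ :=
  ⨆ (f : Euc n → ℝ) (_ : sigmaNorm N n m f ≤ 1),
    ∫⁻ x, ENNReal.ofReal |g x| * ENNReal.ofReal |f x|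

/-- Evaluation of a polynomial in n variables at a point of ℝⁿ. -/
def polyEval {n : ℕ} (P : MvPolynomial (Fin n) ℝ) (x : Euc n) : ℝ :=
  MvPolynomial.eval (fun i => x i) P

open scoped Topology Convolution
open Metric (closedBall)

/-! ### Poincaré inequality for smooth functions -/

/-- The map `y ↦ (1 - t) x + t y` sends the ball into itself and scales the volume by `t^n`; this is
where the factor `2^n` of the Poincaré inequality comes from. -/
theorem lintegral_scale_le {n : ℕ} (F : Euc n → ℝ≥0∞) (hF : Measurable F) (z : Euc n) (R : ℝ)
    (x : Euc n) (hx : x ∈ closedBall z R) (t : ℝ) (ht : t ∈ Icc (1/2 : ℝ) 1) :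
    ∫⁻ y in closedBall z R, F ((1 - t) • x + t • y) ≤ 2 ^ n * ∫⁻ y in closedBall z R, F y := by
  obtain ⟨h1, h2⟩ := ht
  have ht0 : (0:ℝ) < t := by linarith
  set B := closedBall z R
  have hB : MeasurableSet B := measurableSet_closedBall
  set H : Euc n → ℝ≥0∞ := B.indicator F
  have hH : Measurable H := hF.indicator hB
  have hconv : Convex ℝ B := convex_closedBall z R
  calc ∫⁻ y in B, F ((1 - t) • x + t • y) = ∫⁻ y in B, H ((1 - t) • x + t • y) := by
        refine setLIntegral_congr_fun hB fun y hy => ?_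
        have : (1 - t) • x + t • y ∈ B := hconv hx hy (by linarith) ht0.le (by ring)
        simp [H, this]
    _ ≤ ∫⁻ y, H ((1 - t) • x + t • y) := setLIntegral_le_lintegral _ _
    _ = ∫⁻ y, H ((1 - t) • x + y) ∂(Measure.map (t • ·) volume) := by
        exact (lintegral_map (f := fun y => H ((1 - t) • x + y))
          (hH.comp (measurable_const_add _)) (measurable_const_smul t)).symm
    _ = ENNReal.ofReal (abs (t ^ n)⁻¹) * ∫⁻ y, H ((1 - t) • x + y) := by
        rw [Measure.map_addHaar_smul _ ht0.ne']
        simp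
    _ ≤ 2 ^ n * ∫⁻ y, H y := by
        rw [lintegral_add_left_eq_self H]
        gcongr
        have e2 : (2 : ℝ≥0∞) ^ n = ENNReal.ofReal (2 ^ n) := by
          rw [ENNReal.ofReal_pow (by norm_num)]; simp
        rw [e2]
        apply ENNReal.ofReal_le_ofReal
        rw [abs_of_pos (by positivity), ← inv_pow]
        gcongr
        rw [inv_le_comm₀ ht0 (by norm_num)]
        linarith
    _ = 2 ^ n * ∫⁻ y in B, F y := by rw [lintegral_indicator hB]

theorem enorm_sub_le_lintegral {n : ℕ} (f : Euc n → ℝ) (hf : ContDiff ℝ 1 f) (x y : Euc n) :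
    ‖f x - f y‖ₑ ≤ ∫⁻ t in Icc (0:ℝ) 1, ‖fderiv ℝ f ((1 - t) • x + t • y)‖ₑ * ‖x - y‖ₑ := by
  have hd : ∀ t ∈ uIcc (0:ℝ) 1, HasDerivAt (fun t : ℝ => f ((1 - t) • x + t • y))
      (fderiv ℝ f ((1 - t) • x + t • y) (y - x)) t := by
    intro t _
    have h1 : HasDerivAt (fun t : ℝ => (1 - t) • x + t • y) (y - x) t := by
      have := (((hasDerivAt_id t).const_sub 1).smul_const x).add ((hasDerivAt_id t).smul_const y)
      rw [neg_one_smul, one_smul, neg_add_eq_sub] at this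
      exact this
    exact ((hf.differentiable (by norm_num)) _).hasFDerivAt.comp_hasDerivAt t h1
  have hc : Continuous fun t : ℝ => fderiv ℝ f ((1 - t) • x + t • y) (y - x) := by
    have := hf.continuous_fderiv (by norm_num)
    fun_prop
  have := intervalIntegral.integral_eq_sub_of_hasDerivAt hd (hc.intervalIntegrable _ _)
  simp only [sub_self, zero_smul, one_smul, zero_add, sub_zero, add_zero] at this
  rw [← enorm_neg, neg_sub, ← this, intervalIntegral.integral_of_le zero_le_one,
    ← integral_Icc_eq_integral_Ioc]
  refine (enorm_integral_le_lintegral_enorm _).trans (lintegral_mono fun t => ?_)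
  rw [← enorm_neg (x - y), neg_sub]
  exact ContinuousLinearMap.le_opENorm _ _

/-- The Poincaré inequality on a ball: integrate the gradient along the segment from `x` to `y` and
apply `lintegral_scale_le` at whichever endpoint carries weight at least `1/2`. -/
theorem poincare_smooth {n : ℕ} (f : Euc n → ℝ) (hf : ContDiff ℝ 1 f) (z : Euc n) (R : ℝ) :
    ∫⁻ x in closedBall z R, ∫⁻ y in closedBall z R, ‖f x - f y‖ₑ ≤
      ENNReal.ofReal (2 * R) * 2 ^ n * volume (closedBall z R) *
        ∫⁻ x in closedBall z R, ‖fderiv ℝ f x‖ₑ := by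
  set B := closedBall z R
  have hB : MeasurableSet B := measurableSet_closedBall
  set F : Euc n → ℝ≥0∞ := fun x => ‖fderiv ℝ f x‖ₑ
  have hFc : Continuous F := (hf.continuous_fderiv (by norm_num)).enorm
  set I := ∫⁻ x in B, F x
  -- for fixed `t`, one of the two endpoints has weight at least `1/2`
  have key : ∀ t ∈ Icc (0:ℝ) 1, ∫⁻ x in B, ∫⁻ y in B, F ((1 - t) • x + t • y) ≤
      2 ^ n * volume B * I := by
    intro t ht
    rcases le_total (1/2) t with h | h
    · calc _ ≤ ∫⁻ x in B, 2 ^ n * I := setLIntegral_mono' hB fun x hx =>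
            lintegral_scale_le F hFc.measurable z R x hx t ⟨h, ht.2⟩
        _ = _ := by rw [setLIntegral_const]; ring
    · rw [lintegral_lintegral_swap (by
        apply Measurable.aemeasurable
        exact (hFc.comp (by fun_prop)).measurable)]
      calc _ ≤ ∫⁻ x in B, 2 ^ n * I := setLIntegral_mono' hB fun x hx => by
            have := lintegral_scale_le F hFc.measurable z R x hx (1 - t) ⟨by linarith, by linarith [ht.1]⟩
            simpa [add_comm] using this
        _ = _ := by rw [setLIntegral_const]; ring
  calc ∫⁻ x in B, ∫⁻ y in B, ‖f x - f y‖ₑ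
      ≤ ∫⁻ x in B, ∫⁻ y in B, ENNReal.ofReal (2 * R) *
          ∫⁻ t in Icc (0:ℝ) 1, F ((1 - t) • x + t • y) := by
        refine setLIntegral_mono' hB fun x hx => setLIntegral_mono' hB fun y hy => ?_
        refine (enorm_sub_le_lintegral f hf x y).trans ?_
        rw [← lintegral_const_mul _ (by
          exact (hFc.comp (by fun_prop)).measurable)]
        refine lintegral_mono fun t => ?_
        rw [mul_comm]
        gcongr
        rw [← ofReal_norm, ← dist_eq_norm]
        apply ENNReal.ofReal_le_ofReal
        have := dist_triangle_right x y z
        have h1 := Metric.mem_closedBall.1 hx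
        have h2 := Metric.mem_closedBall.1 hy
        linarith
    _ = ENNReal.ofReal (2 * R) * ∫⁻ t in Icc (0:ℝ) 1, ∫⁻ x in B, ∫⁻ y in B,
          F ((1 - t) • x + t • y) := by
        have s1 : ∀ x, ∫⁻ y in B, ENNReal.ofReal (2 * R) *
            ∫⁻ t in Icc (0:ℝ) 1, F ((1 - t) • x + t • y) =
            ENNReal.ofReal (2 * R) * ∫⁻ t in Icc (0:ℝ) 1, ∫⁻ y in B, F ((1 - t) • x + t • y) := by
          intro x
          have hq : Continuous fun p : Euc n × ℝ => F ((1 - p.2) • x + p.2 • p.1) :=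
            hFc.comp (by fun_prop)
          rw [lintegral_const_mul _ (Measurable.lintegral_prod_right'
            (f := fun p : Euc n × ℝ => F ((1 - p.2) • x + p.2 • p.1)) hq.measurable)]
          exact congrArg _ (lintegral_lintegral_swap
            (f := fun (y : Euc n) (t : ℝ) => F ((1 - t) • x + t • y)) hq.measurable.aemeasurable)
        have m3 : Measurable fun q : ℝ × Euc n => ∫⁻ y in B, F ((1 - q.1) • q.2 + q.1 • y) := by
          apply Measurable.lintegral_prod_right' (f := fun r : (ℝ × Euc n) × Euc n =>
            F ((1 - r.1.1) • r.1.2 + r.1.1 • r.2))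
          have hq : Continuous fun r : (ℝ × Euc n) × Euc n =>
            F ((1 - r.1.1) • r.1.2 + r.1.1 • r.2) := hFc.comp (by fun_prop)
          exact hq.measurable
        simp_rw [s1]
        rw [lintegral_const_mul _ (Measurable.lintegral_prod_left' m3)]
        exact congrArg _ (lintegral_lintegral_swap (f := fun (x : Euc n) (t : ℝ) =>
          ∫⁻ y in B, F ((1 - t) • x + t • y)) (m3.comp measurable_swap).aemeasurable)
    _ ≤ ENNReal.ofReal (2 * R) * ∫⁻ t in Icc (0:ℝ) 1, 2 ^ n * volume B * I := by
        gcongr 1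
        exact setLIntegral_mono' measurableSet_Icc key
    _ = _ := by rw [setLIntegral_const]; simp; ring

/-! ### Weak derivatives and mollification -/

/-- `v` is the weak partial derivative of `w` in the `i`-th coordinate direction. -/
def WeakPartial {n : ℕ} (w : Euc n → ℝ) (i : Fin n) (v : Euc n → ℝ) : Prop :=
  ∀ φ : Euc n → ℝ, ContDiff ℝ (⊤ : ℕ∞) φ → HasCompactSupport φ →
    ∫ x, w x * fderiv ℝ φ x (EuclideanSpace.single i 1) = - ∫ x, v x * φ x

/-- The derivative of a mollification is the mollification of the weak derivative. -/
theorem fderiv_mollify {n : ℕ} {φ : Euc n → ℝ} (hφ : ContDiff ℝ (⊤ : ℕ∞) φ)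
    (hφc : HasCompactSupport φ) {w d : Euc n → ℝ} {i : Fin n}
    (hw : LocallyIntegrable w volume) (h : WeakPartial w i d) (x : Euc n) :
    fderiv ℝ (φ ⋆[ContinuousLinearMap.lsmul ℝ ℝ, volume] w) x (EuclideanSpace.single i 1) =
      (φ ⋆[ContinuousLinearMap.lsmul ℝ ℝ, volume] d) x := by
  have hφ1 : ContDiff ℝ 1 φ := hφ.of_le (by simp)
  rw [(hφc.hasFDerivAt_convolution_left (ContinuousLinearMap.lsmul ℝ ℝ) hφ1 hw x).fderiv]
  have hex := (hφc.fderiv (𝕜 := ℝ)).convolutionExists_left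
    ((ContinuousLinearMap.lsmul ℝ ℝ : ℝ →L[ℝ] ℝ →L[ℝ] ℝ).precompL (Euc n)) 
    (hφ1.continuous_fderiv one_ne_zero) hw (μ := volume) x
  rw [convolution_eq_swap, convolution_eq_swap, ContinuousLinearMap.integral_apply]
  swap
  · have := hex.integrable_swap
    exact this
  have hη : ∀ t, HasFDerivAt (fun y => φ (x - y)) (-(fderiv ℝ φ (x - t))) t := by
    intro t
    have h1 := ((hφ1.differentiable one_ne_zero).differentiableAt (x := x - t)).hasFDerivAt.comp t
      ((hasFDerivAt_const x t).sub (hasFDerivAt_id t))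
    have e : (fderiv ℝ φ (x - t)).comp ((0 : Euc n →L[ℝ] Euc n) - ContinuousLinearMap.id ℝ (Euc n))
       = -(fderiv ℝ φ (x - t)) := by ext; simp
    rw [e] at h1
    exact h1
  have hk := h (fun y => φ (x - y)) (hφ.comp (contDiff_const.sub contDiff_id))
    (hφc.comp_homeomorph (Homeomorph.subLeft x))
  simp only [fun t => (hη t).fderiv] at hk
  simp only [neg_apply, mul_neg, integral_neg, neg_inj] at hk
  simp only [ContinuousLinearMap.precompL_apply, ContinuousLinearMap.lsmul_apply, smul_eq_mul]
  rw [show (∫ t, φ (x - t) * d t) = ∫ t, d t * φ (x - t) from by simp only [mul_comm], ← hk]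
  simp only [mul_comm]

theorem norm_clm_le_sum {n : ℕ} (L : Euc n →L[ℝ] ℝ) :
    ‖L‖ ≤ ∑ i, |L (EuclideanSpace.single i 1)| := by
  refine L.opNorm_le_bound (Finset.sum_nonneg fun _ _ => abs_nonneg _) fun x => ?_
  have hx : x = ∑ i, x i • EuclideanSpace.single i (1:ℝ) := by
    ext j
    simp [Finset.sum_apply, Pi.single_apply]
  conv_lhs => rw [hx]
  rw [map_sum, Finset.sum_mul]
  refine (norm_sum_le _ _).trans (Finset.sum_le_sum fun i _ => ?_)
  rw [map_smul, norm_smul, mul_comm, Real.norm_eq_abs (L _)]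
  gcongr
  exact PiLp.norm_apply_le x i

/-- Pratt's form of dominated convergence: the dominating functions vary with `k`, but their
integrals do not exceed that of their pointwise limit. -/
theorem limsup_lintegral_le {α : Type*} [MeasurableSpace α] {μ : Measure α}
    {c A : ℕ → α → ℝ≥0∞} {F A' : α → ℝ≥0∞} (hc : ∀ k, AEMeasurable (c k) μ)
    (hA : ∀ k, AEMeasurable (A k) μ) (hA' : AEMeasurable A' μ) (hle : ∀ k x, A k x ≤ c k x)
    (hcF : ∀ᵐ x ∂μ, Tendsto (fun k => c k x) atTop (𝓝 (F x)))
    (hAA : ∀ᵐ x ∂μ, Tendsto (fun k => A k x) atTop (𝓝 (A' x)))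
    (hF : ∫⁻ x, F x ∂μ ≠ ⊤) (hFx : ∀ x, F x ≠ ⊤) (hcI : ∀ k, ∫⁻ x, c k x ∂μ ≤ ∫⁻ x, F x ∂μ) :
    limsup (fun k => ∫⁻ x, A k x ∂μ) atTop ≤ ∫⁻ x, A' x ∂μ := by
  set I := ∫⁻ x, F x ∂μ
  have hAF : A' ≤ᵐ[μ] F := by
    filter_upwards [hcF, hAA] with x h1 h2
    exact le_of_tendsto_of_tendsto' h2 h1 fun k => hle k x
  have hA'I : ∫⁻ x, A' x ∂μ ≤ I := lintegral_mono_ae hAF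
  have hAkI : ∀ k, ∫⁻ x, A k x ∂μ ≤ I := fun k => (lintegral_mono (hle k)).trans (hcI k)
  have h1 : I - ∫⁻ x, A' x ∂μ ≤ I - limsup (fun k => ∫⁻ x, A k x ∂μ) atTop := by
    calc I - ∫⁻ x, A' x ∂μ = ∫⁻ x, F x - A' x ∂μ :=
          (lintegral_sub' hA' (ne_top_of_le_ne_top hF hA'I) hAF).symm
      _ = ∫⁻ x, liminf (fun k => c k x - A k x) atTop ∂μ := by
          refine lintegral_congr_ae ?_
          filter_upwards [hcF, hAA] with x h1 h2
          exact (ENNReal.Tendsto.sub h1 h2 (Or.inl (hFx x))).liminf_eq.symm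
      _ ≤ liminf (fun k => ∫⁻ x, c k x - A k x ∂μ) atTop :=
          lintegral_liminf_le' fun k => (hc k).sub (hA k)
      _ ≤ liminf (fun k => I - ∫⁻ x, A k x ∂μ) atTop := by
          refine liminf_le_liminf (Eventually.of_forall fun k => ?_)
          rw [lintegral_sub' (hA k) (ne_top_of_le_ne_top hF (hAkI k))
            (Eventually.of_forall (hle k))]
          exact tsub_le_tsub_right (hcI k) _
      _ = I - limsup (fun k => ∫⁻ x, A k x ∂μ) atTop := ENNReal.liminf_const_sub _ _ hF
  have h2 : limsup (fun k => ∫⁻ x, A k x ∂μ) atTop ≤ I :=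
    (limsup_le_limsup (Eventually.of_forall hAkI)).trans (by simp)
  exact (ENNReal.sub_le_sub_iff_left h2 hF).1 h1

/-! ### Poincaré inequality for truncations of weakly differentiable functions -/

theorem locallyIntegrable_abs {n : ℕ} {f : Euc n → ℝ} (hf : LocallyIntegrable f volume) :
    LocallyIntegrable (fun x => |f x|) volume := fun x => by
  obtain ⟨s, hs, h⟩ := hf x
  exact ⟨s, hs, h.norm⟩

theorem sum_abs_convolution_le {n : ℕ} {φ : Euc n → ℝ} (hφ : Continuous φ) (hφ0 : ∀ x, 0 ≤ φ x)
    (hφc : HasCompactSupport φ) (hφ1 : ∀ x, φ x ≠ 0 → ‖x‖ ≤ 1) {d : Fin n → Euc n → ℝ}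
    (hd : ∀ i, LocallyIntegrable (d i) volume) (z : Euc n) (R : ℝ) {x : Euc n}
    (hx : x ∈ closedBall z R) :
    ∑ i, |(φ ⋆[ContinuousLinearMap.lsmul ℝ ℝ, volume] d i) x| ≤
      (φ ⋆[ContinuousLinearMap.lsmul ℝ ℝ, volume]
        ((closedBall z (R + 1)).indicator fun y => ∑ i, |d i y|)) x := by
  have hint : ∀ i, Integrable (fun t => φ t * |d i (x - t)|) volume := by
    intro i
    have h := hφc.convolutionExists_left (ContinuousLinearMap.lsmul ℝ ℝ) hφ
      (locallyIntegrable_abs (hd i)) (μ := volume) x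
    exact h.integrable
  calc ∑ i, |(φ ⋆[ContinuousLinearMap.lsmul ℝ ℝ, volume] d i) x|
      ≤ ∑ i, ∫ t, φ t * |d i (x - t)| := by
        refine Finset.sum_le_sum fun i _ => ?_
        rw [convolution_lsmul]
        refine (abs_integral_le_integral_abs).trans (le_of_eq ?_)
        refine integral_congr_ae (Eventually.of_forall fun t => ?_)
        simp [abs_mul, abs_of_nonneg (hφ0 t)]
    _ = ∫ t, ∑ i, φ t * |d i (x - t)| := (integral_finsetSum _ fun i _ => hint i).symm
    _ = _ := by
        rw [convolution_lsmul]
        refine integral_congr_ae (Eventually.of_forall fun t => ?_)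
        by_cases ht : φ t = 0
        · simp [ht]
        · have h1 := hφ1 t ht
          have h2 : x - t ∈ closedBall z (R + 1) := by
            rw [Metric.mem_closedBall, dist_eq_norm] at hx ⊢
            calc ‖x - t - z‖ = ‖(x - z) - t‖ := by congr 1; abel
              _ ≤ ‖x - z‖ + ‖t‖ := norm_sub_le _ _
              _ ≤ R + 1 := by linarith
          simp [h2, Finset.mul_sum]

/-- The Poincaré inequality for `ψ ∘ w` passes to the limit along smooth `wk → w`. The gradients are
dominated by the functions `ck`, which are not dominated by one integrable function but converge
to `F` without loss of mass, so that `limsup_lintegral_le` applies. -/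
theorem weak_poincare_of_approx {n : ℕ} {w F : Euc n → ℝ} {wk ck : ℕ → Euc n → ℝ}
    (hw : AEStronglyMeasurable w volume) (hF : Integrable F volume) (hF0 : ∀ x, 0 ≤ F x)
    (hws : ∀ k, ContDiff ℝ 1 (wk k)) (hci : ∀ k, Integrable (ck k) volume)
    (hc0 : ∀ k x, 0 ≤ ck k x) (hcI : ∀ k, ∫ x, ck k x = ∫ x, F x)
    (hwt : ∀ᵐ x, Tendsto (fun k => wk k x) atTop (𝓝 (w x)))
    (hct : ∀ᵐ x, Tendsto (fun k => ck k x) atTop (𝓝 (F x)))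
    {ψ ψ' : ℝ → ℝ} (hψ : ∀ s, HasDerivAt ψ (ψ' s) s)
    (hψ' : Continuous ψ') (hψ1 : ∀ s, |ψ' s| ≤ 1) (z : Euc n) (R : ℝ)
    (hgrad : ∀ k, ∀ x ∈ closedBall z R, ‖fderiv ℝ (wk k) x‖ ≤ ck k x) :
    ∫⁻ x in closedBall z R, ∫⁻ y in closedBall z R, ‖ψ (w x) - ψ (w y)‖ₑ ≤
      ENNReal.ofReal (2 * R) * 2 ^ n * volume (closedBall z R) *
        ∫⁻ x in closedBall z R, ‖ψ' (w x)‖ₑ * ENNReal.ofReal (F x) := by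
  set B := closedBall z R
  have hB : MeasurableSet B := measurableSet_closedBall
  have hψc : ContDiff ℝ 1 ψ := by
    rw [contDiff_one_iff_deriv]
    have : deriv ψ = ψ' := funext fun s => (hψ s).deriv
    exact ⟨fun s => (hψ s).differentiableAt, this ▸ hψ'⟩
  set A : ℕ → Euc n → ℝ≥0∞ := fun k => B.indicator fun x =>
    ‖ψ' (wk k x)‖ₑ * ENNReal.ofReal (ck k x) with hAdef
  set A' : Euc n → ℝ≥0∞ := B.indicator fun x => ‖ψ' (w x)‖ₑ * ENNReal.ofReal (F x) with hA'def
  set K := ENNReal.ofReal (2 * R) * 2 ^ n * volume B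
  have hK : K ≠ ⊤ := by
    refine ENNReal.mul_ne_top (ENNReal.mul_ne_top ofReal_ne_top (by simp)) ?_
    exact measure_closedBall_lt_top.ne
  have hlim := limsup_lintegral_le (μ := volume) (c := fun k x => ENNReal.ofReal (ck k x))
    (A := A) (F := fun x => ENNReal.ofReal (F x)) (A' := A')
    (fun k => (hci k).aestronglyMeasurable.aemeasurable.ennreal_ofReal)
    (fun k => by
      refine AEMeasurable.indicator ?_ hB
      refine AEMeasurable.mul ?_ (hci k).aestronglyMeasurable.aemeasurable.ennreal_ofReal
      exact ((hψ'.comp (hws k).continuous).measurable.enorm).aemeasurable)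
    (by
      refine AEMeasurable.indicator ?_ hB
      refine AEMeasurable.mul ?_ hF.aestronglyMeasurable.aemeasurable.ennreal_ofReal
      exact (hψ'.measurable.comp_aemeasurable hw.aemeasurable).enorm)
    (by
      intro k x
      refine (indicator_le_self B _ x).trans ?_
      refine mul_le_of_le_one_left' ?_
      rw [← ofReal_norm, ← ENNReal.ofReal_one]
      exact ENNReal.ofReal_le_ofReal (hψ1 _))
    (by
      filter_upwards [hct] with x hx
      exact ENNReal.tendsto_ofReal hx)
    (by
      filter_upwards [hct, hwt] with x hx hx'
      by_cases hxB : x ∈ B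
      · simp only [hAdef, hA'def, indicator_of_mem hxB]
        refine ENNReal.Tendsto.mul ?_ (Or.inr ofReal_ne_top) (ENNReal.tendsto_ofReal hx)
          (Or.inr enorm_ne_top)
        exact ((hψ'.tendsto _).comp hx').enorm
      · simp only [hAdef, hA'def, indicator_of_notMem hxB]
        exact tendsto_const_nhds)
    (by rw [← ofReal_integral_eq_lintegral_ofReal hF (Eventually.of_forall hF0)]
        exact ofReal_ne_top)
    (fun x => ofReal_ne_top)
    (fun k => by
      rw [← ofReal_integral_eq_lintegral_ofReal hF (Eventually.of_forall hF0),
        ← ofReal_integral_eq_lintegral_ofReal (hci k) (Eventually.of_forall (hc0 k)), hcI])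
  have hstep : ∀ k, ∫⁻ x in B, ∫⁻ y in B, ‖ψ (wk k x) - ψ (wk k y)‖ₑ ≤ K * ∫⁻ x, A k x := by
    intro k
    refine (poincare_smooth (fun x => ψ (wk k x)) (hψc.comp (hws k)) z R).trans ?_
    rw [show ∫⁻ x, A k x = ∫⁻ x in B, ‖ψ' (wk k x)‖ₑ * ENNReal.ofReal (ck k x) from
      lintegral_indicator hB _]
    refine mul_le_mul_right (setLIntegral_mono_ae' hB (Eventually.of_forall fun x hx => ?_)) _
    have hd1 : HasFDerivAt (fun x => ψ (wk k x)) (ψ' (wk k x) • fderiv ℝ (wk k) x) x :=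
      (hψ _).comp_hasFDerivAt x ((hws k).differentiable one_ne_zero).differentiableAt.hasFDerivAt
    rw [hd1.fderiv, enorm_smul]
    refine mul_le_mul_right ?_ _
    rw [← ofReal_norm]
    exact ENNReal.ofReal_le_ofReal (hgrad k x hx)
  have hLm : ∀ k, Measurable (fun p : Euc n × Euc n => ‖ψ (wk k p.1) - ψ (wk k p.2)‖ₑ) := by
    intro k
    have hc : Continuous (fun x => ψ (wk k x)) := (hψc.comp (hws k)).continuous
    have hc' : Continuous (fun p : Euc n × Euc n => ψ (wk k p.1) - ψ (wk k p.2)) :=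
      (hc.comp continuous_fst).sub (hc.comp continuous_snd)
    exact hc'.measurable.enorm
  calc ∫⁻ x in B, ∫⁻ y in B, ‖ψ (w x) - ψ (w y)‖ₑ 
      ≤ ∫⁻ x in B, liminf (fun k => ∫⁻ y in B, ‖ψ (wk k x) - ψ (wk k y)‖ₑ) atTop := by
        refine lintegral_mono_ae ?_
        filter_upwards [ae_restrict_of_ae hwt] with x hx
        calc ∫⁻ y in B, ‖ψ (w x) - ψ (w y)‖ₑ 
            = ∫⁻ y in B, liminf (fun k => ‖ψ (wk k x) - ψ (wk k y)‖ₑ) atTop := by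
              refine lintegral_congr_ae ?_
              filter_upwards [ae_restrict_of_ae hwt] with y hy
              refine (Tendsto.liminf_eq ?_).symm
              exact (((hψc.continuous.tendsto _).comp hx).sub
                ((hψc.continuous.tendsto _).comp hy)).enorm
          _ ≤ _ := lintegral_liminf_le (f := fun k y => ‖ψ (wk k x) - ψ (wk k y)‖ₑ) 
              fun k => (hLm k).comp measurable_prodMk_left
    _ ≤ liminf (fun k => ∫⁻ x in B, ∫⁻ y in B, ‖ψ (wk k x) - ψ (wk k y)‖ₑ) atTop :=
        lintegral_liminf_le (f := fun k x => ∫⁻ y in B, ‖ψ (wk k x) - ψ (wk k y)‖ₑ) 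
          fun k => Measurable.lintegral_prod_right'
            (f := fun p : Euc n × Euc n => ‖ψ (wk k p.1) - ψ (wk k p.2)‖ₑ) (hLm k)
    _ ≤ limsup (fun k => K * ∫⁻ x, A k x) atTop :=
        le_trans (liminf_le_limsup) (limsup_le_limsup (Eventually.of_forall hstep))
    _ ≤ K * ∫⁻ x, A' x := by
        have hAT : ∫⁻ x, A' x ≠ ⊤ := by
          refine ne_top_of_le_ne_top (b := ∫⁻ x, ENNReal.ofReal (F x)) ?_ (lintegral_mono fun x => ?_)
          · rw [← ofReal_integral_eq_lintegral_ofReal hF (Eventually.of_forall hF0)]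
            exact ofReal_ne_top
          · refine (indicator_le_self B _ x).trans ?_
            refine mul_le_of_le_one_left' ?_
            rw [← ofReal_norm, ← ENNReal.ofReal_one]
            exact ENNReal.ofReal_le_ofReal (hψ1 _)
        have h3 := ENNReal.limsup_mul_le' (f := atTop) (u := fun _ : ℕ => K)
          (v := fun k => ∫⁻ x, A k x) (Or.inr (ne_top_of_le_ne_top hAT hlim)) (Or.inl (by simpa))
        refine h3.trans ?_
        rw [limsup_const]
        gcongr
    _ = _ := by
        rw [show ∫⁻ x, A' x = ∫⁻ x in B, ‖ψ' (w x)‖ₑ * ENNReal.ofReal (F x) from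
          lintegral_indicator hB _]

/-- The Poincaré inequality on a ball for the truncation `ψ ∘ w` of a weakly differentiable
function. The factor `ψ' (w x)` on the right localises the gradient to the range of values of `w`
where the truncation is not constant. -/
theorem weak_poincare {n : ℕ} {w : Euc n → ℝ} {d : Fin n → Euc n → ℝ}
    (hw : LocallyIntegrable w volume) (hd : ∀ i, LocallyIntegrable (d i) volume)
    (h : ∀ i, WeakPartial w i (d i)) {ψ ψ' : ℝ → ℝ} (hψ : ∀ s, HasDerivAt ψ (ψ' s) s)
    (hψ' : Continuous ψ') (hψ1 : ∀ s, |ψ' s| ≤ 1) (z : Euc n) (R : ℝ) :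
    ∫⁻ x in closedBall z R, ∫⁻ y in closedBall z R, ‖ψ (w x) - ψ (w y)‖ₑ ≤
      ENNReal.ofReal (2 * R) * 2 ^ n * volume (closedBall z R) *
        ∫⁻ x in closedBall z R, ‖ψ' (w x)‖ₑ * ∑ i, ‖d i x‖ₑ := by
  set B := closedBall z R
  have hB : MeasurableSet B := measurableSet_closedBall
  let b : ℕ → ContDiffBump (0 : Euc n) := fun k =>
    ⟨1 / (2 * ((k:ℝ) + 1)), 1 / ((k:ℝ) + 1), by positivity, by
      apply one_div_lt_one_div_of_lt <;> linarith [Nat.cast_nonneg (α := ℝ) k]⟩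
  have hrOut : ∀ k, (b k).rOut = 1 / ((k:ℝ) + 1) := fun k => rfl
  have hrIn : ∀ k, (b k).rIn = 1 / (2 * ((k:ℝ) + 1)) := fun k => rfl
  have hb0 : Tendsto (fun k => (b k).rOut) atTop (𝓝 0) := by
    simp only [hrOut]; exact tendsto_one_div_add_atTop_nhds_zero_nat
  have hb2 : ∀ᶠ k in atTop, (b k).rOut ≤ 2 * (b k).rIn := Eventually.of_forall fun k => by
    rw [hrOut, hrIn]; apply le_of_eq; field_simp
  set F : Euc n → ℝ := (closedBall z (R + 1)).indicator fun y => ∑ i, |d i y| with hFdef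
  have hG : LocallyIntegrable (fun y => ∑ i, |d i y|) volume := by
    have := locallyIntegrable_finsetSum Finset.univ (fun i (_ : i ∈ Finset.univ) => locallyIntegrable_abs (hd i))
    exact this
  have hF : Integrable F volume :=
    (integrable_indicator_iff measurableSet_closedBall).2
      (hG.integrableOn_isCompact (isCompact_closedBall _ _))
  have hF0 : ∀ x, 0 ≤ F x := fun x =>
    indicator_nonneg (fun _ _ => Finset.sum_nonneg fun _ _ => abs_nonneg _) x
  set φ : ℕ → Euc n → ℝ := fun k => (b k).normed volume
  set wk : ℕ → Euc n → ℝ := fun k => φ k ⋆[ContinuousLinearMap.lsmul ℝ ℝ, volume] w with hwk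
  set ck : ℕ → Euc n → ℝ := fun k => φ k ⋆[ContinuousLinearMap.lsmul ℝ ℝ, volume] F with hck
  have hφs : ∀ k, ContDiff ℝ (⊤ : ℕ∞) (φ k) := fun k => (b k).contDiff_normed
  have hφc : ∀ k, HasCompactSupport (φ k) := fun k => (b k).hasCompactSupport_normed
  have hφ0 : ∀ k x, 0 ≤ φ k x := fun k x => (b k).nonneg_normed x
  have hφ1 : ∀ k x, φ k x ≠ 0 → ‖x‖ ≤ 1 := by
    intro k x hx
    have : x ∈ Function.support ((b k).normed volume) := hx
    rw [(b k).support_normed_eq] at this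
    have h1 := Metric.mem_ball.1 this
    rw [dist_zero_right, hrOut] at h1
    refine h1.le.trans ?_
    rw [div_le_one (by positivity)]
    linarith [Nat.cast_nonneg (α := ℝ) k]
  have hwt : ∀ᵐ x, Tendsto (fun k => wk k x) atTop (𝓝 (w x)) :=
    ContDiffBump.ae_convolution_tendsto_right_of_locallyIntegrable hb0 hb2 hw
  have hct : ∀ᵐ x, Tendsto (fun k => ck k x) atTop (𝓝 (F x)) :=
    ContDiffBump.ae_convolution_tendsto_right_of_locallyIntegrable hb0 hb2 hF.locallyIntegrable
  have hws : ∀ k, ContDiff ℝ 1 (wk k) := fun k =>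
    (hφc k).contDiff_convolution_left (n := 1) (ContinuousLinearMap.lsmul ℝ ℝ)
      ((hφs k).of_le (by simp)) hw
  have hφi : ∀ k, Integrable (φ k) volume := fun k => (b k).integrable_normed
  have hci : ∀ k, Integrable (ck k) volume := fun k =>
    (hφi k).integrable_convolution (ContinuousLinearMap.lsmul ℝ ℝ) hF
  have hc0 : ∀ k x, 0 ≤ ck k x := fun k x => by
    simp only [hck, convolution_lsmul, smul_eq_mul]
    exact integral_nonneg fun t => mul_nonneg (hφ0 k t) (hF0 _)
  have hcI : ∀ k, ∫ x, ck k x = ∫ x, F x := fun k => by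
    simp only [hck]
    rw [integral_convolution (ContinuousLinearMap.lsmul ℝ ℝ) (hφi k) hF]
    simp only [φ, (b k).integral_normed]
    simp
  have hgrad : ∀ k, ∀ x ∈ closedBall z R, ‖fderiv ℝ (wk k) x‖ ≤ ck k x := by
    intro k x hx
    refine (norm_clm_le_sum _).trans ?_
    refine le_trans (le_of_eq ?_) (sum_abs_convolution_le (hφs k).continuous (hφ0 k) (hφc k)
      (hφ1 k) hd z R hx)
    exact Finset.sum_congr rfl fun i _ => by
      rw [fderiv_mollify (hφs k) (hφc k) hw (h i) x]
  refine (weak_poincare_of_approx hw.aestronglyMeasurable hF hF0 hws hci hc0 hcI hwt hct hψ hψ'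
    hψ1 z R hgrad).trans (le_of_eq ?_)
  congr 1
  refine setLIntegral_congr_fun hB fun x hx => ?_
  have hx' : x ∈ closedBall z (R + 1) := Metric.closedBall_subset_closedBall (by linarith) hx
  simp only [hFdef, indicator_of_mem hx']
  rw [ENNReal.ofReal_sum_of_nonneg fun _ _ => abs_nonneg _]
  congr 1
  refine Finset.sum_congr rfl fun i _ => ?_
  rw [← ofReal_norm, Real.norm_eq_abs]

/-! ### Dyadic Riesz potential and oscillation -/

/-- The `j`-th term of the dyadic Riesz potential of order one. -/
def rieszTerm {n : ℕ} (A : Euc n → ℝ≥0∞) (x : Euc n) (j : ℤ) : ℝ≥0∞ :=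
  ENNReal.ofReal ((2:ℝ) ^ (j * (1 - (n:ℤ)))) * ∫⁻ y in closedBall x ((2:ℝ) ^ j), A y

/-- Dyadic Riesz potential of order one, comparable to `∫ A y |x - y| ^ (1 - n) dy`. -/
def riesz {n : ℕ} (A : Euc n → ℝ≥0∞) (x : Euc n) : ℝ≥0∞ := ∑' j : ℤ, rieszTerm A x j

/-- Constant in the comparison of averages over concentric dyadic balls. -/
def avgConst (n : ℕ) : ℝ≥0∞ := (volume (Metric.ball (0 : Euc n) 1))⁻¹ * (2 * 4 ^ n)

theorem avgConst_ne_top (n : ℕ) : avgConst n ≠ ⊤ := by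
  unfold avgConst
  refine ENNReal.mul_ne_top (ENNReal.inv_ne_top.2 (Metric.measure_ball_pos _ _ one_pos).ne') ?_
  exact ENNReal.mul_ne_top (by simp) (by simp)

theorem enorm_average_sub_le {α : Type*} [MeasurableSpace α] {μ : Measure α} {s : Set α}
    {v : α → ℝ} (hv : IntegrableOn v s μ) (h0 : μ s ≠ 0) (h1 : μ s ≠ ⊤) (a : ℝ) :
    ‖(⨍ y in s, v y ∂μ) - a‖ₑ ≤ (μ s)⁻¹ * ∫⁻ y in s, ‖v y - a‖ₑ ∂μ := by
  have hr : (μ.real s) ≠ 0 := by simp [Measure.real, ENNReal.toReal_eq_zero_iff, h0, h1]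
  have : (⨍ y in s, v y ∂μ) - a = (μ.real s)⁻¹ * ∫ y in s, (v y - a) ∂μ := by
    rw [setAverage_eq, integral_sub hv (integrableOn_const h1), setIntegral_const, smul_eq_mul,
      smul_eq_mul]
    field_simp
  rw [this, enorm_mul]
  refine mul_le_mul' (le_of_eq ?_) (enorm_integral_le_lintegral_enorm _)
  rw [enorm_inv hr, ← ofReal_norm, Real.norm_of_nonneg measureReal_nonneg, Measure.real,
    ENNReal.ofReal_toReal h1]

theorem volume_closedBall_two_zpow {n : ℕ} (x : Euc n) (j : ℤ) :
    volume (closedBall x ((2:ℝ) ^ j)) =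
      ENNReal.ofReal ((2:ℝ) ^ (j * n)) * volume (Metric.ball (0 : Euc n) 1) := by
  rw [Measure.addHaar_closedBall _ _ (by positivity), finrank_euclideanSpace, Fintype.card_fin,
    zpow_mul, zpow_natCast]

/-- One step of the chaining argument: the averages over `B(y, 2^j)` and over `B(x, 2^{j+1})`, a ball
containing it, differ by at most one term of the Riesz potential at `x`. -/
theorem enorm_average_sub_average_le {n : ℕ} {v : Euc n → ℝ} {A : Euc n → ℝ≥0∞}
    (hv : LocallyIntegrable v volume)
    (hP : ∀ (z : Euc n) (R : ℝ), ∫⁻ x in closedBall z R, ∫⁻ y in closedBall z R, ‖v x - v y‖ₑ ≤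
      ENNReal.ofReal (2 * R) * 2 ^ n * volume (closedBall z R) * ∫⁻ x in closedBall z R, A x)
    (x y : Euc n) (j : ℤ) (hxy : dist y x ≤ (2:ℝ) ^ j) :
    ‖(⨍ t in closedBall y ((2:ℝ) ^ j), v t) - ⨍ t in closedBall x ((2:ℝ) ^ (j + 1)), v t‖ₑ ≤
      avgConst n * rieszTerm A x (j + 1) := by
  set B := closedBall y ((2:ℝ) ^ j)
  set B' := closedBall x ((2:ℝ) ^ (j + 1))
  have hsub : B ⊆ B' := Metric.closedBall_subset_closedBall' (by
    rw [zpow_add_one₀ two_ne_zero]; linarith)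
  have hvi : ∀ (z : Euc n) (R : ℝ), IntegrableOn v (closedBall z R) volume := fun z R =>
    hv.integrableOn_isCompact (isCompact_closedBall z R)
  have hpos : ∀ (z : Euc n) (k : ℤ), volume (closedBall z ((2:ℝ) ^ k)) ≠ 0 := fun z k =>
    (Metric.measure_closedBall_pos _ _ (by positivity)).ne'
  have hfin : ∀ (z : Euc n) (R : ℝ), volume (closedBall z R) ≠ ⊤ := fun z R =>
    measure_closedBall_lt_top.ne
  have hω0 : volume (Metric.ball (0 : Euc n) 1) ≠ 0 := (Metric.measure_ball_pos _ _ one_pos).ne'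
  have hωt : volume (Metric.ball (0 : Euc n) 1) ≠ ⊤ := measure_ball_lt_top.ne
  calc _ ≤ (volume B)⁻¹ * ∫⁻ t in B, ‖v t - ⨍ s in B', v s‖ₑ :=
        enorm_average_sub_le (hvi _ _) (hpos _ _) (hfin _ _) _
    _ ≤ (volume B)⁻¹ * ∫⁻ t in B', (volume B')⁻¹ * ∫⁻ s in B', ‖v t - v s‖ₑ := by
        gcongr with t
        rw [← neg_sub, enorm_neg]
        refine (enorm_average_sub_le (hvi _ _) (hpos _ _) (hfin _ _) _).trans (le_of_eq ?_)
        congr 1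
        refine lintegral_congr fun s => ?_
        rw [← neg_sub, enorm_neg]
    _ = (volume B)⁻¹ * ((volume B')⁻¹ * ∫⁻ t in B', ∫⁻ s in B', ‖v t - v s‖ₑ) := by
        rw [lintegral_const_mul' _ _ (ENNReal.inv_ne_top.2 (hpos _ _))]
    _ ≤ (volume B)⁻¹ * ((volume B')⁻¹ * (ENNReal.ofReal (2 * 2 ^ (j + 1)) * 2 ^ n * volume B' *
          ∫⁻ t in B', A t)) := by
        gcongr
        exact hP _ _
    _ = (volume B)⁻¹ * (ENNReal.ofReal (2 * 2 ^ (j + 1)) * 2 ^ n) * (∫⁻ t in B', A t) *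
          (volume B' * (volume B')⁻¹) := by ring
    _ = (volume B)⁻¹ * (ENNReal.ofReal (2 * 2 ^ (j + 1)) * 2 ^ n) * ∫⁻ t in B', A t := by
        rw [ENNReal.mul_inv_cancel (hpos _ _) (hfin _ _), mul_one]
    _ = avgConst n * rieszTerm A x (j + 1) := by
        rw [avgConst, rieszTerm, ← mul_assoc (_ * (2 * 4 ^ n))]
        congr 1
        rw [volume_closedBall_two_zpow, ENNReal.mul_inv (Or.inr hωt) (Or.inr hω0),
          mul_comm (ENNReal.ofReal _)⁻¹, mul_assoc, mul_assoc]
        congr 1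
        rw [← ENNReal.ofReal_inv_of_pos (by positivity)]
        have e2 : (2:ℝ≥0∞) = ENNReal.ofReal 2 := by simp
        have e4 : (4:ℝ≥0∞) = ENNReal.ofReal 4 := by simp
        rw [e2, e4, ← ENNReal.ofReal_pow (by norm_num), ← ENNReal.ofReal_pow (by norm_num),
          ← ENNReal.ofReal_mul (by positivity), ← ENNReal.ofReal_mul (by positivity),
          ← ENNReal.ofReal_mul (by positivity), ← ENNReal.ofReal_mul (by positivity)]
        congr 1
        have h1 : (2:ℝ) ^ ((j + 1) * (1 - (n:ℤ))) = 2 ^ (j + 1) * (2 ^ (j * n))⁻¹ * (2 ^ n)⁻¹ := by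
          rw [← zpow_natCast (2:ℝ) n, ← zpow_neg, ← zpow_neg, ← zpow_add₀ two_ne_zero,
            ← zpow_add₀ two_ne_zero]
          congr 1; ring
        have h4 : (4:ℝ) ^ n = 2 ^ n * 2 ^ n := by rw [← mul_pow]; norm_num
        rw [h1, h4]
        field_simp

/-- Pointwise Riesz potential bound for oscillations, on a set of full measure. -/
theorem enorm_sub_le_riesz {n : ℕ} {v : Euc n → ℝ} {A : Euc n → ℝ≥0∞}
    (hv : LocallyIntegrable v volume)
    (hP : ∀ (z : Euc n) (R : ℝ), ∫⁻ x in closedBall z R, ∫⁻ y in closedBall z R, ‖v x - v y‖ₑ ≤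
      ENNReal.ofReal (2 * R) * 2 ^ n * volume (closedBall z R) * ∫⁻ x in closedBall z R, A x) :
    ∃ S : Set (Euc n), (∀ᵐ x, x ∈ S) ∧ ∀ x ∈ S, ∀ y ∈ S,
      ‖v x - v y‖ₑ ≤ 2 * avgConst n * (riesz A x + riesz A y) := by
  refine ⟨{x | Tendsto (fun a => ⨍ y in a, v y) ((Besicovitch.vitaliFamily volume).filterAt x)
    (𝓝 (v x))}, (Besicovitch.vitaliFamily volume).ae_tendsto_average hv, ?_⟩
  have key : ∀ x, Tendsto (fun a => ⨍ y in a, v y)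
      ((Besicovitch.vitaliFamily volume).filterAt x) (𝓝 (v x)) → ∀ J : ℤ,
      edist (⨍ t in closedBall x ((2:ℝ) ^ J), v t) (v x) ≤ avgConst n * riesz A x := by
    intro x hx J
    have hlim : Tendsto (fun i : ℕ => ⨍ t in closedBall x ((2:ℝ) ^ (J - i)), v t) atTop
        (𝓝 (v x)) := by
      refine (hx.comp (Besicovitch.tendsto_filterAt volume x)).comp ?_
      refine tendsto_nhdsWithin_iff.2 ⟨?_, Eventually.of_forall fun i => by
        simp only [mem_Ioi]; positivity⟩
      have : (fun i : ℕ => (2:ℝ) ^ (J - i)) = fun i : ℕ => (2:ℝ) ^ J * (1 / 2) ^ i := by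
        funext i
        rw [zpow_sub₀ two_ne_zero, zpow_natCast, one_div, inv_pow]; rfl
      rw [this]
      simpa using (tendsto_pow_atTop_nhds_zero_of_lt_one (r := (1/2:ℝ)) (by norm_num)
        (by norm_num)).const_mul ((2:ℝ) ^ J)
    have h := edist_le_tsum_of_edist_le_of_tendsto₀
      (fun i : ℕ => avgConst n * rieszTerm A x (J - i)) (fun i => ?_) hlim
    · simp only [Nat.cast_zero, sub_zero] at h
      refine h.trans ?_
      rw [ENNReal.tsum_mul_left]
      refine mul_le_mul_right ?_ _
      exact ENNReal.tsum_comp_le_tsum_of_injective (f := fun i : ℕ => J - (i:ℤ))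
        (fun a b hab => by simpa using hab) (rieszTerm A x)
    · rw [edist_comm, edist_eq_enorm_sub]
      have h2 := enorm_average_sub_average_le hv hP x x (J - (i.succ : ℤ))
        (by simp; positivity)
      rwa [show J - (i.succ : ℤ) + 1 = J - i by push_cast; ring] at h2
  intro x hx y hy
  obtain ⟨N, hN⟩ := pow_unbounded_of_one_lt (dist y x) (one_lt_two (α := ℝ))
  have h1 := key x hx ((N:ℤ) + 1)
  have h2 := key y hy N
  have h3 := enorm_average_sub_average_le hv hP x y N (by rw [zpow_natCast]; exact hN.le)
  have h4 : rieszTerm A x ((N:ℤ) + 1) ≤ riesz A x := ENNReal.le_tsum _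
  rw [← edist_eq_enorm_sub] at h3 ⊢
  calc edist (v x) (v y) ≤ _ := edist_triangle4 (v x)
        (⨍ t in closedBall x ((2:ℝ) ^ ((N:ℤ) + 1)), v t)
        (⨍ t in closedBall y ((2:ℝ) ^ (N:ℤ)), v t) (v y)
    _ ≤ avgConst n * riesz A x + avgConst n * riesz A x + avgConst n * riesz A y := by
        gcongr
        · rwa [edist_comm]
        · rw [edist_comm]; exact h3.trans (by gcongr)
    _ ≤ avgConst n * riesz A x + avgConst n * riesz A x + 
        (avgConst n * riesz A y + avgConst n * riesz A y) := by gcongr; exact le_self_add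
    _ = _ := by ring

/-! ### Weak-type estimate for the Riesz potential -/

/-- Constant in the bound of the Riesz potential of an indicator function. -/
def rieszConst (n : ℕ) : ℝ≥0∞ := 2 * volume (Metric.ball (0 : Euc n) 1) + 2

theorem rieszConst_ne_top (n : ℕ) : rieszConst n ≠ ⊤ := by
  unfold rieszConst
  have : volume (Metric.ball (0 : Euc n) 1) ≠ ⊤ := measure_ball_lt_top.ne
  finiteness

theorem tsum_int_split (f : ℤ → ℝ≥0∞) (j0 : ℤ) :
    ∑' j, f j = ∑' i : ℕ, f (j0 - i) + ∑' i : ℕ, f (j0 + 1 + i) := by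
  rw [← (Equiv.addLeft (j0 + 1)).tsum_eq f, tsum_of_nat_of_neg_add_one ENNReal.summable
    ENNReal.summable, add_comm]
  congr 1
  refine tsum_congr fun i => ?_
  simp only [Equiv.coe_addLeft]
  congr 1; ring

theorem tsum_two_inv : ∑' i : ℕ, (2⁻¹ : ℝ≥0∞) ^ i = 2 := by
  rw [ENNReal.tsum_geometric, ENNReal.one_sub_inv_two, inv_inv]

/-- The terms with `2^{jn} ≲ X` form a growing geometric series and the others a decaying one, so that
both parts are comparable to `X^{1/n}`. -/
theorem tsum_kernel_le {n : ℕ} (hn : 2 ≤ n) (ω X : ℝ≥0∞) (hX0 : X ≠ 0) (hX : X ≠ ⊤) :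
    ∑' j : ℤ, ENNReal.ofReal ((2:ℝ) ^ (j * (1 - (n:ℤ)))) *
      min X (ENNReal.ofReal ((2:ℝ) ^ (j * n)) * ω) ≤ (2 * ω + 2) * X ^ (1 / (n:ℝ)) := by
  have hn0 : (n:ℝ) ≠ 0 := by positivity
  have hxp : 0 < X.toReal := ENNReal.toReal_pos hX0 hX
  set r : ℝ := X.toReal ^ (1 / (n:ℝ)) with hr
  have hr0 : 0 < r := by positivity
  have hXr : X = ENNReal.ofReal (r ^ n) := by
    rw [hr, ← Real.rpow_natCast, ← Real.rpow_mul hxp.le, one_div_mul_cancel hn0, Real.rpow_one,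
      ENNReal.ofReal_toReal hX]
  have hXr' : X ^ (1 / (n:ℝ)) = ENNReal.ofReal r := by
    rw [hr, ← ENNReal.ofReal_rpow_of_pos hxp, ENNReal.ofReal_toReal hX]
  obtain ⟨j0, hj1, hj2⟩ := exists_mem_Ico_zpow hr0 (one_lt_two (α := ℝ))
  rw [tsum_int_split _ j0, hXr']
  have e2 : (2⁻¹ : ℝ≥0∞) = ENNReal.ofReal (1 / 2) := by
    rw [one_div, ENNReal.ofReal_inv_of_pos two_pos]; simp
  have h1 : ∀ i : ℕ, ENNReal.ofReal ((2:ℝ) ^ ((j0 - i) * (1 - (n:ℤ)))) *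
      min X (ENNReal.ofReal ((2:ℝ) ^ ((j0 - i) * n)) * ω) ≤ ENNReal.ofReal r * ω * 2⁻¹ ^ i := by
    intro i
    calc _ ≤ ENNReal.ofReal ((2:ℝ) ^ ((j0 - i) * (1 - (n:ℤ)))) *
          (ENNReal.ofReal ((2:ℝ) ^ ((j0 - i) * n)) * ω) := by gcongr; exact min_le_right _ _
      _ = ENNReal.ofReal ((2:ℝ) ^ (j0 - i)) * ω := by
          rw [← mul_assoc, ← ENNReal.ofReal_mul (by positivity), ← zpow_add₀ two_ne_zero]
          congr 3; ring
      _ ≤ ENNReal.ofReal (r * (1 / 2) ^ i) * ω := by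
          gcongr
          rw [zpow_sub₀ two_ne_zero, zpow_natCast, div_eq_mul_inv, one_div, inv_pow]
          gcongr
      _ = _ := by
          rw [ENNReal.ofReal_mul hr0.le, e2, ENNReal.ofReal_pow (by norm_num)]; ring
  have h2 : ∀ i : ℕ, ENNReal.ofReal ((2:ℝ) ^ ((j0 + 1 + i) * (1 - (n:ℤ)))) *
      min X (ENNReal.ofReal ((2:ℝ) ^ ((j0 + 1 + i) * n)) * ω) ≤ ENNReal.ofReal r * 2⁻¹ ^ i := by
    intro i
    calc _ ≤ ENNReal.ofReal ((2:ℝ) ^ ((j0 + 1 + i) * (1 - (n:ℤ)))) * X := by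
          gcongr; exact min_le_left _ _
      _ ≤ ENNReal.ofReal (r ^ (1 - (n:ℤ)) * (1 / 2) ^ i) * ENNReal.ofReal (r ^ n) := by
          rw [hXr]
          gcongr
          rw [add_mul, zpow_add₀ two_ne_zero, zpow_mul]
          gcongr
          · have e : (1 - (n:ℤ)) = -((n:ℤ) - 1) := by ring
            rw [e, zpow_neg, zpow_neg]
            exact inv_anti₀ (by positivity) (zpow_le_zpow_left₀ (by omega) hr0.le hj2.le)
          · rw [one_div, inv_pow, ← zpow_natCast, ← zpow_neg]
            refine zpow_le_zpow_right₀ one_le_two ?_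
            nlinarith
      _ = ENNReal.ofReal (r * (1 / 2) ^ i) := by
          rw [← ENNReal.ofReal_mul (by positivity)]
          congr 1
          rw [zpow_sub₀ hr0.ne', zpow_one, zpow_natCast]
          field_simp
      _ = _ := by
          rw [ENNReal.ofReal_mul hr0.le, e2, ENNReal.ofReal_pow (by norm_num)]
  refine (add_le_add (ENNReal.tsum_le_tsum h1) (ENNReal.tsum_le_tsum h2)).trans (le_of_eq ?_)
  rw [ENNReal.tsum_mul_left, ENNReal.tsum_mul_left, tsum_two_inv]
  ring

theorem measurable_rieszTerm {n : ℕ} {A : Euc n → ℝ≥0∞} (hA : Measurable A) (j : ℤ) :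
    Measurable fun x => rieszTerm A x j := by
  unfold rieszTerm
  refine Measurable.const_mul ?_ _
  have h : ∀ x : Euc n, ∫⁻ y in closedBall x ((2:ℝ) ^ j), A y =
      ∫⁻ y, {p : Euc n × Euc n | dist p.2 p.1 ≤ (2:ℝ) ^ j}.indicator (fun p => A p.2) (x, y) := by
    intro x
    rw [← lintegral_indicator measurableSet_closedBall]
    rfl
  simp only [h]
  have hs : MeasurableSet {p : Euc n × Euc n | dist p.2 p.1 ≤ (2:ℝ) ^ j} :=
    (isClosed_le (by fun_prop) continuous_const).measurableSet
  have hm : Measurable ({p : Euc n × Euc n | dist p.2 p.1 ≤ (2:ℝ) ^ j}.indicator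
    (fun p => A p.2)) := (hA.comp measurable_snd).indicator hs
  exact hm.lintegral_prod_right'

theorem measurable_riesz {n : ℕ} {A : Euc n → ℝ≥0∞} (hA : Measurable A) :
    Measurable (riesz A) :=
  Measurable.tsum fun j => measurable_rieszTerm hA j

theorem riesz_congr {n : ℕ} {A A' : Euc n → ℝ≥0∞} (h : A =ᵐ[volume] A') : riesz A = riesz A' := by
  funext x
  unfold riesz rieszTerm
  congr 1; funext j; congr 1
  exact lintegral_congr_ae (ae_restrict_of_ae h)

/-- The Riesz potential is symmetric. -/
theorem lintegral_mul_riesz {n : ℕ} {A H : Euc n → ℝ≥0∞} (hA : Measurable A) (hH : Measurable H) :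
    ∫⁻ x, H x * riesz A x = ∫⁻ x, A x * riesz H x := by
  have key : ∀ {A H : Euc n → ℝ≥0∞}, Measurable A → Measurable H →
      ∫⁻ x, H x * riesz A x = ∑' j : ℤ, ENNReal.ofReal ((2:ℝ) ^ (j * (1 - (n:ℤ)))) *
        ∫⁻ x, ∫⁻ y, {p : Euc n × Euc n | dist p.2 p.1 ≤ (2:ℝ) ^ j}.indicator
          (fun p => H p.1 * A p.2) (x, y) := by
    intro A H hA hH
    simp only [riesz, ← ENNReal.tsum_mul_left]
    rw [lintegral_tsum fun j => Measurable.aemeasurable (f := fun x => H x * rieszTerm A x j)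
      (hH.mul (measurable_rieszTerm hA j))]
    congr 1; funext j
    rw [← lintegral_const_mul' _ _ ofReal_ne_top]
    refine lintegral_congr fun x => ?_
    rw [rieszTerm, mul_left_comm]
    congr 1
    rw [← lintegral_indicator measurableSet_closedBall,
      ← lintegral_const_mul _ (hA.indicator measurableSet_closedBall)]
    refine lintegral_congr fun y => ?_
    by_cases hy : dist y x ≤ (2:ℝ) ^ j <;> simp [indicator, hy]
  rw [key hA hH, key hH hA]
  congr 1; funext j; congr 1
  have hs : MeasurableSet {p : Euc n × Euc n | dist p.2 p.1 ≤ (2:ℝ) ^ j} :=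
    (isClosed_le (by fun_prop) continuous_const).measurableSet
  have hm : Measurable ({p : Euc n × Euc n | dist p.2 p.1 ≤ (2:ℝ) ^ j}.indicator
    (fun p => H p.1 * A p.2)) :=
      ((hH.comp measurable_fst).mul (hA.comp measurable_snd)).indicator hs
  rw [lintegral_lintegral_swap (f := fun x y => {p : Euc n × Euc n | dist p.2 p.1 ≤
    (2:ℝ) ^ j}.indicator (fun p => H p.1 * A p.2) (x, y)) hm.aemeasurable]
  refine lintegral_congr fun x => lintegral_congr fun y => ?_
  simp only [indicator, mem_ofPred_eq, dist_comm, mul_comm]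

/-- The Riesz potential of an indicator function is bounded by `|F|^{1/n}`. -/
theorem riesz_indicator_le {n : ℕ} (hn : 2 ≤ n) {F : Set (Euc n)} (hF : MeasurableSet F)
    (x : Euc n) : riesz (F.indicator 1) x ≤ rieszConst n * volume F ^ (1 / (n:ℝ)) := by
  have hn0 : (0:ℝ) < 1 / (n:ℝ) := by positivity
  rcases eq_or_ne (volume F) 0 with h0 | h0
  · have : F.indicator (1 : Euc n → ℝ≥0∞) =ᵐ[volume] fun _ => 0 := by
      exact (indicator_ae_eq_zero (f := (1 : Euc n → ℝ≥0∞))).2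
        (measure_mono_null (fun x hx => hx.1) h0)
    rw [riesz_congr this]
    simp [riesz, rieszTerm]
  rcases eq_or_ne (volume F) ⊤ with ht | ht
  · rw [ht, ENNReal.top_rpow_of_pos hn0, ENNReal.mul_top]
    · exact le_top
    · simp [rieszConst]
  refine le_trans (ENNReal.tsum_le_tsum fun j => ?_) (tsum_kernel_le hn _ _ h0 ht)
  unfold rieszTerm
  gcongr
  rw [lintegral_indicator_one hF, Measure.restrict_apply hF]
  refine le_min (measure_mono inter_subset_left) ?_
  rw [← volume_closedBall_two_zpow x j]
  exact measure_mono inter_subset_right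

/-- Weak-type estimate for the Riesz potential. -/
theorem riesz_weak_type {n : ℕ} (hn : 2 ≤ n) {A : Euc n → ℝ≥0∞} (hA : AEMeasurable A volume)
    {t : ℝ≥0∞} (ht : t ≠ ⊤) {F : Set (Euc n)} (hFt : ∀ᵐ x, x ∈ F → t ≤ riesz A x) :
    t * volume F ^ (1 - 1 / (n:ℝ)) ≤ rieszConst n * ∫⁻ x, A x := by
  have hn1 : 0 < 1 - 1 / (n:ℝ) := by
    have : (2:ℝ) ≤ n := by exact_mod_cast hn
    rw [sub_pos, div_lt_one (by linarith)]; linarith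
  set A' := hA.mk A
  have hA' : Measurable A' := hA.measurable_mk
  have e1 : riesz A = riesz A' := riesz_congr hA.ae_eq_mk
  have e2 : ∫⁻ x, A x = ∫⁻ x, A' x := lintegral_congr_ae hA.ae_eq_mk
  rw [e2]
  set G : Set (Euc n) := {x | t ≤ riesz A' x}
  have hG : MeasurableSet G := measurableSet_le measurable_const (measurable_riesz hA')
  have hFG : volume F ≤ volume G := by
    refine measure_mono_ae ?_
    filter_upwards [hFt] with x hx hxF
    change t ≤ riesz A' x
    rw [← e1]
    exact hx hxF
  have hE : ∀ E : Set (Euc n), MeasurableSet E → E ⊆ G → volume E ≠ ⊤ →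
      t * volume E ^ (1 - 1 / (n:ℝ)) ≤ rieszConst n * ∫⁻ x, A' x := by
    intro E hEm hEG hEt
    rcases eq_or_ne (volume E) 0 with h0 | h0
    · rw [h0, ENNReal.zero_rpow_of_pos hn1]; simp
    have h1 : t * volume E ≤ rieszConst n * volume E ^ (1 / (n:ℝ)) * ∫⁻ x, A' x := by
      calc t * volume E = ∫⁻ x in E, t := by rw [setLIntegral_const]
        _ ≤ ∫⁻ x in E, riesz A' x := setLIntegral_mono' hEm fun x hx => hEG hx
        _ = ∫⁻ x, E.indicator 1 x * riesz A' x := by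
            rw [← lintegral_indicator hEm]
            refine lintegral_congr fun x => ?_
            by_cases hx : x ∈ E <;> simp [hx]
        _ = ∫⁻ x, A' x * riesz (E.indicator 1) x :=
            lintegral_mul_riesz hA' (measurable_one.indicator hEm)
        _ ≤ ∫⁻ x, A' x * (rieszConst n * volume E ^ (1 / (n:ℝ))) := by
            gcongr with x; exact riesz_indicator_le hn hEm x
        _ = _ := by rw [lintegral_mul_const _ hA', mul_comm]
    have hp0 : volume E ^ (1 / (n:ℝ)) ≠ 0 := by simp [h0, hEt]
    have hpt : volume E ^ (1 / (n:ℝ)) ≠ ⊤ := ENNReal.rpow_ne_top_of_nonneg (by positivity) hEt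
    rw [ENNReal.rpow_sub _ _ h0 hEt, ENNReal.rpow_one, ← mul_div_assoc]
    refine ENNReal.div_le_of_le_mul (h1.trans (le_of_eq (by ring)))
  have hlim : Tendsto (fun N : ℕ => t * volume (G ∩ closedBall 0 N) ^ (1 - 1 / (n:ℝ))) atTop
      (𝓝 (t * volume G ^ (1 - 1 / (n:ℝ)))) := by
    refine ENNReal.Tendsto.const_mul ?_ (Or.inr ht)
    refine (ENNReal.continuous_rpow_const.tendsto _).comp ?_
    have hU : G = ⋃ N : ℕ, G ∩ closedBall 0 N := by
      rw [← inter_iUnion, Metric.iUnion_closedBall_nat, inter_univ]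
    conv_rhs => rw [hU]
    refine tendsto_measure_iUnion_atTop fun a b hab => ?_
    exact inter_subset_inter_right _ (Metric.closedBall_subset_closedBall (by exact_mod_cast hab))
  calc t * volume F ^ (1 - 1 / (n:ℝ)) ≤ t * volume G ^ (1 - 1 / (n:ℝ)) := by gcongr
    _ ≤ _ := le_of_tendsto' hlim fun N => hE _ (hG.inter measurableSet_closedBall)
        inter_subset_left (ne_top_of_le_ne_top measure_closedBall_lt_top.ne
          (measure_mono inter_subset_right))

theorem antitone_distrib {α : Type*} [MeasurableSpace α] (μ : Measure α) (g : α → ℝ) :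
    Antitone fun τ : ℝ => μ {x | τ < g x} := fun _ _ hab =>
  measure_mono fun _ hx => lt_of_le_of_lt hab hx

/-- The average of a Riesz potential over `F`, estimated by applying the symmetry of the kernel and
`riesz_indicator_le` either to `F` or to the superlevel sets of `g`. -/
theorem lintegral_riesz_le {n : ℕ} (hn : 2 ≤ n) {g : Euc n → ℝ} (hg : Measurable g)
    (hg0 : ∀ x, 0 ≤ g x) {F : Set (Euc n)} (hF : MeasurableSet F) :
    ∫⁻ x in F, riesz (fun x => ENNReal.ofReal (g x)) x ≤ rieszConst n * ∫⁻ τ in Ioi (0:ℝ),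
      min (volume F * volume {x | τ < g x} ^ (1 / (n:ℝ)))
        (volume F ^ (1 / (n:ℝ)) * volume {x | τ < g x}) := by
  have hgm : Measurable fun x => ENNReal.ofReal (g x) := hg.ennreal_ofReal
  set W := riesz (F.indicator (1 : Euc n → ℝ≥0∞)) with hW
  have hWm : Measurable W := measurable_riesz (measurable_one.indicator hF)
  have hind : ∀ {E : Set (Euc n)}, MeasurableSet E → ∀ H : Euc n → ℝ≥0∞,
      ∫⁻ x in E, H x = ∫⁻ x, E.indicator 1 x * H x := by
    intro E hE H
    rw [← lintegral_indicator hE]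
    refine lintegral_congr fun x => ?_
    by_cases hx : x ∈ E <;> simp [hx]
  calc ∫⁻ x in F, riesz (fun x => ENNReal.ofReal (g x)) x
      = ∫⁻ x, ENNReal.ofReal (g x) * W x := by
        rw [hind hF, lintegral_mul_riesz hgm (measurable_one.indicator hF)]
    _ = ∫⁻ x, ENNReal.ofReal (g x) ∂(volume.withDensity W) := by
        rw [lintegral_withDensity_eq_lintegral_mul _ hWm hgm]
        exact lintegral_congr fun x => mul_comm _ _
    _ = ∫⁻ τ in Ioi (0:ℝ), volume.withDensity W {x | τ < g x} :=
        lintegral_eq_lintegral_meas_lt _ (Eventually.of_forall hg0) hg.aemeasurable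
    _ ≤ ∫⁻ τ in Ioi (0:ℝ), rieszConst n * min (volume F * volume {x | τ < g x} ^ (1 / (n:ℝ)))
        (volume F ^ (1 / (n:ℝ)) * volume {x | τ < g x}) := by
        refine lintegral_mono fun τ => ?_
        have hE : MeasurableSet {x | τ < g x} := measurableSet_lt measurable_const hg
        simp only
        rw [withDensity_apply _ hE, mul_min]
        refine le_min ?_ ?_
        · rw [hind hE, lintegral_mul_riesz (measurable_one.indicator hF)
            (measurable_one.indicator hE), ← hind hF]
          calc _ ≤ ∫⁻ x in F, rieszConst n * volume {x | τ < g x} ^ (1 / (n:ℝ)) :=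
                lintegral_mono fun x => riesz_indicator_le hn hE x
            _ = _ := by rw [setLIntegral_const]; ring
        · calc _ ≤ ∫⁻ x in {x | τ < g x}, rieszConst n * volume F ^ (1 / (n:ℝ)) :=
                lintegral_mono fun x => riesz_indicator_le hn hF x
            _ = _ := by rw [setLIntegral_const]; ring
    _ = _ := lintegral_const_mul' _ _ (rieszConst_ne_top n)

/-- Qualitative finiteness: the hypothesis places `g` in a sum of spaces on which the Riesz potential
has superlevel sets of finite measure. It is this that produces a constant to subtract. -/
theorem riesz_superlevel_finite {n : ℕ} (hn : 2 ≤ n) {g : Euc n → ℝ} (hg : AEMeasurable g volume)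
    (hg0 : ∀ x, 0 ≤ g x)
    (h : ∫⁻ τ in Ioi (0:ℝ), min (volume {x | τ < g x}) (volume {x | τ < g x} ^ (1 / (n:ℝ))) < ⊤)
    {t : ℝ≥0∞} (ht : t ≠ 0) : volume {x | t < riesz (fun x => ENNReal.ofReal (g x)) x} < ⊤ := by
  wlog hgm : Measurable g generalizing g
  · have hae : g =ᵐ[volume] fun x => max (hg.mk g x) 0 := by
      filter_upwards [hg.ae_eq_mk] with x hx
      rw [← hx, max_eq_left (hg0 x)]
    have hm : Measurable fun x => max (hg.mk g x) 0 := hg.measurable_mk.max measurable_const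
    have h2 := this hm.aemeasurable (fun x => le_max_right _ _) (by
      have : ∀ τ : ℝ, volume {x | τ < max (hg.mk g x) 0} = volume {x | τ < g x} := fun τ => by
        refine measure_congr ?_
        filter_upwards [hae] with x hx
        exact propext (by change τ < max (hg.mk g x) 0 ↔ τ < g x; rw [hx])
      simpa only [this] using h) hm
    rwa [riesz_congr (A' := fun x => ENNReal.ofReal (max (hg.mk g x) 0))
      (by filter_upwards [hae] with x hx; rw [hx])]
  have hn1 : 0 < 1 - 1 / (n:ℝ) := by
    have : (2:ℝ) ≤ n := by exact_mod_cast hn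
    rw [sub_pos, div_lt_one (by linarith)]; linarith
  by_contra htop
  rw [not_lt, top_le_iff] at htop
  have hGm : MeasurableSet {x | t < riesz (fun x => ENNReal.ofReal (g x)) x} :=
    measurableSet_lt measurable_const (measurable_riesz hgm.ennreal_ofReal)
  set μ : ℝ → ℝ≥0∞ := fun τ => volume {x | τ < g x}
  have hμm : Measurable μ := (antitone_distrib volume g).measurable
  -- A superlevel set of infinite measure contains sets of arbitrarily large finite measure, over
  -- which the average of the potential is small.
  have hN : ∀ N : ℕ, t ≤ rieszConst n * ∫⁻ τ in Ioi (0:ℝ),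
      min (μ τ ^ (1 / (n:ℝ))) (((N:ℝ≥0∞) + 1) ^ (-(1 - 1 / (n:ℝ))) * μ τ) := by
    intro N
    obtain ⟨F, hF, hFs, hF1, hF2⟩ := Measure.exists_subset_measure_lt_top hGm
      (r := (N:ℝ≥0∞) + 1) (by rw [htop]; finiteness)
    have hX0 : volume F ≠ 0 := (lt_of_le_of_lt zero_le hF1).ne'
    have h1 : volume F * t ≤ volume F * (rieszConst n * ∫⁻ τ in Ioi (0:ℝ),
        min (μ τ ^ (1 / (n:ℝ))) (volume F ^ (-(1 - 1 / (n:ℝ))) * μ τ)) := by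
      calc volume F * t = ∫⁻ x in F, t := by rw [setLIntegral_const, mul_comm]
        _ ≤ ∫⁻ x in F, riesz (fun x => ENNReal.ofReal (g x)) x :=
            setLIntegral_mono' hF fun x hx => (hFs hx).le
        _ ≤ _ := lintegral_riesz_le hn hgm hg0 hF
        _ = _ := by
            rw [mul_left_comm, ← lintegral_const_mul' _ _ hF2.ne]
            congr 1
            refine lintegral_congr fun τ => ?_
            rw [mul_min, ← mul_assoc (volume F)]
            congr 2
            rw [neg_sub, ENNReal.rpow_sub _ _ hX0 hF2.ne, ENNReal.rpow_one,
              ENNReal.mul_div_cancel hX0 hF2.ne]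
    refine ((ENNReal.mul_le_mul_iff_right hX0 hF2.ne).1 h1).trans ?_
    have h2 : volume F ^ (-(1 - 1 / (n:ℝ))) ≤ ((N:ℝ≥0∞) + 1) ^ (-(1 - 1 / (n:ℝ))) := by
      rw [ENNReal.rpow_neg, ENNReal.rpow_neg]
      gcongr
    gcongr with τ
  have hlim : Tendsto (fun N : ℕ => ∫⁻ τ in Ioi (0:ℝ),
      min (μ τ ^ (1 / (n:ℝ))) (((N:ℝ≥0∞) + 1) ^ (-(1 - 1 / (n:ℝ))) * μ τ)) atTop
      (𝓝 (∫⁻ τ in Ioi (0:ℝ), 0)) := by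
    refine tendsto_lintegral_of_dominated_convergence
      (fun τ => min (μ τ) (μ τ ^ (1 / (n:ℝ)))) (fun N => ?_) (fun N => ?_) h.ne ?_
    · exact (hμm.pow_const _).min (hμm.const_mul _)
    · refine Eventually.of_forall fun τ => ?_
      simp only
      rw [min_comm]
      gcongr
      refine mul_le_of_le_one_left' ?_
      exact ENNReal.rpow_le_one_of_one_le_of_neg (by simp) (by linarith)
    · have hfin := ae_lt_top (hμm.min (hμm.pow_const (1 / (n:ℝ)))) h.ne
      filter_upwards [hfin] with τ hτ
      have hμτ : μ τ ≠ ⊤ := by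
        intro h; rw [h, ENNReal.top_rpow_of_pos (by positivity)] at hτ; simp at hτ
      have h0 : Tendsto (fun N : ℕ => ((N:ℝ≥0∞) + 1) ^ (-(1 - 1 / (n:ℝ))) * μ τ) atTop (𝓝 0) := by
        rw [← zero_mul (μ τ)]
        refine ENNReal.Tendsto.mul_const ?_ (Or.inr hμτ)
        have h3 : Tendsto (fun N : ℕ => (N:ℝ≥0∞) + 1) atTop (𝓝 ⊤) := by
          simpa using ENNReal.tendsto_nat_nhds_top.add (tendsto_const_nhds (x := (1:ℝ≥0∞)))
        have h4 := (ENNReal.continuous_rpow_const (y := -(1 - 1 / (n:ℝ)))).tendsto ⊤ |>.comp h3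
        rwa [ENNReal.top_rpow_of_neg (by linarith)] at h4
      exact tendsto_of_tendsto_of_tendsto_of_le_of_le tendsto_const_nhds h0
        (fun _ => zero_le) (fun _ => min_le_right _ _)
  have h5 := ge_of_tendsto' (ENNReal.Tendsto.const_mul hlim (Or.inr (rieszConst_ne_top n))) hN
  simp at h5
  exact ht h5

/-! ### Truncated first-order estimate -/

theorem exists_mem_notMem {n : ℕ} (hn : 2 ≤ n) {S T : Set (Euc n)} (hS : ∀ᵐ x, x ∈ S)
    (hT : volume T < ⊤) : ∃ x ∈ S, x ∉ T := by
  by_contra! hcon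
  have : Nonempty (Fin n) := ⟨⟨0, by omega⟩⟩
  have h1 : volume (univ : Set (Euc n)) ≤ volume T := by
    refine measure_mono_ae ?_
    filter_upwards [hS] with x hx _
    exact hcon x hx
  have : Nontrivial (Euc n) := inferInstance
  rw [measure_univ_of_isAddLeftInvariant] at h1
  exact absurd h1 (not_le.2 hT)

/-- If the oscillation of `v` is controlled by a Riesz potential whose superlevel sets have finite
measure, then `v` differs from some constant by at most this potential. -/
theorem exists_const_of_osc {n : ℕ} (hn : 2 ≤ n) {v : Euc n → ℝ} {A : Euc n → ℝ≥0∞}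
    {C : ℝ≥0∞} (hC : C ≠ ⊤) {S : Set (Euc n)} (hS : ∀ᵐ x, x ∈ S)
    (hv : ∀ x ∈ S, ∀ y ∈ S, ‖v x - v y‖ₑ ≤ C * (riesz A x + riesz A y))
    {T : Set (Euc n)} (hT : volume T < ⊤)
    (hA : ∀ t : ℝ≥0∞, t ≠ 0 → volume {x | t < riesz A x} < ⊤) :
    ∃ (c : ℝ) (x : ℕ → Euc n), (∀ i, x i ∉ T) ∧ Tendsto (fun i => v (x i)) atTop (𝓝 c) ∧
      ∀ y ∈ S, ‖v y - c‖ₑ ≤ C * riesz A y := by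
  have hex : ∀ i : ℕ, ∃ x ∈ S, x ∉ T ∪ {x | ((i:ℝ≥0∞) + 1)⁻¹ < riesz A x} := fun i =>
    exists_mem_notMem hn hS ((measure_union_le _ _).trans_lt
      (ENNReal.add_lt_top.2 ⟨hT, hA _ (by simp)⟩))
  choose x hxS hxT using hex
  have hxT' : ∀ i, x i ∉ T := fun i h => hxT i (Or.inl h)
  have hxA : ∀ i, riesz A (x i) ≤ ((i:ℝ≥0∞) + 1)⁻¹ := fun i => by
    by_contra h
    exact hxT i (Or.inr (not_le.1 h))
  have h0 : Tendsto (fun i : ℕ => ((i:ℝ≥0∞) + 1)⁻¹) atTop (𝓝 0) := by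
    have h3 : Tendsto (fun N : ℕ => (N:ℝ≥0∞) + 1) atTop (𝓝 ⊤) := by
      simpa using ENNReal.tendsto_nat_nhds_top.add (tendsto_const_nhds (x := (1:ℝ≥0∞)))
    simpa using (tendsto_inv_iff.2 h3)
  have hanti : Antitone fun i : ℕ => ((i:ℝ≥0∞) + 1)⁻¹ := fun a b hab => by
    simp only
    gcongr
  have hlimC : Tendsto (fun N : ℕ => C * (((N:ℝ≥0∞) + 1)⁻¹ + ((N:ℝ≥0∞) + 1)⁻¹)) atTop (𝓝 0) := by
    simpa using ENNReal.Tendsto.const_mul (h0.add h0) (Or.inr hC)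
  have hcau : CauchySeq fun i => v (x i) := by
    refine EMetric.cauchySeq_iff_le_tendsto_0.2
      ⟨fun N => C * (((N:ℝ≥0∞) + 1)⁻¹ + ((N:ℝ≥0∞) + 1)⁻¹), ?_, hlimC⟩
    intro i j N hi hj
    rw [edist_eq_enorm_sub]
    refine (hv _ (hxS i) _ (hxS j)).trans ?_
    exact mul_le_mul_right (add_le_add ((hxA i).trans (hanti hi)) ((hxA j).trans (hanti hj))) _
  obtain ⟨c, hc⟩ := cauchySeq_tendsto_of_complete hcau
  refine ⟨c, x, hxT', hc, fun y hy => ?_⟩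
  have h1 : Tendsto (fun i => ‖v y - v (x i)‖ₑ) atTop (𝓝 ‖v y - c‖ₑ) :=
    (tendsto_const_nhds.sub hc).enorm
  have h2 : Tendsto (fun i : ℕ => C * (riesz A y + ((i:ℝ≥0∞) + 1)⁻¹)) atTop
      (𝓝 (C * (riesz A y + 0))) :=
    ENNReal.Tendsto.const_mul (tendsto_const_nhds.add h0) (Or.inr hC)
  rw [add_zero] at h2
  refine le_of_tendsto_of_tendsto' h1 h2 fun i => (hv y hy _ (hxS i)).trans ?_
  gcongr
  exact hxA i

theorem riesz_mono {n : ℕ} {A A' : Euc n → ℝ≥0∞} (h : ∀ x, A x ≤ A' x) (x : Euc n) :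
    riesz A x ≤ riesz A' x :=
  ENNReal.tsum_le_tsum fun j => by
    unfold rieszTerm
    gcongr with y
    exact h y

/-- The continuous tent function supported on `a ≤ |s| ≤ b`, with maximum `1`. -/
def tent (a b s : ℝ) : ℝ := max 0 (1 - |2 * |s| - (a + b)| / (b - a))

theorem continuous_tent (a b : ℝ) : Continuous (tent a b) := by
  unfold tent; fun_prop

theorem tent_nonneg (a b s : ℝ) : 0 ≤ tent a b s := le_max_left _ _

theorem tent_le_one {a b : ℝ} (hab : a < b) (s : ℝ) : tent a b s ≤ 1 := by
  unfold tent
  refine max_le zero_le_one ?_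
  have : 0 ≤ |2 * |s| - (a + b)| / (b - a) := div_nonneg (abs_nonneg _) (by linarith)
  linarith

theorem tent_eq_zero {a b : ℝ} (hab : a < b) {s : ℝ} (hs : ¬ (a < |s| ∧ |s| < b)) :
    tent a b s = 0 := by
  unfold tent
  refine max_eq_left ?_
  rw [sub_nonpos, one_le_div (by linarith)]
  by_cases h : a < |s|
  · have : b ≤ |s| := not_lt.1 fun h' => hs ⟨h, h'⟩
    exact le_trans (by linarith) (le_abs_self _)
  · exact le_trans (by linarith) (neg_le_abs _)

/-- The odd primitive of the tent function. -/
def tentPrim (a b s : ℝ) : ℝ := ∫ t in (0:ℝ)..s, tent a b t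

theorem hasDerivAt_tentPrim (a b s : ℝ) : HasDerivAt (tentPrim a b) (tent a b s) s :=
  intervalIntegral.integral_hasDerivAt_right ((continuous_tent a b).intervalIntegrable _ _)
    ((continuous_tent a b).stronglyMeasurableAtFilter _ _) (continuous_tent a b).continuousAt

theorem abs_tentPrim_le {a b : ℝ} (hab : a < b) (s : ℝ) : |tentPrim a b s| ≤ |s| := by
  have := intervalIntegral.norm_integral_le_of_norm_le_const (a := 0) (b := s) (C := 1)
    (f := tent a b) (fun x _ => by
      rw [Real.norm_of_nonneg (tent_nonneg _ _ _)]; exact tent_le_one hab x)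
  simpa [tentPrim] using this

theorem tentPrim_eq_zero {a b : ℝ} (hab : a < b) {s : ℝ} (hs : |s| ≤ a) :
    tentPrim a b s = 0 := by
  unfold tentPrim
  rw [intervalIntegral.integral_congr (g := fun _ => 0)]
  · simp
  intro t ht
  refine tent_eq_zero hab fun h => ?_
  have : |t| ≤ |s| := by
    rcases le_total 0 s with h0 | h0
    · rw [uIcc_of_le h0] at ht; rw [abs_of_nonneg ht.1, abs_of_nonneg h0]; exact ht.2
    · rw [uIcc_of_ge h0] at ht; rw [abs_of_nonpos ht.2, abs_of_nonpos h0]; linarith [ht.1]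
  linarith [h.1]

theorem tentPrim_neg (a b s : ℝ) : tentPrim a b (-s) = - tentPrim a b s := by
  unfold tentPrim
  have h := intervalIntegral.integral_comp_neg (a := 0) (b := s) (f := tent a b)
  rw [neg_zero] at h
  have h2 : (fun x => tent a b (-x)) = tent a b := by funext x; simp [tent]
  rw [h2] at h
  rw [h, intervalIntegral.integral_symm]

theorem le_abs_tentPrim {a b : ℝ} (ha : 0 < a) (hab : a < b) {s : ℝ} (hs : b ≤ |s|) :
    (b - a) / 4 ≤ |tentPrim a b s| := by
  wlog h0 : 0 ≤ s generalizing s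
  · have := this (s := -s) (by rwa [abs_neg]) (by linarith)
    rwa [tentPrim_neg, abs_neg] at this
  rw [abs_of_nonneg h0] at hs
  have hii : ∀ x y, IntervalIntegrable (tent a b) volume x y := fun x y =>
    (continuous_tent a b).intervalIntegrable _ _
  refine le_trans ?_ (le_abs_self _)
  have h1 : (∫ t in ((3 * a + b) / 4)..((a + 3 * b) / 4), (1/2 : ℝ)) ≤
      ∫ t in ((3 * a + b) / 4)..((a + 3 * b) / 4), tent a b t := by
    refine intervalIntegral.integral_mono_on (by linarith) (by simp) (hii _ _) fun t ht => ?_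
    have ht0 : 0 < t := by linarith [ht.1]
    unfold tent
    refine le_max_of_le_right ?_
    rw [abs_of_pos ht0]
    have : |2 * t - (a + b)| / (b - a) ≤ 1 / 2 := by
      rw [div_le_iff₀ (by linarith), abs_le]
      constructor <;> linarith [ht.1, ht.2]
    linarith
  have h2 : ∫ t in ((3 * a + b) / 4)..((a + 3 * b) / 4), tent a b t ≤ tentPrim a b s := by
    unfold tentPrim
    exact intervalIntegral.integral_mono_interval (by linarith) (by linarith) (by linarith)
      (Eventually.of_forall fun t => tent_nonneg _ _ _) (hii _ _)
  refine le_trans (le_of_eq ?_) (h1.trans h2)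
  simp
  ring

/-- Constant of the truncated first-order estimate. -/
def truncConst (n : ℕ) : ℝ≥0∞ := 8 * avgConst n * rieszConst n

theorem avgConst_ne_zero (n : ℕ) : avgConst n ≠ 0 := by
  unfold avgConst
  have : volume (Metric.ball (0 : Euc n) 1) ≠ ⊤ := measure_ball_lt_top.ne
  simp [this]

theorem truncConst_ne_top (n : ℕ) : truncConst n ≠ ⊤ := by
  unfold truncConst
  have := avgConst_ne_top n
  have := rieszConst_ne_top n
  finiteness

/-- A truncated weak-type estimate. The constant `c` is chosen from `w` itself, before the levels
`a < b`. The truncation of `w - c` to values between `a` and `b` vanishes off the set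
`{|w - c| > a}` of finite measure, so its own constant is `0`, and the weak-type estimate involves
the gradient only where `a < |w - c| < b`. -/
theorem exists_const_trunc {n : ℕ} (hn : 2 ≤ n) {w : Euc n → ℝ} {d : Fin n → Euc n → ℝ}
    {g : Euc n → ℝ}
    (hw : LocallyIntegrable w volume) (hd : ∀ i, LocallyIntegrable (d i) volume)
    (h : ∀ i, WeakPartial w i (d i)) (hg : AEMeasurable g volume)
    (hdg : ∀ x, ∑ i, |d i x| ≤ g x)
    (hκ : ∫⁻ τ in Ioi (0:ℝ), min (volume {x | τ < g x}) (volume {x | τ < g x} ^ (1 / (n:ℝ))) < ⊤) :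
    ∃ c : ℝ, (∀ t : ℝ, 0 < t → volume {x | t < |w x - c|} < ⊤) ∧
      ∀ a b : ℝ, 0 < a → a < b → ENNReal.ofReal (b - a) *
        volume {x | b ≤ |w x - c|} ^ (1 - 1 / (n:ℝ)) ≤
          truncConst n * ∫⁻ x in {x | a < |w x - c| ∧ |w x - c| < b}, ENNReal.ofReal (g x) := by
  have hg0 : ∀ x, 0 ≤ g x := fun x => (Finset.sum_nonneg fun i _ => abs_nonneg _).trans (hdg x)
  set G : Euc n → ℝ≥0∞ := fun x => ENNReal.ofReal (g x) with hG
  have hdG : ∀ x, ∑ i, ‖d i x‖ₑ ≤ G x := fun x => by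
    refine le_trans (le_of_eq ?_) (ENNReal.ofReal_le_ofReal (hdg x))
    rw [ENNReal.ofReal_sum_of_nonneg fun _ _ => abs_nonneg _]
    exact Finset.sum_congr rfl fun i _ => by rw [← ofReal_norm, Real.norm_eq_abs]
  have hfin : ∀ t : ℝ≥0∞, t ≠ 0 → volume {x | t < riesz G x} < ⊤ := fun t ht =>
    riesz_superlevel_finite hn hg hg0 hκ ht
  have hC : 2 * avgConst n ≠ ⊤ := ENNReal.mul_ne_top (by simp) (avgConst_ne_top n)
  have hC0 : 2 * avgConst n ≠ 0 := mul_ne_zero (by simp) (avgConst_ne_zero n)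
  obtain ⟨S, hS, hSv⟩ := enorm_sub_le_riesz (A := G) hw (fun z R => by
    refine (weak_poincare hw hd h (ψ := id) (ψ' := fun _ => 1) hasDerivAt_id
      continuous_const (by simp) z R).trans ?_
    gcongr with x
    simpa using hdG x)
  obtain ⟨c, -, -, -, hc⟩ := exists_const_of_osc hn hC hS hSv (T := ∅) (by simp) hfin
  have hlev : ∀ t : ℝ, 0 < t → volume {x | t < |w x - c|} < ⊤ := by
    intro t ht
    have h2 := hfin (ENNReal.ofReal t / (2 * avgConst n)) (by simp [ht, avgConst_ne_top n,
      ENNReal.mul_eq_top])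
    refine lt_of_le_of_lt (measure_mono_ae ?_) h2
    filter_upwards [hS] with x hx hxt
    refine ENNReal.div_lt_of_lt_mul' (lt_of_lt_of_le ?_ (hc x hx))
    rw [← ofReal_norm, Real.norm_eq_abs]
    exact (ENNReal.ofReal_lt_ofReal_iff (ht.trans hxt)).2 hxt
  refine ⟨c, hlev, fun a b ha hab => ?_⟩
  set ψ : ℝ → ℝ := fun s => tentPrim a b (s - c) with hψ
  set ψ' : ℝ → ℝ := fun s => tent a b (s - c) with hψ'
  have hψd : ∀ s, HasDerivAt ψ (ψ' s) s := fun s => (hasDerivAt_tentPrim a b _).comp_sub_const s c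
  have hψc : Continuous ψ' := (continuous_tent a b).comp (continuous_sub_right c)
  have hψ1 : ∀ s, |ψ' s| ≤ 1 := fun s => by
    rw [abs_of_nonneg (tent_nonneg _ _ _)]; exact tent_le_one hab _
  set A : Euc n → ℝ≥0∞ := fun x => ‖ψ' (w x)‖ₑ * ∑ i, ‖d i x‖ₑ with hA
  have hψe : ∀ s, ‖ψ' s‖ₑ ≤ 1 := fun s => by
    rw [← ofReal_norm, ← ENNReal.ofReal_one]; exact ENNReal.ofReal_le_ofReal (hψ1 s)
  have hAG : ∀ x, A x ≤ G x := fun x => (mul_le_of_le_one_left' (hψe _)).trans (hdG x)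
  have hAm : AEMeasurable A volume := by
    refine AEMeasurable.mul ?_ (Finset.aemeasurable_fun_sum _ fun i _ =>
      (hd i).aestronglyMeasurable.aemeasurable.enorm)
    exact (hψc.measurable.comp_aemeasurable hw.aestronglyMeasurable.aemeasurable).enorm
  have hvi : LocallyIntegrable (fun x => ψ (w x)) volume := by
    have hcont : Continuous ψ := continuous_iff_continuousAt.2 fun s => (hψd s).continuousAt
    refine (hw.sub (locallyIntegrable_const c)).mono
      (hcont.comp_aestronglyMeasurable hw.aestronglyMeasurable) (Eventually.of_forall fun x => ?_)
    exact abs_tentPrim_le hab _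
  obtain ⟨S', hS', hSv'⟩ := enorm_sub_le_riesz (A := A) hvi
    (fun z R => weak_poincare hw hd h hψd hψc hψ1 z R)
  obtain ⟨c', x, hxT, hxl, hc'⟩ := exists_const_of_osc hn hC hS' hSv' (hlev a ha)
    (fun t ht => lt_of_le_of_lt (measure_mono fun x hx => lt_of_lt_of_le hx (riesz_mono hAG x))
      (hfin t ht))
  -- The truncation vanishes at the points `x i`, along which it tends to its constant.
  have hc0 : c' = 0 := by
    have : ∀ i, ψ (w (x i)) = 0 := fun i => tentPrim_eq_zero hab (not_lt.1 (hxT i))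
    simp only [this] at hxl
    exact (tendsto_nhds_unique hxl tendsto_const_nhds)
  subst hc0
  have hwt := riesz_weak_type hn hAm (t := ENNReal.ofReal ((b - a) / 4) / (2 * avgConst n))
    (F := {x | b ≤ |w x - c|}) (ENNReal.div_ne_top ofReal_ne_top hC0) (by
      filter_upwards [hS'] with y hy hyb
      refine ENNReal.div_le_of_le_mul' (le_trans ?_ (hc' y hy))
      rw [← ofReal_norm, sub_zero, Real.norm_eq_abs]
      exact ENNReal.ofReal_le_ofReal (le_abs_tentPrim ha hab hyb))
  have hms : NullMeasurableSet {x | a < |w x - c| ∧ |w x - c| < b} volume := by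
    have hm : AEMeasurable (fun x => |w x - c|) volume :=
      (hw.aestronglyMeasurable.aemeasurable.sub_const c).abs
    exact hm.nullMeasurable measurableSet_Ioo
  have hAint : ∫⁻ x, A x ≤ ∫⁻ x in {x | a < |w x - c| ∧ |w x - c| < b}, G x := by
    rw [← lintegral_indicator₀ hms]
    refine lintegral_mono fun x => ?_
    by_cases hx : x ∈ {x | a < |w x - c| ∧ |w x - c| < b}
    · rw [indicator_of_mem hx]; exact hAG x
    · have : ψ' (w x) = 0 := tent_eq_zero hab hx
      simp [hA, this]
  set V := volume {x | b ≤ |w x - c|} ^ (1 - 1 / (n:ℝ))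
  calc ENNReal.ofReal (b - a) * V
      = 4 * ENNReal.ofReal ((b - a) / 4) * V := by
        rw [show (4:ℝ≥0∞) = ENNReal.ofReal 4 by simp, ← ENNReal.ofReal_mul (by norm_num)]
        congr 2; ring
    _ = 4 * (2 * avgConst n) * (ENNReal.ofReal ((b - a) / 4) / (2 * avgConst n) * V) := by
        conv_lhs => rw [← ENNReal.mul_div_cancel (b := ENNReal.ofReal ((b - a) / 4)) hC0 hC]
        ring
    _ ≤ 4 * (2 * avgConst n) * (rieszConst n * ∫⁻ x, A x) := by gcongr
    _ ≤ 4 * (2 * avgConst n) * (rieszConst n *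
        ∫⁻ x in {x | a < |w x - c| ∧ |w x - c| < b}, G x) := by gcongr
    _ = _ := by unfold truncConst; ring

/-! ### Gauges and the raising operator -/

/-- The functional `∫₀^∞ Φ(|{|w| > τ}|) dτ`. For concave `Φ` vanishing at the origin it is the
Lorentz norm of `w` with weight `Φ'`. -/
def Lam {n : ℕ} (Φ : ℝ≥0∞ → ℝ≥0∞) (w : Euc n → ℝ) : ℝ≥0∞ :=
  ∫⁻ τ in Ioi (0:ℝ), Φ (volume {x | τ < |w x|})

/-- The operator `Φ ↦ sup_{s>0} min(x, s) s^{1/n-1} Φ(s)`, which carries the fundamental function of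
a Lorentz target space to that of its first-order Sobolev domain. -/
def raise (n : ℕ) (Φ : ℝ≥0∞ → ℝ≥0∞) (x : ℝ≥0∞) : ℝ≥0∞ :=
  ⨆ (s : ℝ) (_ : 0 < s), min x (ENNReal.ofReal s) * ENNReal.ofReal (s ^ ((1:ℝ) / n - 1)) *
    Φ (ENNReal.ofReal s)

theorem raise_mono (n : ℕ) (Φ : ℝ≥0∞ → ℝ≥0∞) : Monotone (raise n Φ) := fun x y hxy => by
  unfold raise
  gcongr

theorem raise_zero (n : ℕ) (Φ : ℝ≥0∞ → ℝ≥0∞) : raise n Φ 0 = 0 := by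
  simp [raise]

theorem le_raise {n : ℕ} (Φ : ℝ≥0∞ → ℝ≥0∞) (x : ℝ≥0∞) {s : ℝ} (hs : 0 < s) :
    min x (ENNReal.ofReal s) * ENNReal.ofReal (s ^ ((1:ℝ) / n - 1)) *
      Φ (ENNReal.ofReal s) ≤ raise n Φ x :=
  le_iSup₂ (f := fun (s : ℝ) (_ : 0 < s) => min x (ENNReal.ofReal s) *
    ENNReal.ofReal (s ^ ((1:ℝ) / n - 1)) * Φ (ENNReal.ofReal s)) s hs

/-- `raise n Φ x / x` is nonincreasing. -/
theorem mul_raise_le {n : ℕ} (Φ : ℝ≥0∞ → ℝ≥0∞) {x y : ℝ≥0∞} (hxy : y ≤ x) :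
    y * raise n Φ x ≤ x * raise n Φ y := by
  unfold raise
  simp only [ENNReal.mul_iSup]
  refine iSup₂_mono fun s hs => ?_
  rw [← mul_assoc, ← mul_assoc, ← mul_assoc, ← mul_assoc]
  gcongr ?_ * _ * _
  rcases le_total (ENNReal.ofReal s) y with h | h
  · rw [min_eq_right h, min_eq_right (h.trans hxy)]; gcongr
  · rw [min_eq_left h, mul_comm]; gcongr; exact min_le_left _ _

/-- `x^{-1/n} raise n Φ x` is nondecreasing. -/
theorem raise_decay {n : ℕ} {Φ : ℝ≥0∞ → ℝ≥0∞} (hΦ : Monotone Φ) {θ : ℝ} (hθ : 0 < θ) (hθ1 : θ ≤ 1)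
    (x : ℝ≥0∞) : raise n Φ (ENNReal.ofReal θ * x) ≤
      ENNReal.ofReal (θ ^ ((1:ℝ) / n)) * raise n Φ x := by
  refine iSup₂_le fun s hs => ?_
  have hs' : 0 < s / θ := by positivity
  refine le_trans ?_ (mul_le_mul_right (le_raise (n := n) Φ x hs') _)
  have h1 : min (ENNReal.ofReal θ * x) (ENNReal.ofReal s) =
      ENNReal.ofReal θ * min x (ENNReal.ofReal (s / θ)) := by
    rw [mul_min, ← ENNReal.ofReal_mul hθ.le]
    congr 2; field_simp
  have h2 : ENNReal.ofReal θ * ENNReal.ofReal (s ^ ((1:ℝ) / n - 1)) =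
      ENNReal.ofReal (θ ^ ((1:ℝ) / n)) * ENNReal.ofReal ((s / θ) ^ ((1:ℝ) / n - 1)) := by
    rw [← ENNReal.ofReal_mul hθ.le, ← ENNReal.ofReal_mul (by positivity),
      Real.div_rpow hs.le hθ.le, Real.rpow_sub hθ, Real.rpow_one]
    congr 1
    have := Real.rpow_pos_of_pos hθ ((1:ℝ) / n)
    field_simp
  have h3 : Φ (ENNReal.ofReal s) ≤ Φ (ENNReal.ofReal (s / θ)) :=
    hΦ (ENNReal.ofReal_le_ofReal (by rw [le_div_iff₀ hθ]; nlinarith))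
  calc _ = min x (ENNReal.ofReal (s / θ)) * (ENNReal.ofReal θ *
        ENNReal.ofReal (s ^ ((1:ℝ) / n - 1))) * Φ (ENNReal.ofReal s) := by rw [h1]; ring
    _ = ENNReal.ofReal (θ ^ ((1:ℝ) / n)) * (min x (ENNReal.ofReal (s / θ)) *
        ENNReal.ofReal ((s / θ) ^ ((1:ℝ) / n - 1)) * Φ (ENNReal.ofReal s)) := by rw [h2]; ring
    _ ≤ _ := by gcongr

/-- Sum of the geometric series of ratio `2^{-1/n}`. -/
def geomConst (n : ℕ) : ℝ≥0∞ := ∑' i : ℕ, ENNReal.ofReal ((2⁻¹:ℝ) ^ ((1:ℝ) / n)) ^ i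

theorem geomConst_ne_top {n : ℕ} (hn : 2 ≤ n) : geomConst n ≠ ⊤ := by
  unfold geomConst
  rw [ENNReal.tsum_geometric]
  refine ENNReal.inv_ne_top.2 (tsub_pos_of_lt ?_).ne'
  rw [← ENNReal.ofReal_one]
  refine (ENNReal.ofReal_lt_ofReal_iff one_pos).2 (Real.rpow_lt_one (by norm_num) (by norm_num) ?_)
  positivity

/-- Dyadic summation: masses `e k` of total at most `y`, with `e k ≤ 2^{k+1}`, weighted with
`raise n Φ (2^{k+1}) / 2^{k+1}`, sum up to a multiple of `raise n Φ y`. -/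
theorem tsum_raise_le {n : ℕ} {Φ : ℝ≥0∞ → ℝ≥0∞} (hΦ : Monotone Φ) {e : ℤ → ℝ≥0∞}
    {y : ℝ≥0∞} (hy : y ≠ ⊤) (he : ∀ k, e k ≤ ENNReal.ofReal (2 ^ (k + 1))) (hs : ∑' k, e k ≤ y) :
    ∑' k : ℤ, (ENNReal.ofReal ((2:ℝ) ^ (k + 1)))⁻¹ * raise n Φ (ENNReal.ofReal (2 ^ (k + 1))) * e k ≤
      (1 + geomConst n) * raise n Φ y := by
  rcases eq_or_ne y 0 with rfl | hy0
  · have : ∀ k, e k = 0 := fun k => ENNReal.tsum_eq_zero.1 (nonpos_iff_eq_zero.1 hs) k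
    simp [this]
  obtain ⟨K, hK1, hK2⟩ := exists_mem_Ioc_zpow (ENNReal.toReal_pos hy0 hy) (y := (2:ℝ)) one_lt_two
  have hyr : y = ENNReal.ofReal y.toReal := (ENNReal.ofReal_toReal hy).symm
  rw [tsum_int_split _ (K - 1), add_comm, add_mul, one_mul]
  refine add_le_add ?_ ?_
  · calc _ ≤ ∑' i : ℕ, y⁻¹ * raise n Φ y * e (K - 1 + 1 + i) := by
          refine ENNReal.tsum_le_tsum fun i => mul_le_mul_left ?_ _
          have hle : y ≤ ENNReal.ofReal ((2:ℝ) ^ (K - 1 + 1 + i + 1)) := by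
            rw [hyr]
            refine ENNReal.ofReal_le_ofReal (hK2.trans ?_)
            exact zpow_le_zpow_right₀ one_le_two (by omega)
          have hp : ENNReal.ofReal ((2:ℝ) ^ (K - 1 + 1 + i + 1)) ≠ 0 := by
            rw [Ne, ENNReal.ofReal_eq_zero, not_le]; positivity
          rw [ENNReal.inv_mul_le_iff hp ofReal_ne_top, mul_left_comm,
            ← ENNReal.inv_mul_le_iff (by simpa using hy) (by simpa using hy0), inv_inv]
          exact mul_raise_le Φ hle
      _ ≤ y⁻¹ * raise n Φ y * y := by
          rw [ENNReal.tsum_mul_left]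
          gcongr
          refine le_trans ?_ hs
          exact ENNReal.tsum_comp_le_tsum_of_injective (f := fun i : ℕ => K - 1 + 1 + (i:ℤ))
            (fun a b hab => by simpa using hab) e
      _ = raise n Φ y := by
          rw [mul_right_comm, ENNReal.inv_mul_cancel hy0 hy, one_mul]
  · unfold geomConst
    rw [← ENNReal.tsum_mul_right]
    refine ENNReal.tsum_le_tsum fun i => ?_
    have hp : ENNReal.ofReal ((2:ℝ) ^ (K - 1 - i + 1)) ≠ 0 := by
      rw [Ne, ENNReal.ofReal_eq_zero, not_le]; positivity
    calc _ ≤ (ENNReal.ofReal ((2:ℝ) ^ (K - 1 - i + 1)))⁻¹ *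
          raise n Φ (ENNReal.ofReal (2 ^ (K - 1 - i + 1))) *
            ENNReal.ofReal ((2:ℝ) ^ (K - 1 - i + 1)) := by gcongr; exact he _
      _ = raise n Φ (ENNReal.ofReal (2 ^ (K - 1 - i + 1))) := by
          rw [mul_right_comm, ENNReal.inv_mul_cancel hp ofReal_ne_top, one_mul]
      _ = raise n Φ (ENNReal.ofReal ((2⁻¹:ℝ) ^ i) * ENNReal.ofReal (2 ^ K)) := by
          rw [← ENNReal.ofReal_mul (by positivity)]
          congr 2
          rw [show K - 1 - (i:ℤ) + 1 = - (i:ℤ) + K by ring, zpow_add₀ two_ne_zero, zpow_neg,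
            zpow_natCast, inv_pow]
      _ ≤ ENNReal.ofReal (((2⁻¹:ℝ) ^ i) ^ ((1:ℝ) / n)) * raise n Φ (ENNReal.ofReal (2 ^ K)) :=
          raise_decay hΦ (by positivity) (pow_le_one₀ (by norm_num) (by norm_num)) _
      _ ≤ _ := by
          rw [← ENNReal.ofReal_pow (by positivity), ← Real.rpow_natCast, ← Real.rpow_natCast,
            ← Real.rpow_mul (by norm_num), ← Real.rpow_mul (by norm_num), mul_comm (i:ℝ)]
          gcongr
          refine raise_mono n Φ ?_
          rw [hyr]
          exact ENNReal.ofReal_le_ofReal hK1.le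

/-! ### First-order inequality between Lorentz functionals -/

theorem le_inv_mul_iff_ennreal {a b c : ℝ≥0∞} (h0 : a ≠ 0) (ht : a ≠ ⊤) :
    b ≤ a⁻¹ * c ↔ a * b ≤ c := by
  rw [mul_comm a⁻¹, ← div_eq_mul_inv, ENNReal.le_div_iff_mul_le (Or.inl h0) (Or.inl ht), mul_comm]

/-- Abstract form of the level-set summation. The function `v` has finite distribution function, and
each slice of its range is controlled by the integral of `g` over the corresponding slice of the
domain. -/
theorem lam_le_of_slices {n : ℕ} (hn : 2 ≤ n) {v g : Euc n → ℝ} (hv : AEMeasurable v volume)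
    (hg : AEMeasurable g volume) (hg0 : ∀ x, 0 ≤ g x) {K : ℝ≥0∞}
    (hgf : ∀ t : ℝ, 0 < t → volume {x | t < g x} < ⊤)
    (hfin : ∀ t : ℝ, 0 < t → volume {x | t < v x} < ⊤)
    (hsl : ∀ a b : ℝ, 0 < a → a < b → ENNReal.ofReal (b - a) *
        volume {x | b ≤ v x} ^ (1 - 1 / (n:ℝ)) ≤
          K * ∫⁻ x in {x | a < v x ∧ v x < b}, ENNReal.ofReal (g x))
    {Φ : ℝ≥0∞ → ℝ≥0∞} (hΦ : Monotone Φ) (hΦ0 : Φ 0 = 0) :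
    ∫⁻ τ in Ioi (0:ℝ), Φ (volume {x | τ < v x}) ≤
      2 * K * (1 + geomConst n) * ∫⁻ τ in Ioi (0:ℝ), raise n Φ (volume {x | τ < g x}) := by
  have hn0 : (0:ℝ) < n := by positivity
  have hn1 : 1 / (n:ℝ) ≤ 1 := by
    rw [div_le_one hn0]; exact_mod_cast (by omega : 1 ≤ n)
  set μ : ℝ → ℝ≥0∞ := fun τ => volume {x | τ < v x} with hμ
  have hanti : Antitone μ := antitone_distrib volume v
  set I : ℤ → Set ℝ := fun k => {t | 0 < t ∧ ENNReal.ofReal (2 ^ k) < μ t ∧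
    μ t ≤ ENNReal.ofReal (2 ^ (k + 1))} with hI
  have hIo : ∀ k, (I k).OrdConnected := fun k => ⟨fun a ha b hb t ht =>
    ⟨ha.1.trans_le ht.1, hb.2.1.trans_le (hanti ht.2), (hanti ht.1).trans ha.2.2⟩⟩
  have hIm : ∀ k, MeasurableSet (I k) := fun k => (hIo k).measurableSet
  -- The slices, with a possible left endpoint removed so that their preimages are small.
  set J : ℤ → Set ℝ := fun k => {t | t ∈ I k ∧ ∃ a ∈ I k, a < t} with hJ
  have hJm : ∀ k, MeasurableSet (J k) := fun k => by
    refine Set.OrdConnected.measurableSet ⟨fun a ha b hb t ht => ⟨(hIo k).out ha.1 hb.1 ht, ?_⟩⟩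
    obtain ⟨a', ha', h'⟩ := ha.2
    exact ⟨a', ha', h'.trans_le ht.1⟩
  set E : ℤ → Set (Euc n) := fun k => v ⁻¹' J k with hE
  have hEm : ∀ k, NullMeasurableSet (E k) volume := fun k => hv.nullMeasurable (hJm k)
  have hdisjI : ∀ i j, i < j → ∀ t, t ∈ I i → t ∉ I j := by
    intro i j hij t hi hj
    have h1 := hj.2.1.trans_le hi.2.2
    rw [ENNReal.ofReal_lt_ofReal_iff (by positivity)] at h1
    have := (zpow_le_zpow_iff_right₀ (a := (2:ℝ)) one_lt_two).2 (by omega : i + 1 ≤ j)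
    linarith
  have hdisj : Pairwise (Function.onFun (AEDisjoint volume) E) := by
    intro i j hij
    refine Disjoint.aedisjoint (Set.disjoint_left.2 fun x hi hj => ?_)
    rcases lt_or_gt_of_ne hij with h | h
    · exact hdisjI i j h _ hi.1 hj.1
    · exact hdisjI j i h _ hj.1 hi.1
  have hEv : ∀ k, volume (E k) ≤ ENNReal.ofReal (2 ^ (k + 1)) := by
    intro k
    rcases (I k).eq_empty_or_nonempty with h0 | hne
    · have : E k = ∅ := by ext x; simp [hE, hJ, h0]
      simp [this]
    have hbdd : BddBelow (I k) := ⟨0, fun t ht => ht.1.le⟩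
    obtain ⟨a, haa, hal, ham⟩ := exists_seq_tendsto_sInf hne hbdd
    have hsub : E k ⊆ ⋃ i, {x | a i < v x} := by
      rintro x ⟨-, b, hb, hbx⟩
      obtain ⟨i, hi⟩ := (hal.eventually (gt_mem_nhds ((csInf_le hbdd hb).trans_lt hbx))).exists
      exact mem_iUnion.2 ⟨i, hi⟩
    refine (measure_mono hsub).trans ?_
    have hmon : Monotone fun i => {x | a i < v x} :=
      fun i j hij x hx => lt_of_le_of_lt (haa hij) hx
    rw [hmon.measure_iUnion]
    exact iSup_le fun i => (ham i).2.2
  set R : ℤ → ℝ≥0∞ := fun k => ∫⁻ x in E k, ENNReal.ofReal (g x) with hR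
  have hlen : ∀ k, ENNReal.ofReal ((2 ^ k : ℝ) ^ (1 - 1 / (n:ℝ))) * volume (I k) ≤ K * R k := by
    intro k
    have hp : ENNReal.ofReal ((2 ^ k : ℝ) ^ (1 - 1 / (n:ℝ))) ≠ 0 := by
      rw [Ne, ENNReal.ofReal_eq_zero, not_le]; positivity
    rw [← le_inv_mul_iff_ennreal hp ofReal_ne_top]
    refine (Real.volume_le_diam _).trans (Metric.ediam_le ?_)
    suffices H : ∀ a ∈ I k, ∀ b ∈ I k, a < b → edist a b ≤
        (ENNReal.ofReal ((2 ^ k : ℝ) ^ (1 - 1 / (n:ℝ))))⁻¹ * (K * R k) by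
      intro a ha b hb
      rcases lt_trichotomy a b with h | h | h
      · exact H a ha b hb h
      · simp [h]
      · rw [edist_comm]; exact H b hb a ha h
    intro a ha b hb hab
    rw [le_inv_mul_iff_ennreal hp ofReal_ne_top, edist_comm, edist_dist, Real.dist_eq,
      abs_of_pos (sub_pos.2 hab), mul_comm]
    calc _ ≤ ENNReal.ofReal (b - a) * volume {x | b ≤ v x} ^ (1 - 1 / (n:ℝ)) := by
          gcongr
          rw [← ENNReal.ofReal_rpow_of_pos (by positivity)]
          refine ENNReal.rpow_le_rpow (hb.2.1.le.trans (measure_mono fun x hx => ?_)) (by linarith)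
          exact (show b < v x from hx).le
      _ ≤ K * ∫⁻ x in {x | a < v x ∧ v x < b}, ENNReal.ofReal (g x) := hsl a b ha.1 hab
      _ ≤ K * R k := by
          gcongr
          refine lintegral_mono_set fun x hx => ⟨(hIo k).out ha hb ⟨hx.1.le, hx.2.le⟩, a, ha, hx.1⟩
  -- Reduction to the dyadic sum.
  have hstep1 : ∫⁻ τ in Ioi (0:ℝ), Φ (μ τ) ≤
      ∑' k : ℤ, Φ (ENNReal.ofReal (2 ^ (k + 1))) * volume (I k) := by
    calc _ ≤ ∫⁻ τ in Ioi (0:ℝ), ∑' k : ℤ,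
          (I k).indicator (fun _ => Φ (ENNReal.ofReal (2 ^ (k + 1)))) τ := by
          refine setLIntegral_mono' measurableSet_Ioi fun τ hτ => ?_
          rcases eq_or_ne (μ τ) 0 with h0 | h0
          · simp [h0, hΦ0]
          have hf := (hfin τ hτ).ne
          obtain ⟨k, hk1, hk2⟩ := exists_mem_Ioc_zpow (ENNReal.toReal_pos h0 hf)
            (y := (2:ℝ)) one_lt_two
          have hk : τ ∈ I k := by
            refine ⟨hτ, ?_, ?_⟩
            · exact (ENNReal.ofReal_lt_iff_lt_toReal (by positivity) hf).2 hk1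
            · exact (ENNReal.le_ofReal_iff_toReal_le hf (by positivity)).2 hk2
          refine le_trans ?_ (ENNReal.le_tsum k)
          rw [indicator_of_mem hk]
          exact hΦ hk.2.2
      _ ≤ ∫⁻ τ, ∑' k : ℤ, (I k).indicator (fun _ => Φ (ENNReal.ofReal (2 ^ (k + 1)))) τ :=
          setLIntegral_le_lintegral _ _
      _ = _ := by
          rw [lintegral_tsum (f := fun (k : ℤ) τ =>
            (I k).indicator (fun _ => Φ (ENNReal.ofReal (2 ^ (k + 1)))) τ) fun k =>
            (measurable_const.indicator (hIm k)).aemeasurable]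
          exact tsum_congr fun k => by rw [lintegral_indicator_const (hIm k)]
  have hcoef : ∀ k : ℤ, Φ (ENNReal.ofReal (2 ^ (k + 1))) * volume (I k) ≤
      2 * K * ((ENNReal.ofReal ((2:ℝ) ^ (k + 1)))⁻¹ *
        raise n Φ (ENNReal.ofReal (2 ^ (k + 1))) * R k) := by
    intro k
    set x : ℝ := 2 ^ (k + 1) with hx
    have hx0 : 0 < x := by positivity
    have hxk : (2:ℝ) ^ k = x / 2 := by rw [hx, zpow_add₀ two_ne_zero]; simp
    have hx0' : ENNReal.ofReal x ≠ 0 := by rw [Ne, ENNReal.ofReal_eq_zero, not_le]; exact hx0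
    have h1 : ENNReal.ofReal (x ^ ((1:ℝ) / n - 1)) * Φ (ENNReal.ofReal x) ≤
        (ENNReal.ofReal x)⁻¹ * raise n Φ (ENNReal.ofReal x) := by
      rw [le_inv_mul_iff_ennreal hx0' ofReal_ne_top, ← mul_assoc]
      simpa using le_raise (n := n) Φ (ENNReal.ofReal x) hx0
    have h2 : 1 ≤ 2 * (ENNReal.ofReal (x ^ ((1:ℝ) / n - 1)) *
        ENNReal.ofReal ((2 ^ k : ℝ) ^ (1 - 1 / (n:ℝ)))) := by
      rw [hxk, ← ENNReal.ofReal_mul (by positivity), show (2:ℝ≥0∞) = ENNReal.ofReal 2 by simp,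
        ← ENNReal.ofReal_mul (by positivity), ← ENNReal.ofReal_one]
      refine ENNReal.ofReal_le_ofReal ?_
      rw [Real.div_rpow hx0.le (by norm_num), ← mul_div_assoc, ← Real.rpow_add hx0,
        show (1:ℝ) / n - 1 + (1 - 1 / n) = 0 by ring, Real.rpow_zero, ← mul_div_assoc, mul_one,
        one_le_div (by positivity)]
      calc (2:ℝ) ^ (1 - 1 / (n:ℝ)) ≤ 2 ^ (1:ℝ) :=
            Real.rpow_le_rpow_of_exponent_le (by norm_num) (by
              have : 0 < 1 / (n:ℝ) := by positivity
              linarith)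
        _ = 2 := Real.rpow_one _
    calc _ ≤ (2 * (ENNReal.ofReal (x ^ ((1:ℝ) / n - 1)) *
          ENNReal.ofReal ((2 ^ k : ℝ) ^ (1 - 1 / (n:ℝ))))) *
            (Φ (ENNReal.ofReal x) * volume (I k)) := le_mul_of_one_le_left' h2
      _ = 2 * ((ENNReal.ofReal (x ^ ((1:ℝ) / n - 1)) * Φ (ENNReal.ofReal x)) *
          (ENNReal.ofReal ((2 ^ k : ℝ) ^ (1 - 1 / (n:ℝ))) * volume (I k))) := by ring
      _ ≤ 2 * (((ENNReal.ofReal x)⁻¹ * raise n Φ (ENNReal.ofReal x)) * (K * R k)) := by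
          exact mul_le_mul_right (mul_le_mul' h1 (hlen k)) _
      _ = _ := by ring
  have hcake : ∀ k, R k = ∫⁻ t in Ioi (0:ℝ), (volume.restrict (E k)) {x | t < g x} := fun k =>
    lintegral_eq_lintegral_meas_lt _ (Eventually.of_forall hg0) hg.restrict
  calc _ ≤ ∑' k : ℤ, 2 * K * ((ENNReal.ofReal ((2:ℝ) ^ (k + 1)))⁻¹ *
        raise n Φ (ENNReal.ofReal (2 ^ (k + 1))) * R k) :=
        hstep1.trans (ENNReal.tsum_le_tsum hcoef)
    _ = 2 * K * ∫⁻ t in Ioi (0:ℝ), ∑' k : ℤ, (ENNReal.ofReal ((2:ℝ) ^ (k + 1)))⁻¹ *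
        raise n Φ (ENNReal.ofReal (2 ^ (k + 1))) * (volume.restrict (E k)) {x | t < g x} := by
        rw [ENNReal.tsum_mul_left, lintegral_tsum (f := fun (k : ℤ) (t : ℝ) =>
          (ENNReal.ofReal ((2:ℝ) ^ (k + 1)))⁻¹ * raise n Φ (ENNReal.ofReal (2 ^ (k + 1))) *
            (volume.restrict (E k)) {x | t < g x}) fun k =>
          ((antitone_distrib _ g).measurable.const_mul _).aemeasurable]
        congr 1
        refine tsum_congr fun k => ?_
        rw [lintegral_const_mul _ (antitone_distrib _ g).measurable, hcake k]
    _ ≤ 2 * K * ∫⁻ t in Ioi (0:ℝ), (1 + geomConst n) * raise n Φ (volume {x | t < g x}) := by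
        gcongr 2 * K * ?_
        refine setLIntegral_mono' measurableSet_Ioi fun t ht => ?_
        refine tsum_raise_le hΦ (hgf t ht).ne (fun k => ?_) ?_
        · refine (measure_mono (subset_univ _)).trans ?_
          rw [Measure.restrict_apply_univ]
          exact hEv k
        · refine (Measure.le_sum_apply _ _).trans ?_
          rw [← Measure.restrict_iUnion_ae hdisj hEm]
          exact Measure.restrict_le_self _
    _ = _ := by
        have hme : Measurable fun t => raise n Φ (volume {x | t < g x}) :=
          (raise_mono n Φ).measurable.comp (antitone_distrib _ g).measurable
        rw [lintegral_const_mul _ hme]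
        ring

/-- The constant of the first-order estimate. -/
def stepConst (n : ℕ) : ℝ≥0∞ := 2 * truncConst n * (1 + geomConst n)

theorem stepConst_ne_top {n : ℕ} (hn : 2 ≤ n) : stepConst n ≠ ⊤ := by
  unfold stepConst
  have := truncConst_ne_top n
  have := geomConst_ne_top hn
  finiteness

/-- If the gauge is infinite at `⊤`, finiteness of the functional forces all superlevel sets to have
finite measure. -/
theorem distrib_lt_top_of_lam {n : ℕ} {g : Euc n → ℝ} {Ψ : ℝ≥0∞ → ℝ≥0∞} (hΨ : Ψ ⊤ = ⊤)
    (h : ∫⁻ τ in Ioi (0:ℝ), Ψ (volume {x | τ < g x}) < ⊤) {t : ℝ} (ht : 0 < t) :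
    volume {x | t < g x} < ⊤ := by
  by_contra hc
  rw [not_lt, top_le_iff] at hc
  refine absurd h (not_lt.2 ?_)
  calc (⊤:ℝ≥0∞) = ∫⁻ τ in Ioo 0 t, Ψ ⊤ := by
        simp [hΨ, ht]
    _ = ∫⁻ τ in Ioo 0 t, Ψ (volume {x | τ < g x}) := by
        refine setLIntegral_congr_fun measurableSet_Ioo fun τ hτ => ?_
        have : volume {x | τ < g x} = ⊤ :=
          top_le_iff.1 (hc ▸ antitone_distrib volume g hτ.2.le)
        simp only [this]
    _ ≤ _ := lintegral_mono_set Ioo_subset_Ioi_self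

/-- First-order Sobolev inequality between Lorentz spaces: the constant `c` does not depend on the
target weight `Φ`. -/
theorem first_order {n : ℕ} (hn : 2 ≤ n) {w : Euc n → ℝ} {d : Fin n → Euc n → ℝ}
    {g : Euc n → ℝ}
    (hw : LocallyIntegrable w volume) (hd : ∀ i, LocallyIntegrable (d i) volume)
    (h : ∀ i, WeakPartial w i (d i)) (hg : AEMeasurable g volume)
    (hdg : ∀ x, ∑ i, |d i x| ≤ g x)
    (hκ : Lam (fun s => min s (s ^ (1 / (n:ℝ)))) g < ⊤) :
    ∃ c : ℝ, ∀ Φ : ℝ≥0∞ → ℝ≥0∞, Monotone Φ → Φ 0 = 0 →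
      Lam Φ (fun x => w x - c) ≤ stepConst n * Lam (raise n Φ) g := by
  have hg0 : ∀ x, 0 ≤ g x := fun x => (Finset.sum_nonneg fun i _ => abs_nonneg _).trans (hdg x)
  have hga : ∀ x, |g x| = g x := fun x => abs_of_nonneg (hg0 x)
  unfold Lam at hκ ⊢
  simp only [hga] at hκ ⊢
  have hn0 : 0 < n := by omega
  obtain ⟨c, hc1, hc2⟩ := exists_const_trunc hn hw hd h hg hdg hκ
  refine ⟨c, fun Φ hΦ hΦ0 => ?_⟩
  exact lam_le_of_slices hn (hw.aestronglyMeasurable.aemeasurable.sub_const c).abs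
    hg hg0
    (fun t ht => distrib_lt_top_of_lam
      (Ψ := fun s => min s (s ^ (1 / (n:ℝ)))) (by simp [hn0, ENNReal.top_rpow_of_pos]) hκ ht) hc1 hc2 hΦ hΦ0

/-! ### Families of weak derivatives -/

/-- Iterated partial derivatives of a function, the directions being listed outermost first. -/
def partials {n : ℕ} : List (Fin n) → (Euc n → ℝ) → Euc n → ℝ
  | [], φ => φ
  | i :: l, φ => fun x => fderiv ℝ (partials l φ) x (EuclideanSpace.single i 1)

theorem contDiff_partial {n : ℕ} {φ : Euc n → ℝ} (hφ : ContDiff ℝ (⊤ : ℕ∞) φ) (e : Euc n) :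
    ContDiff ℝ (⊤ : ℕ∞) fun x => fderiv ℝ φ x e :=
  (hφ.fderiv_right (m := (⊤ : ℕ∞)) (by simp)).clm_apply contDiff_const

theorem contDiff_partials {n : ℕ} {φ : Euc n → ℝ} (hφ : ContDiff ℝ (⊤ : ℕ∞) φ)
    (l : List (Fin n)) : ContDiff ℝ (⊤ : ℕ∞) (partials l φ) := by
  induction l with
  | nil => exact hφ
  | cons i l ih => exact contDiff_partial ih _

theorem partials_perm {n : ℕ} {φ : Euc n → ℝ} (hφ : ContDiff ℝ (⊤ : ℕ∞) φ)
    {l l' : List (Fin n)} (h : l.Perm l') : partials l φ = partials l' φ := by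
  induction h with
  | nil => rfl
  | cons i _ ih => simp only [partials, ih]
  | swap i j l =>
    funext x
    have hs := contDiff_partials hφ l
    have hd : DifferentiableAt ℝ (fderiv ℝ (partials l φ)) x :=
      (hs.fderiv_right (m := (⊤ : ℕ∞)) (by simp)).differentiable (by simp) x
    have key : ∀ v w : Euc n, fderiv ℝ (fun y => fderiv ℝ (partials l φ) y v) x w =
        fderiv ℝ (fderiv ℝ (partials l φ)) x w v := fun v w => by
      rw [fderiv_clm_apply hd (differentiableAt_const v)]
      simp
    simp only [partials]
    rw [key, key]
    have h2 : minSmoothness ℝ 2 ≤ ((⊤ : ℕ∞) : WithTop ℕ∞) := by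
      simp only [minSmoothness_of_isRCLikeNormedField]
      exact WithTop.coe_le_coe.2 (le_top : (2 : ℕ∞) ≤ ⊤)
    exact (hs.contDiffAt.isSymmSndFDerivAt h2).eq _ _
  | trans _ _ ih1 ih2 => exact ih1.trans ih2

theorem partials_append {n : ℕ} (φ : Euc n → ℝ) (l : List (Fin n)) (i : Fin n) :
    partials (l ++ [i]) φ = partials l (fun x => fderiv ℝ φ x (EuclideanSpace.single i 1)) := by
  induction l with
  | nil => rfl
  | cons j l ih => simp only [List.cons_append, partials, ih]

theorem iteratedFDeriv_eq_partials {n : ℕ} {φ : Euc n → ℝ} (hφ : ContDiff ℝ (⊤ : ℕ∞) φ)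
    {k : ℕ} (a : Fin k → Fin n) (x : Euc n) :
    iteratedFDeriv ℝ k φ x (fun j => EuclideanSpace.single (a j) 1) =
      partials (List.ofFn a) φ x := by
  induction k generalizing x with
  | zero => simp [partials]
  | succ k ih =>
    have hd : DifferentiableAt ℝ (iteratedFDeriv ℝ k φ) x :=
      (hφ.differentiable_iteratedFDeriv (by exact_mod_cast WithTop.coe_lt_top k)) x
    rw [iteratedFDeriv_succ_apply_left, List.ofFn_succ, partials,
      ← fderiv_continuousMultilinear_apply_const_apply hd]
    congr 2
    funext y
    exact ih (fun j => a j.succ) y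

/-- A family of weak derivatives of order at most `k`, indexed by lists of directions: consecutive
members are weak partial derivatives of each other and the order of differentiation is
irrelevant. -/
structure Chain (n k : ℕ) (D : List (Fin n) → Euc n → ℝ) : Prop where
  loc : ∀ l, l.length ≤ k → LocallyIntegrable (D l) volume
  weak : ∀ l i, l.length < k → WeakPartial (D l) i (D (i :: l))
  symm : ∀ l l', l.Perm l' → l.length ≤ k → D l =ᵐ[volume] D l'

/-- The `ℓ¹`-norm of the derivatives of order `k` in a family indexed by lists. -/
def chainAbs (n k : ℕ) (D : List (Fin n) → Euc n → ℝ) (x : Euc n) : ℝ :=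
  ∑ a : Fin k → Fin n, |D (List.ofFn a) x|

/-- Weak derivatives defined by testing `u` against derivatives of order `k` are weak partial
derivatives of one another, and they are symmetric in the directions up to null sets. -/
theorem chain_of_hasWeakDerivs {n m : ℕ} {u : Euc n → ℝ}
    {D : ∀ k : ℕ, (Fin k → Fin n) → Euc n → ℝ} (h : HasWeakDerivs n m u D) :
    Chain n m (fun l => D l.length l.get) := by
  obtain ⟨hu, -, hloc, hw⟩ := h
  have hw' : ∀ l : List (Fin n), l.length ≤ m → ∀ φ : Euc n → ℝ, ContDiff ℝ (⊤ : ℕ∞) φ →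
      HasCompactSupport φ → ∫ x, u x * partials l φ x =
        (-1 : ℝ) ^ l.length * ∫ x, D l.length l.get x * φ x := by
    intro l hl φ hφ hφc
    rw [← hw _ hl _ φ hφ hφc]
    simp only [iteratedFDeriv_eq_partials hφ, List.ofFn_get]
  refine ⟨fun l hl => hloc _ _ hl, fun l i hl φ hφ hφc => ?_, fun l l' hp hl => ?_⟩
  · have h1 := hw' l hl.le _ (contDiff_partial hφ (EuclideanSpace.single i 1))
      (hφc.fderiv_apply (𝕜 := ℝ) _)
    have h2 := hw' (i :: l) hl φ hφ hφc
    rw [← partials_append, partials_perm hφ (List.perm_append_singleton i l), h2,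
      show (-1 : ℝ) ^ (i :: l).length = (-1) ^ l.length * -1 from pow_succ _ _] at h1
    have hne : (-1 : ℝ) ^ l.length ≠ 0 := by positivity
    refine (mul_left_cancel₀ hne ?_).symm
    rw [← h1]
    ring
  · refine ae_eq_of_integral_contDiff_smul_eq (hloc _ _ hl) (hloc _ _ (hp.length_eq ▸ hl))
      fun φ hφ hφc => ?_
    have h1 := hw' l hl φ hφ hφc
    have h2 := hw' l' (hp.length_eq ▸ hl) φ hφ hφc
    have hpow : (-1 : ℝ) ^ l.length = (-1) ^ l'.length := by rw [hp.length_eq]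
    rw [partials_perm hφ hp, h2, hpow] at h1
    have hne : (-1 : ℝ) ^ l'.length ≠ 0 := by positivity
    simp only [smul_eq_mul, mul_comm (φ _)]
    exact (mul_left_cancel₀ hne h1).symm

theorem chainAbs_eq_gradAbs (n m : ℕ) (D : ∀ k : ℕ, (Fin k → Fin n) → Euc n → ℝ) :
    chainAbs n m (fun l => D l.length l.get) = gradAbs n m D := by
  funext x
  refine Finset.sum_congr rfl fun a _ => ?_
  have : ∀ (k : ℕ) (b : Fin k → Fin n) (hk : k = m), (∀ j : Fin k, b j = a (Fin.cast hk j)) →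
      D k b = D m a := by
    rintro k b rfl hb
    congr 1
    funext j
    exact hb j
  simp only
  rw [this _ _ (List.length_ofFn) fun j => by simp; rfl]

/-! ### Polynomials with prescribed derivatives -/

theorem polyEval_add {n : ℕ} (P Q : MvPolynomial (Fin n) ℝ) (x : Euc n) :
    polyEval (P + Q) x = polyEval P x + polyEval Q x := by
  simp [polyEval]

theorem hasFDerivAt_polyEval {n : ℕ} (P : MvPolynomial (Fin n) ℝ) (x : Euc n) :
    HasFDerivAt (polyEval P)
      (∑ i, polyEval (MvPolynomial.pderiv i P) x • (EuclideanSpace.proj i : Euc n →L[ℝ] ℝ)) x := by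
  induction P using MvPolynomial.induction_on with
  | C a =>
    have : polyEval (n := n) (MvPolynomial.C a) = fun _ => a := by funext y; simp [polyEval]
    rw [this]
    refine (hasFDerivAt_const a x).congr_fderiv ?_
    simp [polyEval]
  | add p q hp hq =>
    have : polyEval (p + q) = polyEval p + polyEval q := by funext y; simp [polyEval]
    rw [this]
    refine (hp.add hq).congr_fderiv ?_
    simp only [map_add, polyEval_add, add_smul, Finset.sum_add_distrib]
  | mul_X p j hp =>
    have : polyEval (p * MvPolynomial.X j) = fun y => polyEval p y * y j := by
      funext y; simp [polyEval]
    rw [this]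
    have hj : HasFDerivAt (fun y : Euc n => y j) (EuclideanSpace.proj j : Euc n →L[ℝ] ℝ) x :=
      (EuclideanSpace.proj j : Euc n →L[ℝ] ℝ).hasFDerivAt
    refine (hp.mul hj).congr_fderiv (Eq.symm ?_)
    have h1 : ∀ i, polyEval (MvPolynomial.pderiv i (p * MvPolynomial.X j)) x =
        polyEval (MvPolynomial.pderiv i p) x * x j + if i = j then polyEval p x else 0 := by
      intro i
      rw [MvPolynomial.pderiv_mul, polyEval_add, MvPolynomial.pderiv_X]
      congr 1
      · simp [polyEval]
      · by_cases h : i = j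
        · subst h; simp [polyEval]
        · simp [polyEval, h, Ne.symm h]
    simp only [h1, add_smul, Finset.sum_add_distrib, ite_smul, zero_smul, Finset.sum_ite_eq',
      Finset.mem_univ, if_true, Finset.smul_sum, smul_smul]
    rw [add_comm]
    congr 1
    exact Finset.sum_congr rfl fun i _ => by rw [mul_comm]

theorem continuous_polyEval {n : ℕ} (P : MvPolynomial (Fin n) ℝ) :
    Continuous (polyEval (n := n) P) :=
  continuous_iff_continuousAt.2 fun x => (hasFDerivAt_polyEval P x).continuousAt

theorem weakPartial_polyEval {n : ℕ} (P : MvPolynomial (Fin n) ℝ) (i : Fin n) :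
    WeakPartial (polyEval (n := n) P) i (polyEval (MvPolynomial.pderiv i P)) := by
  intro φ hφ hφc
  have hd : ∀ x, fderiv ℝ (polyEval P) x (EuclideanSpace.single i 1) =
      polyEval (MvPolynomial.pderiv i P) x := fun x => by
    rw [(hasFDerivAt_polyEval P x).fderiv]
    simp
  have hφ' : Continuous fun x => fderiv ℝ φ x (EuclideanSpace.single i 1) :=
    (contDiff_partial hφ _).continuous
  have := integral_mul_fderiv_eq_neg_fderiv_mul_of_integrable (μ := volume) (f := polyEval P)
    (g := φ) (v := EuclideanSpace.single i (1:ℝ)) ?_ ?_ ?_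
    (fun x _ => (hasFDerivAt_polyEval P x).differentiableAt)
    (fun x _ => hφ.differentiable (by simp) x)
  · simpa only [hd] using this
  · simp only [hd]
    exact ((continuous_polyEval _).mul hφ.continuous).integrable_of_hasCompactSupport hφc.mul_left
  · exact ((continuous_polyEval _).mul hφ').integrable_of_hasCompactSupport
      (hφc.fderiv_apply (𝕜 := ℝ) _).mul_left
  · exact ((continuous_polyEval _).mul hφ.continuous).integrable_of_hasCompactSupport hφc.mul_left

/-- Iterated partial derivatives of a polynomial, the directions being listed outermost first. -/
def polyPartials {n : ℕ} : List (Fin n) → MvPolynomial (Fin n) ℝ → MvPolynomial (Fin n) ℝ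
  | [], Q => Q
  | i :: l, Q => MvPolynomial.pderiv i (polyPartials l Q)

theorem polyPartials_sum {n : ℕ} {ι : Type*} (l : List (Fin n)) (s : Finset ι)
    (Q : ι → MvPolynomial (Fin n) ℝ) :
    polyPartials l (∑ i ∈ s, Q i) = ∑ i ∈ s, polyPartials l (Q i) := by
  induction l with
  | nil => rfl
  | cons j l ih => simp [polyPartials, ih]

theorem polyPartials_C_mul {n : ℕ} (l : List (Fin n)) (a : ℝ) (Q : MvPolynomial (Fin n) ℝ) :
    polyPartials l (MvPolynomial.C a * Q) = MvPolynomial.C a * polyPartials l Q := by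
  induction l with
  | nil => rfl
  | cons j l ih => simp [polyPartials, ih]

/-- The multi-index counting the occurrences of each direction in a list. -/
def listCount {n : ℕ} (l : List (Fin n)) : Fin n →₀ ℕ := Multiset.toFinsupp (l : Multiset (Fin n))

theorem listCount_cons {n : ℕ} (i : Fin n) (l : List (Fin n)) :
    listCount (i :: l) = listCount l + Finsupp.single i 1 := by
  unfold listCount
  rw [← Multiset.cons_coe, ← Multiset.singleton_add, map_add, Multiset.toFinsupp_singleton, add_comm]

/-- The divided power `x^s / s!`. -/
def dividedMonomial {n : ℕ} (s : Fin n →₀ ℕ) : MvPolynomial (Fin n) ℝ :=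
  MvPolynomial.monomial s (∏ i, ((s i).factorial : ℝ))⁻¹

theorem pderiv_dividedMonomial_add {n : ℕ} (s : Fin n →₀ ℕ) (i : Fin n) :
    MvPolynomial.pderiv i (dividedMonomial (s + Finsupp.single i 1)) = dividedMonomial s := by
  unfold dividedMonomial
  rw [MvPolynomial.pderiv_monomial, add_tsub_cancel_right]
  congr 1
  rw [← Finset.mul_prod_erase _ _ (Finset.mem_univ i), ← Finset.mul_prod_erase _ _ (Finset.mem_univ i)]
  have : ∏ x ∈ Finset.univ.erase i, (((s + Finsupp.single i 1 : Fin n →₀ ℕ) x).factorial : ℝ) =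
      ∏ x ∈ Finset.univ.erase i, ((s x).factorial : ℝ) := by
    refine Finset.prod_congr rfl fun x hx => ?_
    rw [Finsupp.add_apply, Finsupp.single_eq_of_ne (Finset.ne_of_mem_erase hx), add_zero]
  rw [this, Finsupp.add_apply, Finsupp.single_eq_same, Nat.factorial_succ]
  push_cast
  have h1 : ((s i).factorial : ℝ) ≠ 0 := by positivity
  have h2 : (s i : ℝ) + 1 ≠ 0 := by positivity
  field_simp

theorem polyPartials_dividedMonomial {n : ℕ} (l : List (Fin n)) (s : Fin n →₀ ℕ) :
    polyPartials l (dividedMonomial s) =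
      if listCount l ≤ s then dividedMonomial (s - listCount l) else 0 := by
  induction l with
  | nil => simp [polyPartials, listCount]
  | cons i l ih =>
    rw [polyPartials, ih, listCount_cons]
    by_cases h : listCount l + Finsupp.single i 1 ≤ s
    · rw [if_pos h, if_pos (le_trans le_self_add h)]
      obtain ⟨r, rfl⟩ := exists_add_of_le h
      rw [add_tsub_cancel_left, show listCount l + Finsupp.single i 1 + r - listCount l =
        r + Finsupp.single i 1 by rw [add_assoc, add_tsub_cancel_left, add_comm],
        pderiv_dividedMonomial_add]
    · rw [if_neg h]
      by_cases h' : listCount l ≤ s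
      · rw [if_pos h']
        obtain ⟨r, rfl⟩ := exists_add_of_le h'
        rw [add_tsub_cancel_left]
        have hr : r i = 0 := by
          by_contra hr
          refine h (add_le_add_right ?_ _)
          rw [Finsupp.single_le_iff]; omega
        unfold dividedMonomial
        rw [MvPolynomial.pderiv_monomial, hr]
        simp
      · rw [if_neg h', map_zero]

/-- Any prescription of constant values, symmetric in the directions, is realised by the partial
derivatives of order `k` of a polynomial of degree at most `k`. -/
theorem exists_poly_partials {n : ℕ} (k : ℕ) (c : List (Fin n) → ℝ)
    (hc : ∀ l l', l.Perm l' → l.length = k → c l = c l') :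
    ∃ Q : MvPolynomial (Fin n) ℝ, Q.totalDegree ≤ k ∧
      ∀ l, l.length = k → polyPartials l Q = MvPolynomial.C (c l) := by
  classical
  set S : Finset (Fin n →₀ ℕ) := Finset.univ.image fun a : Fin k → Fin n => listCount (List.ofFn a)
  set c' : (Fin n →₀ ℕ) → ℝ := fun s => c (Finsupp.toMultiset s).toList with hc'
  have hcc : ∀ l, l.length = k → c' (listCount l) = c l := fun l hl => by
    refine (hc _ _ ?_ hl).symm
    rw [← Multiset.coe_eq_coe]
    simp [listCount]
  have hdeg : ∀ l : List (Fin n), (listCount l).degree = l.length := fun l => by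
    induction l with
    | nil => simp [listCount]
    | cons i l ih => rw [listCount_cons, map_add, ih]; simp
  refine ⟨∑ s ∈ S, MvPolynomial.C (c' s) * dividedMonomial s, ?_, fun l hl => ?_⟩
  · refine MvPolynomial.totalDegree_finsetSum_le fun s hs => ?_
    obtain ⟨a, -, rfl⟩ := Finset.mem_image.1 hs
    unfold dividedMonomial
    rw [MvPolynomial.C_mul_monomial]
    refine (MvPolynomial.totalDegree_monomial_le _ _).trans (le_of_eq ?_)
    have := hdeg (List.ofFn a)
    rw [List.length_ofFn] at this
    simpa [Finsupp.degree_apply, Finsupp.sum] using this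
  · rw [polyPartials_sum, Finset.sum_eq_single (listCount l)]
    · rw [polyPartials_C_mul, polyPartials_dividedMonomial, if_pos le_rfl, tsub_self, hcc l hl]
      simp [dividedMonomial]
    · intro s hs hne
      obtain ⟨a, -, rfl⟩ := Finset.mem_image.1 hs
      rw [polyPartials_C_mul, polyPartials_dividedMonomial, if_neg, mul_zero]
      intro hle
      obtain ⟨r, hr⟩ := exists_add_of_le hle
      have h1 := congrArg Finsupp.degree hr
      rw [map_add, hdeg, hdeg, List.length_ofFn, hl] at h1
      have h2 : r = 0 := (Finsupp.degree_eq_zero_iff r).1 (by omega)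
      rw [h2, add_zero] at hr
      exact hne hr
    · intro hn
      refine absurd (Finset.mem_image.2 ⟨fun j => l.get (Fin.cast hl.symm j), Finset.mem_univ _, ?_⟩) hn
      congr 1
      subst hl
      simp

/-! ### Inequality of higher order -/

theorem pderiv_pderiv_comm {n : ℕ} (i j : Fin n) (p : MvPolynomial (Fin n) ℝ) :
    MvPolynomial.pderiv i (MvPolynomial.pderiv j p) =
      MvPolynomial.pderiv j (MvPolynomial.pderiv i p) := by
  induction p using MvPolynomial.induction_on with
  | C a => simp
  | add p q hp hq => simp only [map_add, hp, hq]
  | mul_X p k hp =>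
    have hX : ∀ a b : Fin n, MvPolynomial.pderiv a
        (MvPolynomial.pderiv b (MvPolynomial.X k : MvPolynomial (Fin n) ℝ)) = 0 := fun a b => by
      rw [MvPolynomial.pderiv_X]
      by_cases h : b = k
      · subst h; simp
      · simp [Ne.symm h]
    simp only [MvPolynomial.pderiv_mul, map_add, hp, hX]
    ring

theorem polyPartials_perm {n : ℕ} (Q : MvPolynomial (Fin n) ℝ) {l l' : List (Fin n)}
    (h : l.Perm l') : polyPartials l Q = polyPartials l' Q := by
  induction h with
  | nil => rfl
  | cons i _ ih => simp only [polyPartials, ih]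
  | swap i j l => simp only [polyPartials]; exact pderiv_pderiv_comm _ _ _
  | trans _ _ ih1 ih2 => exact ih1.trans ih2

/-- Subtracting the derivatives of a polynomial from a family of weak derivatives. -/
theorem chain_sub_poly {n k : ℕ} {D : List (Fin n) → Euc n → ℝ} (hD : Chain n k D)
    (Q : MvPolynomial (Fin n) ℝ) :
    Chain n k (fun l x => D l x - polyEval (polyPartials l Q) x) := by
  have hint : ∀ {f φ : Euc n → ℝ}, LocallyIntegrable f volume → Continuous φ →
      HasCompactSupport φ → Integrable (fun x => f x * φ x) volume := fun hf hφ hφc => by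
    simpa [mul_comm] using hf.integrable_smul_left_of_hasCompactSupport hφ hφc
  refine ⟨fun l hl => (hD.loc l hl).sub (continuous_polyEval _).locallyIntegrable,
    fun l i hl φ hφ hφc => ?_, fun l l' hp hl => ?_⟩
  · have h1 := hD.weak l i hl φ hφ hφc
    have h2 := weakPartial_polyEval (polyPartials l Q) i φ hφ hφc
    have hφ' : Continuous fun x => fderiv ℝ φ x (EuclideanSpace.single i 1) :=
      (contDiff_partial hφ _).continuous
    have hφc' : HasCompactSupport fun x => fderiv ℝ φ x (EuclideanSpace.single i 1) :=
      hφc.fderiv_apply (𝕜 := ℝ) _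
    simp only [sub_mul]
    rw [integral_sub (hint (hD.loc l hl.le) hφ' hφc')
        (hint (continuous_polyEval _).locallyIntegrable hφ' hφc'),
      integral_sub (hint (hD.loc (i :: l) hl) hφ.continuous hφc)
        (hint (continuous_polyEval _).locallyIntegrable hφ.continuous hφc), h1, h2]
    simp only [polyPartials]
    ring
  · filter_upwards [hD.symm l l' hp hl] with x hx
    rw [hx, polyPartials_perm Q hp]

/-- Nondecreasing gauges vanishing at the origin, with `Φ(Mx) ≤ M Φ(x)` for natural `M`. -/
structure Gauge (Φ : ℝ≥0∞ → ℝ≥0∞) : Prop where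
  mono : Monotone Φ
  zero : Φ 0 = 0
  lin : ∀ (M : ℕ) (x : ℝ≥0∞), Φ (M * x) ≤ M * Φ x

theorem gauge_raise (n : ℕ) (Φ : ℝ≥0∞ → ℝ≥0∞) : Gauge (raise n Φ) := by
  refine ⟨raise_mono n Φ, raise_zero n Φ, fun M x => ?_⟩
  rcases Nat.eq_zero_or_pos M with rfl | hM
  · simp [raise_zero]
  unfold raise
  simp only [ENNReal.mul_iSup]
  refine iSup₂_mono fun s hs => ?_
  rw [← mul_assoc, ← mul_assoc]
  refine mul_le_mul_left (mul_le_mul_left ?_ _) _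
  rw [mul_min]
  refine min_le_min le_rfl ?_
  have : (1 : ℝ≥0∞) ≤ M := by exact_mod_cast hM
  exact le_mul_of_one_le_left zero_le this

theorem gauge_iterate (n : ℕ) {Φ : ℝ≥0∞ → ℝ≥0∞} (h : Gauge Φ) (k : ℕ) :
    Gauge ((raise n)^[k] Φ) := by
  cases k with
  | zero => exact h
  | succ k => rw [Function.iterate_succ_apply']; exact gauge_raise n _

/-- The gauge `min(x, x^{1/n})` of the finiteness hypothesis in `first_order` lies below every raised
gauge, up to normalisation. -/
theorem kappa_le_raise {n : ℕ} (hn : 2 ≤ n) {Φ : ℝ≥0∞ → ℝ≥0∞} (hΦ : Monotone Φ) (h1 : 1 ≤ Φ 1)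
    (x : ℝ≥0∞) : min x (x ^ (1 / (n:ℝ))) ≤ raise n Φ x := by
  have hn0 : (0:ℝ) < 1 / (n:ℝ) := by positivity
  have key : ∀ s : ℝ, 1 ≤ s → ENNReal.ofReal s ≤ x →
      ENNReal.ofReal s ^ (1 / (n:ℝ)) ≤ raise n Φ x := fun s hs hsx => by
    have hs0 : 0 < s := by linarith
    refine le_trans ?_ (le_raise Φ x hs0)
    have h2 : 1 ≤ Φ (ENNReal.ofReal s) :=
      h1.trans (hΦ (by rw [← ENNReal.ofReal_one]; exact ENNReal.ofReal_le_ofReal hs))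
    refine le_trans ?_ (mul_le_mul_right h2 _)
    rw [mul_one, min_eq_right hsx, ← ENNReal.ofReal_mul hs0.le, ENNReal.ofReal_rpow_of_pos hs0]
    refine ENNReal.ofReal_le_ofReal (le_of_eq ?_)
    rw [Real.rpow_sub hs0, Real.rpow_one]
    field_simp
  rcases le_total x 1 with hx | hx
  · refine (min_le_left _ _).trans (le_trans ?_ (le_raise Φ x one_pos))
    simp only [ENNReal.ofReal_one, Real.one_rpow, mul_one, min_eq_left hx]
    exact le_mul_of_one_le_right zero_le h1
  refine (min_le_right _ _).trans ?_
  rcases eq_or_ne x ⊤ with rfl | hxt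
  · have hlim : Tendsto (fun s : ℝ => ENNReal.ofReal s ^ (1 / (n:ℝ))) atTop (𝓝 (⊤ ^ (1 / (n:ℝ)))) :=
      (ENNReal.continuous_rpow_const.tendsto _).comp ENNReal.tendsto_ofReal_atTop
    refine le_of_tendsto hlim ?_
    filter_upwards [eventually_ge_atTop (1:ℝ)] with s hs using key s hs le_top
  · have h := key x.toReal (by
      rw [← ENNReal.toReal_one]; exact ENNReal.toReal_mono hxt hx) (by rw [ENNReal.ofReal_toReal hxt])
    rwa [ENNReal.ofReal_toReal hxt] at h

theorem one_le_iterate {n : ℕ} (hn : 2 ≤ n) (k : ℕ) :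
    1 ≤ ((raise n)^[k] (fun s => min 1 s)) 1 := by
  induction k with
  | zero => simp
  | succ k ih =>
    rw [Function.iterate_succ_apply']
    refine le_trans (by simp) (kappa_le_raise hn (gauge_iterate n ?_ k).mono ih 1)
    refine ⟨fun a b h => min_le_min le_rfl h, by simp, fun M x => ?_⟩
    rcases Nat.eq_zero_or_pos M with rfl | hM
    · simp
    rw [mul_min, mul_one]
    exact min_le_min (by exact_mod_cast hM) le_rfl

theorem gauge_min_one : Gauge (fun s => min 1 s) := by
  refine ⟨fun a b h => min_le_min le_rfl h, by simp, fun M x => ?_⟩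
  rcases Nat.eq_zero_or_pos M with rfl | hM
  · simp
  rw [mul_min, mul_one]
  exact min_le_min (by exact_mod_cast hM) le_rfl

theorem lam_congr_ae {n : ℕ} (Φ : ℝ≥0∞ → ℝ≥0∞) {w w' : Euc n → ℝ} (h : w =ᵐ[volume] w') :
    Lam Φ w = Lam Φ w' := by
  unfold Lam
  refine lintegral_congr fun τ => ?_
  congr 1
  refine measure_congr ?_
  filter_upwards [h] with x hx
  change (τ < |w x|) = (τ < |w' x|)
  rw [hx]

theorem lintegral_Ioi_div (f : ℝ → ℝ≥0∞) {M : ℝ} (hM : 0 < M) :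
    ∫⁻ τ in Ioi (0:ℝ), f (τ / M) = ENNReal.ofReal M * ∫⁻ τ in Ioi (0:ℝ), f τ := by
  have h := lintegral_image_eq_lintegral_abs_deriv_mul (s := Ioi (0:ℝ)) (f := fun τ => τ * M)
    (f' := fun _ => M) measurableSet_Ioi
    (fun x _ => by simpa using ((hasDerivAt_id x).mul_const M).hasDerivWithinAt)
    (fun x _ y _ hxy => mul_right_cancel₀ hM.ne' hxy) (fun τ => f (τ / M))
  have him : (fun τ => τ * M) '' Ioi (0:ℝ) = Ioi 0 := by
    ext y
    simp only [mem_image, mem_Ioi]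
    exact ⟨by rintro ⟨x, hx, rfl⟩; positivity, fun hy => ⟨y / M, by positivity, by field_simp⟩⟩
  rw [him] at h
  rw [h, ← lintegral_const_mul' _ _ ENNReal.ofReal_ne_top]
  refine lintegral_congr fun τ => ?_
  rw [abs_of_pos hM, mul_div_cancel_right₀ _ hM.ne']

/-- A crude triangle inequality for the functional `Lam Φ`, with a constant depending only on the
number of summands. -/
theorem lam_sum_le {n : ℕ} {ι : Type*} [Fintype ι] [Nonempty ι] {Φ : ℝ≥0∞ → ℝ≥0∞} (hΦ : Gauge Φ)
    (w : ι → Euc n → ℝ) {B : ℝ≥0∞} (hB : ∀ a, Lam Φ (w a) ≤ B) :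
    Lam Φ (fun x => ∑ a, |w a x|) ≤ (Fintype.card ι : ℝ≥0∞) ^ 3 * B := by
  set M : ℕ := Fintype.card ι with hM
  have hM0 : 0 < M := Fintype.card_pos
  have hMr : (0:ℝ) < M := by exact_mod_cast hM0
  have h1 : ∀ x : ι → ℝ≥0∞, Φ (∑ a, x a) ≤ M * ∑ a, Φ (x a) := fun x => by
    obtain ⟨b, -, hb⟩ := Finset.exists_max_image Finset.univ x Finset.univ_nonempty
    calc Φ (∑ a, x a) ≤ Φ (M * x b) := hΦ.mono (by
          refine (Finset.sum_le_card_nsmul _ _ (x b) fun a ha => hb a ha).trans (le_of_eq ?_)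
          rw [nsmul_eq_mul, Finset.card_univ])
      _ ≤ M * Φ (x b) := hΦ.lin _ _
      _ ≤ _ := mul_le_mul_right
          (Finset.single_le_sum (f := fun a => Φ (x a)) (fun _ _ => zero_le) (Finset.mem_univ b)) _
  have h2 : ∀ τ : ℝ, volume {x | τ < |∑ a, (|w a x|)|} ≤ ∑ a, volume {x | τ / M < |w a x|} :=
    fun τ => by
    refine le_trans (measure_mono ?_) (measure_iUnion_fintype_le _ _)
    intro x hx
    rw [mem_ofPred_eq, abs_of_nonneg (Finset.sum_nonneg fun _ _ => abs_nonneg _)] at hx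
    by_contra hcon
    simp only [mem_iUnion, mem_ofPred_eq, not_exists, not_lt] at hcon
    have : ∑ a, |w a x| ≤ τ := by
      refine (Finset.sum_le_card_nsmul _ _ _ fun a _ => hcon a).trans (le_of_eq ?_)
      rw [nsmul_eq_mul, Finset.card_univ, ← hM]; field_simp
    linarith
  have hmeas : ∀ a, Measurable fun τ : ℝ => Φ (volume {x | τ / M < |w a x|}) := fun a =>
    Antitone.measurable fun s t hst => hΦ.mono (measure_mono fun x hx =>
      lt_of_le_of_lt (div_le_div_of_nonneg_right hst hMr.le) hx)
  unfold Lam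
  calc _ ≤ ∫⁻ τ in Ioi (0:ℝ), M * ∑ a, Φ (volume {x | τ / M < |w a x|}) :=
        lintegral_mono fun τ => (hΦ.mono (h2 τ)).trans (h1 _)
    _ = M * ∑ a, ∫⁻ τ in Ioi (0:ℝ), Φ (volume {x | τ / M < |w a x|}) := by
        rw [lintegral_const_mul' _ _ (ENNReal.natCast_ne_top M),
          lintegral_finsetSum _ fun a _ => hmeas a]
    _ ≤ M * ∑ a : ι, M * B := by
        refine mul_le_mul_right (Finset.sum_le_sum fun a _ => ?_) _
        rw [lintegral_Ioi_div (fun τ => Φ (volume {x | τ < |w a x|})) hMr, ENNReal.ofReal_natCast]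
        exact mul_le_mul_right (hB a) _
    _ = _ := by
        rw [Finset.sum_const, nsmul_eq_mul, Finset.card_univ]; ring

/-- The constant accumulated after `k` applications of the first-order inequality. -/
def chainConst (n : ℕ) : ℕ → ℝ≥0∞
  | 0 => 1
  | k + 1 => chainConst n k * (((n ^ k : ℕ) : ℝ≥0∞) ^ 3 * stepConst n)

theorem chainConst_ne_top {n : ℕ} (hn : 2 ≤ n) (k : ℕ) : chainConst n k ≠ ⊤ := by
  induction k with
  | zero => simp [chainConst]
  | succ k ih =>
    exact ENNReal.mul_ne_top ih (ENNReal.mul_ne_top (ENNReal.pow_ne_top (ENNReal.natCast_ne_top _))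
      (stepConst_ne_top hn))

/-- Iteration of the first-order inequality: at each stage the constants subtracted from the
derivatives of order `k` are the derivatives of a polynomial, because they depend only on the
almost everywhere class of the derivative and hence are symmetric in the directions. -/
theorem higher_order {n : ℕ} (hn : 2 ≤ n) (k : ℕ) : ∀ {D : List (Fin n) → Euc n → ℝ},
    Chain n k D → Lam ((raise n)^[k] fun s => min 1 s) (chainAbs n k D) < ⊤ →
    ∃ P : MvPolynomial (Fin n) ℝ, P.totalDegree ≤ k - 1 ∧ ∀ Φ : ℝ≥0∞ → ℝ≥0∞, Gauge Φ →
      Lam Φ (fun x => D [] x - polyEval P x) ≤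
        chainConst n k * Lam ((raise n)^[k] Φ) (chainAbs n k D) := by
  induction k with
  | zero =>
    intro D _ _
    refine ⟨0, by simp, fun Φ _ => le_of_eq ?_⟩
    simp [chainConst, Lam, chainAbs, polyEval]
  | succ k ih =>
    intro D hD hfin
    rw [Function.iterate_succ_apply'] at hfin
    set g := chainAbs n (k + 1) D with hg
    set B := (raise n)^[k] fun s => min 1 s with hBdef
    have hB : Gauge B := gauge_iterate n gauge_min_one k
    have : Nonempty (Fin n) := ⟨⟨0, by omega⟩⟩
    have hgm : AEMeasurable g volume := by
      rw [hg]; unfold chainAbs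
      refine Finset.aemeasurable_fun_sum _ fun a _ => ?_
      have := (hD.loc (List.ofFn a) (by simp)).aestronglyMeasurable.aemeasurable
      exact (continuous_abs.measurable).comp_aemeasurable this
    have hκ : Lam (fun s => min s (s ^ (1 / (n:ℝ)))) g < ⊤ :=
      lt_of_le_of_lt (lintegral_mono fun τ => kappa_le_raise hn hB.mono (one_le_iterate hn k) _) hfin
    have hex : ∀ l : List (Fin n), l.length = k → ∃ c : ℝ, ∀ Φ : ℝ≥0∞ → ℝ≥0∞, Gauge Φ →
        Lam Φ (fun x => D l x - c) ≤ stepConst n * Lam (raise n Φ) g := by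
      intro l hl
      have hdg : ∀ x, ∑ i, |D (i :: l) x| ≤ g x := fun x => by
        subst hl
        rw [hg]; unfold chainAbs
        have hinj : Function.Injective fun i : Fin n => (Fin.cons i l.get : Fin (l.length + 1) → Fin n) :=
          fun i j hij => by simpa using congrFun hij 0
        have heq : ∀ i, List.ofFn (Fin.cons i l.get : Fin (l.length + 1) → Fin n) = i :: l := fun i => by
          rw [List.ofFn_succ]; simp
        calc ∑ i, |D (i :: l) x| = ∑ i, |D (List.ofFn
              (Fin.cons i l.get : Fin (l.length + 1) → Fin n)) x| := by simp only [heq]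
          _ = ∑ a ∈ Finset.univ.image (fun i : Fin n =>
              (Fin.cons i l.get : Fin (l.length + 1) → Fin n)), |D (List.ofFn a) x| :=
              (Finset.sum_image (f := fun a : Fin (l.length + 1) → Fin n =>
                |D (List.ofFn a) x|) fun i _ j _ h => hinj h).symm
          _ ≤ _ := Finset.sum_le_sum_of_subset_of_nonneg (Finset.subset_univ _)
              fun _ _ _ => abs_nonneg _
      obtain ⟨c, hc⟩ := first_order hn (w := D l) (d := fun i => D (i :: l)) (g := g)
        (hD.loc l (by omega)) (fun i => hD.loc _ (by simp; omega)) (fun i => hD.weak l i (by omega))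
        hgm hdg hκ
      exact ⟨c, fun Φ hΦ => hc Φ hΦ.mono hΦ.zero⟩
    set Pred : List (Fin n) → ℝ → Prop := fun l c => ∀ Φ : ℝ≥0∞ → ℝ≥0∞, Gauge Φ →
        Lam Φ (fun x => D l x - c) ≤ stepConst n * Lam (raise n Φ) g with hPred
    have hsymm : ∀ l l' : List (Fin n), l.Perm l' → l.length = k → Pred l = Pred l' := by
      intro l l' hp hl
      funext c
      simp only [hPred]
      have : ∀ Φ, Lam Φ (fun x => D l x - c) = Lam Φ (fun x => D l' x - c) := fun Φ =>
        lam_congr_ae Φ (by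
          filter_upwards [hD.symm l l' hp (by omega)] with x hx
          rw [hx])
      simp only [this]
    -- `Classical.epsilon` makes the constant a function of the predicate alone, hence symmetric in
    -- the directions.
    obtain ⟨Q, hQdeg, hQ⟩ := exists_poly_partials k (fun l => Classical.epsilon (Pred l))
      fun l l' hp hl => by simp only [hsymm l l' hp hl]
    have hstep : ∀ Φ : ℝ≥0∞ → ℝ≥0∞, Gauge Φ →
        Lam Φ (chainAbs n k fun l x => D l x - polyEval (polyPartials l Q) x) ≤
          ((n ^ k : ℕ) : ℝ≥0∞) ^ 3 * (stepConst n * Lam (raise n Φ) g) := by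
      intro Φ hΦ
      have := lam_sum_le hΦ (fun (a : Fin k → Fin n) x =>
        D (List.ofFn a) x - polyEval (polyPartials (List.ofFn a) Q) x)
        (B := stepConst n * Lam (raise n Φ) g) fun a => ?_
      · rw [Fintype.card_fun, Fintype.card_fin, Fintype.card_fin] at this
        exact this
      · have he := Classical.epsilon_spec (hex (List.ofFn a) (by simp)) Φ hΦ
        rw [hQ _ (by simp)]
        simpa [polyEval, hPred] using he
    have hDk : Chain n k D := ⟨fun l hl => hD.loc l (by omega), fun l i hl => hD.weak l i (by omega),
      fun l l' hp hl => hD.symm l l' hp (by omega)⟩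
    obtain ⟨P, hPdeg, hP⟩ := ih (chain_sub_poly hDk Q) (lt_of_le_of_lt (hstep B hB)
      (ENNReal.mul_lt_top (ENNReal.pow_lt_top (ENNReal.natCast_lt_top _))
        (ENNReal.mul_lt_top (stepConst_ne_top hn).lt_top hfin)))
    refine ⟨P + Q, (MvPolynomial.totalDegree_add _ _).trans (max_le (by omega) (by omega)),
      fun Φ hΦ => ?_⟩
    have h1 := hP Φ hΦ
    have h2 : (fun x => D [] x - polyEval (polyPartials [] Q) x - polyEval P x) =
        fun x => D [] x - polyEval (P + Q) x := by
      funext x; rw [polyEval_add]; simp only [polyPartials]; ring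
    simp only [h2] at h1
    refine h1.trans ?_
    rw [Function.iterate_succ_apply', chainConst, mul_assoc]
    refine mul_le_mul_right ?_ _
    rw [mul_assoc]
    exact hstep _ (gauge_iterate n hΦ k)

/-! ### Rearrangements and finiteness of the base functional -/

/-- The operator of order `j` corresponding to `raise`: `Φ ↦ sup_{s>0} min(x, s) s^{j/n-1} Φ(s)`. -/
def raiseJ (n j : ℕ) (Φ : ℝ≥0∞ → ℝ≥0∞) (x : ℝ≥0∞) : ℝ≥0∞ :=
  ⨆ (s : ℝ) (_ : 0 < s), min x (ENNReal.ofReal s) * ENNReal.ofReal (s ^ ((j:ℝ) / n - 1)) *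
    Φ (ENNReal.ofReal s)

theorem le_raiseJ {n j : ℕ} (Φ : ℝ≥0∞ → ℝ≥0∞) (x : ℝ≥0∞) {s : ℝ} (hs : 0 < s) :
    min x (ENNReal.ofReal s) * ENNReal.ofReal (s ^ ((j:ℝ) / n - 1)) *
      Φ (ENNReal.ofReal s) ≤ raiseJ n j Φ x :=
  le_iSup₂ (f := fun (s : ℝ) (_ : 0 < s) => min x (ENNReal.ofReal s) *
    ENNReal.ofReal (s ^ ((j:ℝ) / n - 1)) * Φ (ENNReal.ofReal s)) s hs

/-- The operators add their orders; the exponents are such that in the double supremum one may keep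
the larger or the smaller of the two parameters. -/
theorem raise_raiseJ_le {n j : ℕ} {Φ : ℝ≥0∞ → ℝ≥0∞} (hΦ : Monotone Φ) (x : ℝ≥0∞) :
    raise n (raiseJ n j Φ) x ≤ raiseJ n (j + 1) Φ x := by
  refine iSup₂_le fun s hs => ?_
  unfold raiseJ
  rw [ENNReal.mul_iSup]
  refine iSup_le fun r => ?_
  rw [ENNReal.mul_iSup]
  refine iSup_le fun hr => ?_
  rcases le_total s r with hsr | hrs
  · refine le_trans ?_ (le_raiseJ (n := n) (j := j + 1) Φ x hr)
    rw [min_eq_left (ENNReal.ofReal_le_ofReal hsr), ← mul_assoc]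
    refine mul_le_mul_left ?_ _
    rw [mul_assoc]
    refine mul_le_mul' (min_le_min le_rfl (ENNReal.ofReal_le_ofReal hsr)) ?_
    rw [← ENNReal.ofReal_mul hs.le, ← ENNReal.ofReal_mul (by positivity)]
    refine ENNReal.ofReal_le_ofReal ?_
    have h1 : s ^ ((1:ℝ) / n - 1) * s = s ^ ((1:ℝ) / n) := by
      rw [Real.rpow_sub hs, Real.rpow_one]; field_simp
    have h2 : r ^ (((j + 1 : ℕ) : ℝ) / n - 1) = r ^ ((1:ℝ) / n) * r ^ ((j:ℝ) / n - 1) := by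
      rw [← Real.rpow_add hr]; congr 1; push_cast; ring
    rw [← mul_assoc, h1, h2]
    exact mul_le_mul_of_nonneg_right (Real.rpow_le_rpow hs.le hsr (by positivity)) (by positivity)
  · refine le_trans ?_ (le_raiseJ (n := n) (j := j + 1) Φ x hs)
    rw [min_eq_right (ENNReal.ofReal_le_ofReal hrs), ← mul_assoc]
    refine mul_le_mul' ?_ (hΦ (ENNReal.ofReal_le_ofReal hrs))
    rw [mul_assoc]
    refine mul_le_mul_right ?_ _
    rw [← ENNReal.ofReal_mul hr.le, ← ENNReal.ofReal_mul (by positivity)]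
    refine ENNReal.ofReal_le_ofReal ?_
    have h1 : r * r ^ ((j:ℝ) / n - 1) = r ^ ((j:ℝ) / n) := by
      rw [Real.rpow_sub hr, Real.rpow_one]; field_simp
    have h2 : s ^ (((j + 1 : ℕ) : ℝ) / n - 1) = s ^ ((1:ℝ) / n - 1) * s ^ ((j:ℝ) / n) := by
      rw [← Real.rpow_add hs]; congr 1; push_cast; ring
    rw [h1, h2]
    exact mul_le_mul_of_nonneg_left (Real.rpow_le_rpow hr.le hrs (by positivity)) (by positivity)

/-- The `m`-fold iterate of the operator of order one is dominated by the operator of order `m`, which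
collapses the iteration into a single supremum. -/
theorem iterate_raise_le {n m : ℕ} (hm : 0 < m) {Φ : ℝ≥0∞ → ℝ≥0∞} (hΦ : Monotone Φ) (x : ℝ≥0∞) :
    (raise n)^[m] Φ x ≤ raiseJ n m Φ x := by
  obtain ⟨j, rfl⟩ := Nat.exists_eq_add_of_lt hm
  rw [zero_add]
  induction j generalizing x with
  | zero => simp [raise, raiseJ]
  | succ j ih =>
    rw [Function.iterate_succ_apply']
    refine le_trans ?_ (raise_raiseJ_le hΦ x)
    have ih' : ∀ y, (raise n)^[j + 1] Φ y ≤ raiseJ n (j + 1) Φ y := fun y => ih y (by omega)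
    generalize (raise n)^[j + 1] Φ = Ψ at ih' ⊢
    exact iSup₂_mono fun s _ => mul_le_mul_right (ih' _) _

/-- The level of the decreasing rearrangement is attained. -/
theorem meas_le_of_rearrE_le {α : Type*} [MeasurableSpace α] {μ : Measure α} {f : α → ℝ≥0∞} {t : ℝ}
    {L : ℝ≥0∞} (h : rearrE μ f t ≤ L) : μ {x | L < f x} ≤ ENNReal.ofReal t := by
  rcases eq_or_ne L ⊤ with rfl | hL
  · simp
  obtain ⟨u, hu, hlt, hlim⟩ := exists_seq_strictAnti_tendsto' (lt_top_iff_ne_top.2 hL)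
  have hset : {x | L < f x} = ⋃ k, {x | u k < f x} := by
    ext x
    simp only [mem_ofPred_eq, mem_iUnion]
    exact ⟨fun hx => (hlim.eventually_lt_const hx).exists, fun ⟨k, hk⟩ => (hlt k).1.trans hk⟩
  have hmono : Monotone fun k => {x | u k < f x} := fun a b hab x hx =>
    lt_of_le_of_lt (hu.antitone hab) hx
  rw [hset, hmono.measure_iUnion]
  refine iSup_le fun k => ?_
  obtain ⟨l, hl, hlu⟩ := sInf_lt_iff.1 (lt_of_le_of_lt h (hlt k).1)
  exact (measure_mono fun x hx => hlu.trans hx).trans hl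

theorem lt_rearr {n : ℕ} {g : Euc n → ℝ} {t τ : ℝ} (hτ : 0 ≤ τ)
    (h : ENNReal.ofReal t < volume {x | τ < |g x|}) : ENNReal.ofReal τ < rearr volume g t := by
  by_contra hcon
  have h1 := meas_le_of_rearrE_le (not_lt.1 hcon)
  have h2 : {x : Euc n | ENNReal.ofReal τ < ENNReal.ofReal |g x|} = {x | τ < |g x|} := by
    ext x
    exact ENNReal.ofReal_lt_ofReal_iff_of_nonneg hτ
  rw [h2] at h1
  exact absurd h (not_lt.2 h1)

theorem antitone_rearr {α : Type*} [MeasurableSpace α] (μ : Measure α) (g : α → ℝ) :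
    Antitone (rearr μ g) := fun _ _ hst =>
  sInf_le_sInf fun _ hl => le_trans hl (ENNReal.ofReal_le_ofReal hst)

/-- The primitive `x ↦ ∫₀^x H`. -/
def prim (H : ℝ → ℝ≥0∞) (x : ℝ≥0∞) : ℝ≥0∞ :=
  ∫⁻ t in Ioi (0:ℝ), {t | ENNReal.ofReal t < x}.indicator H t

theorem volume_ofReal_lt_le (y : ℝ≥0∞) :
    ∫⁻ τ in Ioi (0:ℝ), {τ | ENNReal.ofReal τ < y}.indicator 1 τ ≤ y := by
  rcases eq_or_ne y ⊤ with rfl | hy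
  · exact le_top
  have hm : MeasurableSet {τ : ℝ | ENNReal.ofReal τ < y} :=
    measurableSet_lt ENNReal.measurable_ofReal measurable_const
  rw [lintegral_indicator_one hm, Measure.restrict_apply hm]
  calc volume ({τ : ℝ | ENNReal.ofReal τ < y} ∩ Ioi 0) ≤ volume (Ioo 0 y.toReal) := by
        refine measure_mono fun τ hτ => ⟨hτ.2, ?_⟩
        have h1 : ENNReal.ofReal τ < y := hτ.1
        rwa [← ENNReal.ofReal_toReal hy, ENNReal.ofReal_lt_ofReal_iff_of_nonneg (le_of_lt hτ.2)] at h1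
    _ = y := by rw [Real.volume_Ioo, sub_zero, ENNReal.ofReal_toReal hy]

/-- The Lorentz functional with weight `H` is dominated by the integral of `H` against the
decreasing rearrangement. -/
theorem lam_prim_le {n : ℕ} (g : Euc n → ℝ) {H : ℝ → ℝ≥0∞} (hH : Measurable H) :
    Lam (prim H) g ≤ ∫⁻ t in Ioi (0:ℝ), rearr volume g t * H t := by
  have hd : Measurable fun τ : ℝ => volume {x : Euc n | τ < |g x|} :=
    Antitone.measurable fun s t hst => measure_mono fun x hx => lt_of_le_of_lt hst hx
  unfold Lam prim
  rw [lintegral_lintegral_swap]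
  · refine setLIntegral_mono' measurableSet_Ioi fun t ht => ?_
    calc ∫⁻ τ in Ioi (0:ℝ), {t | ENNReal.ofReal t < volume {x | τ < |g x|}}.indicator H t
        ≤ ∫⁻ τ in Ioi (0:ℝ), {τ | ENNReal.ofReal τ < rearr volume g t}.indicator 1 τ * H t := by
          refine setLIntegral_mono' measurableSet_Ioi fun τ hτ => ?_
          by_cases h : ENNReal.ofReal t < volume {x | τ < |g x|}
          · have h' := lt_rearr (le_of_lt hτ) h
            simp only [indicator_apply, mem_ofPred_eq, if_pos h, if_pos h', Pi.one_apply, one_mul,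
              le_refl]
          · simp only [indicator_apply, mem_ofPred_eq, if_neg h, zero_le]
      _ = (∫⁻ τ in Ioi (0:ℝ), {τ | ENNReal.ofReal τ < rearr volume g t}.indicator 1 τ) * H t :=
          lintegral_mul_const _ (measurable_one.indicator
            (measurableSet_lt ENNReal.measurable_ofReal measurable_const))
      _ ≤ _ := mul_le_mul_left (volume_ofReal_lt_le _) _
  · have hs : MeasurableSet {p : ℝ × ℝ | ENNReal.ofReal p.2 < volume {x : Euc n | p.1 < |g x|}} :=
      measurableSet_lt (ENNReal.measurable_ofReal.comp measurable_snd) (hd.comp measurable_fst)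
    exact ((hH.comp measurable_snd).indicator hs).aemeasurable

/-- A function at least `A` on `(0, s)` has a primitive at least `min(x, s) A`. -/
theorem min_mul_le_prim {H : ℝ → ℝ≥0∞} {A : ℝ≥0∞} {s : ℝ}
    (hA : ∀ t, 0 < t → t < s → A ≤ H t) (x : ℝ≥0∞) : min x (ENNReal.ofReal s) * A ≤ prim H x := by
  set b : ℝ := (min x (ENNReal.ofReal s)).toReal with hb
  have hfin : min x (ENNReal.ofReal s) ≠ ⊤ := ne_top_of_le_ne_top ENNReal.ofReal_ne_top (min_le_right _ _)
  have hbe : ENNReal.ofReal b = min x (ENNReal.ofReal s) := ENNReal.ofReal_toReal hfin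
  unfold prim
  calc min x (ENNReal.ofReal s) * A = ∫⁻ _ in Ioo (0:ℝ) b, A := by
        rw [setLIntegral_const, Real.volume_Ioo, sub_zero, hbe, mul_comm]
    _ ≤ ∫⁻ t in Ioo (0:ℝ) b, {t | ENNReal.ofReal t < x}.indicator H t := by
        refine setLIntegral_mono' measurableSet_Ioo fun t ht => ?_
        have h1 : ENNReal.ofReal t < min x (ENNReal.ofReal s) := by
          rw [← hbe]; exact (ENNReal.ofReal_lt_ofReal_iff_of_nonneg ht.1.le).2 ht.2
        simp only [indicator_apply, mem_ofPred_eq, if_pos (h1.trans_le (min_le_left _ _))]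
        exact hA t ht.1 ((ENNReal.ofReal_lt_ofReal_iff_of_nonneg ht.1.le).1
          (h1.trans_le (min_le_right _ _)))
    _ ≤ _ := lintegral_mono_set fun t ht => ht.1

/-- Hölder's inequality between a rearrangement-invariant norm and its associate norm. -/
theorem holder_assoc (N : RINorm (volume.restrict (Ioi (0 : ℝ)))) {f h : ℝ → ℝ≥0∞}
    (h0 : N.ρ f ≠ 0) (ht : N.ρ f ≠ ⊤) :
    ∫⁻ t in Ioi (0:ℝ), f t * h t ≤ N.ρ f * N.assoc h := by
  have h1 : N.ρ (fun t => (N.ρ f)⁻¹ * f t) ≤ 1 := by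
    rw [N.ρ_smul, ENNReal.inv_mul_cancel h0 ht]
  have h2 : ∫⁻ t in Ioi (0:ℝ), (N.ρ f)⁻¹ * f t * h t ≤ N.assoc h :=
    le_iSup₂ (f := fun (f : ℝ → ℝ≥0∞) (_ : N.ρ f ≤ 1) => ∫⁻ t in Ioi (0:ℝ), f t * h t) _ h1
  simp only [mul_assoc] at h2
  rw [lintegral_const_mul' _ _ (ENNReal.inv_ne_top.2 h0)] at h2
  calc _ = N.ρ f * ((N.ρ f)⁻¹ * ∫⁻ t in Ioi (0:ℝ), f t * h t) := by
        rw [← mul_assoc, ENNReal.mul_inv_cancel h0 ht, one_mul]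
    _ ≤ _ := mul_le_mul_right h2 _

/-- The weight condition makes the gauge of order `m` generated by `min(1, s)` finite on the
gradient. -/
theorem lam_base_lt_top (N : RINorm (volume.restrict (Ioi (0 : ℝ)))) {n m : ℕ} (hmn : m < n)
    (hW : WeightCond N n m) {g : Euc n → ℝ} (hg : N.ρ (rearr volume g) < ⊤) :
    Lam (raiseJ n m fun s => min 1 s) g < ⊤ := by
  have hn0 : (0:ℝ) < n := by exact_mod_cast (by omega : 0 < n)
  have hmn' : (m:ℝ) / n - 1 ≤ 0 := by
    rw [sub_nonpos, div_le_one hn0]; exact_mod_cast hmn.le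
  set W : ℝ → ℝ≥0∞ := fun t => min 1 (ENNReal.ofReal (t ^ ((m:ℝ) / n - 1))) with hWdef
  have hWm : Measurable W := measurable_const.min (by fun_prop)
  have h1 : ∀ x, raiseJ n m (fun s => min 1 s) x ≤ prim W x := fun x => by
    refine iSup₂_le fun s hs => ?_
    rw [mul_assoc]
    refine min_mul_le_prim (fun t ht hts => ?_) x
    have hle : s ^ ((m:ℝ) / n - 1) ≤ t ^ ((m:ℝ) / n - 1) :=
      Real.rpow_le_rpow_of_nonpos ht hts.le hmn'
    refine le_min ?_ ?_
    · rcases le_total s 1 with h | h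
      · refine (mul_le_mul_right (min_le_right _ _) _).trans ?_
        rw [← ENNReal.ofReal_mul (by positivity), ← ENNReal.ofReal_one]
        refine ENNReal.ofReal_le_ofReal ?_
        rw [Real.rpow_sub hs, Real.rpow_one, div_mul_cancel₀ _ hs.ne']
        exact Real.rpow_le_one hs.le h (by positivity)
      · refine (mul_le_mul_right (min_le_left _ _) _).trans ?_
        rw [mul_one, ← ENNReal.ofReal_one]
        exact ENNReal.ofReal_le_ofReal (Real.rpow_le_one_of_one_le_of_nonpos h hmn')
    · refine (mul_le_mul_right (min_le_left _ _) _).trans ?_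
      rw [mul_one]
      exact ENNReal.ofReal_le_ofReal hle
  refine lt_of_le_of_lt ((lintegral_mono fun τ => h1 _).trans (lam_prim_le g hWm)) ?_
  set G := rearr volume g with hG
  have hGm : Measurable G := (antitone_rearr volume g).measurable
  rcases eq_or_ne (N.ρ G) 0 with h0 | h0
  · have := N.ρ_eq_zero G hGm h0
    rw [lintegral_congr_ae (g := fun _ => 0)]
    · simp
    · filter_upwards [this] with t ht
      rw [ht]; simp
  obtain ⟨C, hC, hloc⟩ := N.ρ_loc (Ioc 0 1) measurableSet_Ioc
    (lt_of_le_of_lt (Measure.restrict_apply_le _ _) (by simp))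
  have h2 : ∀ t : ℝ, G t * W t ≤ (Ioc (0:ℝ) 1).indicator G t + (Iic 0).indicator (fun t => G t * W t) t
      + G t * (ENNReal.ofReal (t ^ ((m : ℝ) / n - 1)) * (Ioi (1 : ℝ)).indicator 1 t) := fun t => by
    rcases lt_or_ge 1 t with ht | ht
    · rw [indicator_of_mem (show t ∈ Ioi 1 from ht)]
      refine le_trans (mul_le_mul_right (min_le_right _ _) _) ?_
      simp
    rcases le_or_gt t 0 with ht0 | ht0
    · rw [indicator_of_mem (show t ∈ Iic 0 from ht0) (fun t => G t * W t), add_assoc, add_left_comm]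
      exact le_self_add
    · rw [indicator_of_mem (show t ∈ Ioc 0 1 from ⟨ht0, ht⟩), add_assoc]
      refine le_trans (mul_le_mul_right (min_le_left _ _) _) ?_
      rw [mul_one]; exact le_self_add
  calc ∫⁻ t in Ioi (0:ℝ), G t * W t ≤ ∫⁻ t in Ioi (0:ℝ), ((Ioc (0:ℝ) 1).indicator G t
      + G t * (ENNReal.ofReal (t ^ ((m : ℝ) / n - 1)) * (Ioi (1 : ℝ)).indicator 1 t)) := by
        refine setLIntegral_mono' measurableSet_Ioi fun t ht => (h2 t).trans (le_of_eq ?_)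
        rw [indicator_of_notMem (show t ∉ Iic 0 from notMem_Iic.2 ht), add_zero]
    _ = ∫⁻ t in Ioc 0 1, G t ∂(volume.restrict (Ioi (0:ℝ))) + ∫⁻ t in Ioi (0:ℝ),
      G t * (ENNReal.ofReal (t ^ ((m : ℝ) / n - 1)) * (Ioi (1 : ℝ)).indicator 1 t) := by
        rw [lintegral_add_left (hGm.indicator measurableSet_Ioc), lintegral_indicator measurableSet_Ioc]
    _ ≤ C * N.ρ G + N.ρ G * N.assoc _ := add_le_add (hloc G) (holder_assoc N h0 hg.ne)
    _ < ⊤ := ENNReal.add_lt_top.2 ⟨ENNReal.mul_lt_top hC.lt_top hg, ENNReal.mul_lt_top hg hW⟩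

/-! ### Duality with the norm of σ_m -/

theorem measurable_intLog : Measurable fun t : ℝ => Int.log 2 t := by
  have h : ∀ t : ℝ, t ≤ 0 → Int.log 2 t = 0 := fun t ht => Int.log_of_right_le_zero _ ht
  refine measurable_to_countable' fun k => ?_
  have hpos : MeasurableSet ((fun t : ℝ => Int.log 2 t) ⁻¹' {k} ∩ Ioi 0) := by
    have : (fun t : ℝ => Int.log 2 t) ⁻¹' {k} ∩ Ioi 0 = Ico ((2:ℝ) ^ k) (2 ^ (k + 1)) := by
      ext t
      simp only [mem_inter_iff, mem_preimage, mem_singleton_iff, mem_Ioi, mem_Ico]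
      constructor
      · rintro ⟨rfl, ht⟩
        exact ⟨by exact_mod_cast Int.zpow_log_le_self (b := 2) one_lt_two ht,
          by exact_mod_cast Int.lt_zpow_succ_log_self (b := 2) one_lt_two t⟩
      · rintro ⟨h1, h2⟩
        have ht : 0 < t := lt_of_lt_of_le (by positivity) h1
        refine ⟨le_antisymm ?_ ?_, ht⟩
        · have := (Int.lt_zpow_iff_log_lt (b := 2) one_lt_two ht (x := k + 1)).1 (by exact_mod_cast h2)
          omega
        · exact (Int.zpow_le_iff_le_log (b := 2) one_lt_two ht).1 (by exact_mod_cast h1)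
    rw [this]; exact measurableSet_Ico
  have hneg : MeasurableSet ((fun t : ℝ => Int.log 2 t) ⁻¹' {k} ∩ Iic 0) := by
    by_cases hk : k = 0
    · have : (fun t : ℝ => Int.log 2 t) ⁻¹' {k} ∩ Iic 0 = Iic 0 :=
        inter_eq_right.2 fun t ht => by simp [hk, h t ht]
      rw [this]; exact measurableSet_Iic
    · have : (fun t : ℝ => Int.log 2 t) ⁻¹' {k} ∩ Iic 0 = ∅ := by
        refine eq_empty_of_forall_notMem fun t ⟨h1, h2⟩ => hk ?_
        rw [← h t h2]; exact h1.symm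
      rw [this]; exact MeasurableSet.empty
  have := hpos.union hneg
  rwa [← inter_union_distrib_left, Ioi_union_Iic, inter_univ] at this

theorem zpow_log_le {t : ℝ} (ht : 0 < t) : (2:ℝ) ^ Int.log 2 t ≤ t := by
  exact_mod_cast Int.zpow_log_le_self (b := 2) one_lt_two ht

theorem lt_zpow_log (t : ℝ) : t < (2:ℝ) ^ (Int.log 2 t + 1) := by
  exact_mod_cast Int.lt_zpow_succ_log_self (b := 2) one_lt_two t

/-- Moving the mass of a function from the points `t` to the dyadic intervals
`[2^{j(k)}, 2^{j(k)+1})`, where `2^k ≤ t < 2^{k+1}` and `j(k) > k`, by the translations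
`t ↦ t + 2^{j(k)}` preserves the rearrangement. Hence the values `h(2^{j(k)})` may be tested
against the original function. -/
theorem lintegral_shift_le (N : RINorm (volume.restrict (Ioi (0 : ℝ)))) {G h : ℝ → ℝ≥0∞}
    (hG : Measurable G) (ht : N.ρ G ≠ ⊤)
    (hh : ∀ a y : ℝ, 0 < a → a ≤ y → y < 2 * a → h a ≤ 2 * h y)
    (j : ℤ → ℤ) (hj : ∀ k, k + 1 ≤ j k) :
    ∫⁻ t in Ioi (0:ℝ), G t * h (2 ^ j (Int.log 2 t)) ≤ 2 * (N.ρ G * N.assoc h) := by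
  rcases eq_or_ne (N.ρ G) 0 with h0 | h0
  · have := N.ρ_eq_zero G hG h0
    rw [lintegral_congr_ae (g := fun _ => 0)]
    · simp
    · filter_upwards [this] with t ht
      rw [ht]; simp
  set E : ℤ → Set ℝ := fun i => {t | 0 < t ∧ j (Int.log 2 t) = i} with hE
  have hEm : ∀ i, MeasurableSet (E i) := fun i => by
    have h1 : Measurable fun t : ℝ => j (Int.log 2 t) :=
      (measurable_of_countable j).comp measurable_intLog
    exact measurableSet_Ioi.inter (h1 (measurableSet_singleton i))
  -- A translate of a point of `E i` by `2^i` lies in the dyadic interval of index `i`.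
  have hloc : ∀ i y, y - (2:ℝ) ^ i ∈ E i → (2:ℝ) ^ i < y ∧ y < 2 ^ (i + 1) := by
    rintro i y ⟨h1, h2⟩
    have h3 := lt_zpow_log (y - 2 ^ i)
    have h4 : (2:ℝ) ^ (Int.log 2 (y - 2 ^ i) + 1) ≤ 2 ^ i :=
      zpow_le_zpow_right₀ one_le_two (by have := hj (Int.log 2 (y - 2 ^ i)); omega)
    refine ⟨by linarith, ?_⟩
    rw [zpow_add_one₀ two_ne_zero]
    linarith
  have huniq : ∀ i i' y, y - (2:ℝ) ^ i ∈ E i → y - (2:ℝ) ^ i' ∈ E i' → i' = i := by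
    have aux : ∀ i i' y, y - (2:ℝ) ^ i ∈ E i → y - (2:ℝ) ^ i' ∈ E i' → i ≤ i' := by
      intro i i' y h1 h2
      by_contra hlt
      have h3 := (hloc i y h1).1
      have h4 := (hloc i' y h2).2
      have : (2:ℝ) ^ (i' + 1) ≤ 2 ^ i := zpow_le_zpow_right₀ one_le_two (by omega)
      linarith
    exact fun i i' y h1 h2 => le_antisymm (aux _ _ _ h2 h1) (aux _ _ _ h1 h2)
  set q : ℤ → ℝ → ℝ≥0∞ := fun i => (E i).indicator G with hq
  have hqm : ∀ i, Measurable (q i) := fun i => hG.indicator (hEm i)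
  set Gt : ℝ → ℝ≥0∞ := fun y => ∑' i, q i (y - 2 ^ i) with hGt
  have hGt1 : ∀ i y, y - (2:ℝ) ^ i ∈ E i → Gt y = G (y - 2 ^ i) := fun i y hy => by
    rw [hGt]
    simp only
    rw [tsum_eq_single i fun i' hi' => ?_]
    · exact indicator_of_mem hy _
    · exact indicator_of_notMem (fun h2 => hi' (huniq i i' y hy h2)) _
  have hGt0 : ∀ y, (∀ i, y - (2:ℝ) ^ i ∉ E i) → Gt y = 0 := fun y hy => by
    rw [hGt]
    simp only
    exact ENNReal.tsum_eq_zero.2 fun i => indicator_of_notMem (hy i) _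
  have hdist : ∀ l : ℝ≥0∞, volume.restrict (Ioi (0:ℝ)) {y | l < Gt y} =
      volume.restrict (Ioi (0:ℝ)) {y | l < G y} := by
    intro l
    rw [Measure.restrict_apply' measurableSet_Ioi, Measure.restrict_apply' measurableSet_Ioi]
    have hA : MeasurableSet {y | l < G y} := measurableSet_lt measurable_const hG
    have h1 : {y | l < Gt y} ∩ Ioi 0 = ⋃ i : ℤ, (fun y => y - (2:ℝ) ^ i) ⁻¹' ({y | l < G y} ∩ E i) := by
      ext y
      simp only [mem_inter_iff, mem_ofPred_eq, mem_iUnion, mem_preimage, mem_Ioi]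
      constructor
      · rintro ⟨hy, -⟩
        by_cases hex : ∃ i : ℤ, y - (2:ℝ) ^ i ∈ E i
        · obtain ⟨i, hi⟩ := hex
          exact ⟨i, by rwa [hGt1 i y hi] at hy, hi⟩
        · push Not at hex
          rw [hGt0 y hex] at hy
          exact absurd hy (not_lt.2 zero_le)
      · rintro ⟨i, hi, hi'⟩
        exact ⟨by rwa [hGt1 i y hi'], lt_trans (by positivity) (hloc i y hi').1⟩
    have h2 : {y | l < G y} ∩ Ioi 0 = ⋃ i : ℤ, ({y | l < G y} ∩ E i) := by
      ext y
      simp only [mem_inter_iff, mem_ofPred_eq, mem_iUnion, mem_Ioi, hE]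
      exact ⟨fun ⟨h1, h2⟩ => ⟨_, h1, h2, rfl⟩, fun ⟨i, h1, h2, _⟩ => ⟨h1, h2⟩⟩
    rw [h1, h2, measure_iUnion, measure_iUnion]
    · simp only [sub_eq_add_neg]
      exact tsum_congr fun i => measure_preimage_add_right _ _ _
    · intro i i' hne
      exact disjoint_left.2 fun y hy hy' => hne (hy.2.2.symm.trans hy'.2.2)
    · exact fun i => hA.inter (hEm i)
    · intro i i' hne
      exact disjoint_left.2 fun y hy hy' => hne (huniq i' i y hy'.2 hy.2)
    · exact fun i => (measurable_id.sub_const _) (hA.inter (hEm i))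
  have hρ : N.ρ Gt = N.ρ G := N.ρ_ri _ _ (by
    funext t
    unfold rearrE
    simp only [hdist])
  calc ∫⁻ t in Ioi (0:ℝ), G t * h (2 ^ j (Int.log 2 t))
      = ∫⁻ t in Ioi (0:ℝ), ∑' i : ℤ, q i t * h (2 ^ i) := by
        refine setLIntegral_congr_fun measurableSet_Ioi fun t ht => ?_
        rw [tsum_eq_single (j (Int.log 2 t)) fun i hi => ?_]
        · rw [hq]; simp only
          rw [indicator_of_mem (show t ∈ E _ from ⟨ht, rfl⟩)]
        · rw [hq]; simp only
          rw [indicator_of_notMem (fun h => hi h.2.symm), zero_mul]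
    _ ≤ ∫⁻ t, ∑' i : ℤ, q i t * h (2 ^ i) := setLIntegral_le_lintegral _ _
    _ = ∑' i : ℤ, ∫⁻ t, q i t * h (2 ^ i) := by
        refine lintegral_tsum (f := fun (i : ℤ) t => q i t * h (2 ^ i)) fun i => ?_
        exact ((hqm i).mul_const _).aemeasurable
    _ = ∑' i : ℤ, ∫⁻ y, q i (y - 2 ^ i) * h (2 ^ i) := by
        refine tsum_congr fun i => ?_
        exact (lintegral_sub_right_eq_self (fun t => q i t * h (2 ^ i)) _).symm
    _ = ∫⁻ y, ∑' i : ℤ, q i (y - 2 ^ i) * h (2 ^ i) := by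
        refine (lintegral_tsum (f := fun (i : ℤ) y => q i (y - 2 ^ i) * h (2 ^ i)) fun i => ?_).symm
        exact (((hqm i).comp (measurable_id.sub_const _)).mul_const _).aemeasurable
    _ ≤ ∫⁻ y, (Ioi (0:ℝ)).indicator (fun y => 2 * (Gt y * h y)) y := by
        refine lintegral_mono fun y => ?_
        by_cases hex : ∃ i : ℤ, y - (2:ℝ) ^ i ∈ E i
        · obtain ⟨i, hi⟩ := hex
          have hl := hloc i y hi
          rw [indicator_of_mem (show y ∈ Ioi 0 from lt_trans (by positivity) hl.1),
            tsum_eq_single i fun i' hi' => ?_]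
          · rw [hGt1 i y hi, hq]; simp only
            rw [indicator_of_mem hi, mul_left_comm]
            refine mul_le_mul_right (hh _ _ (by positivity) hl.1.le ?_) _
            rw [mul_comm, ← zpow_add_one₀ two_ne_zero]; exact hl.2
          · rw [hq]; simp only
            rw [indicator_of_notMem (fun h2 => hi' (huniq i i' y hi h2)), zero_mul]
        · push Not at hex
          rw [ENNReal.tsum_eq_zero.2 fun i => ?_]
          · exact zero_le
          · rw [hq]; simp only
            rw [indicator_of_notMem (hex i), zero_mul]
    _ = 2 * ∫⁻ y in Ioi (0:ℝ), Gt y * h y := by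
        rw [lintegral_indicator measurableSet_Ioi, lintegral_const_mul' _ _ ENNReal.ofNat_ne_top]
    _ ≤ 2 * (N.ρ G * N.assoc h) := by
        refine mul_le_mul_right ?_ _
        rw [← hρ]
        exact holder_assoc N (hρ ▸ h0) (hρ ▸ ht)

/-- The supremum of `h` over the dyadic points to the right of `t`. -/
def dyadicSup (h : ℝ → ℝ≥0∞) (t : ℝ) : ℝ≥0∞ :=
  ⨆ M : ℕ, (Finset.Icc (Int.log 2 t + 1) (Int.log 2 t + 1 + M)).sup fun i : ℤ => h (2 ^ i)

theorem measurable_dyadicSup_aux (h : ℝ → ℝ≥0∞) (M : ℕ) : Measurable fun t : ℝ =>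
    (Finset.Icc (Int.log 2 t + 1) (Int.log 2 t + 1 + M)).sup fun i : ℤ => h (2 ^ i) :=
  (measurable_of_countable fun k : ℤ =>
    (Finset.Icc (k + 1) (k + 1 + M)).sup fun i : ℤ => h (2 ^ i)).comp measurable_intLog

theorem measurable_dyadicSup (h : ℝ → ℝ≥0∞) : Measurable (dyadicSup h) :=
  Measurable.iSup fun M => measurable_dyadicSup_aux h M

/-- The supremum to the right of `t` may be tested against `G` at the cost of a factor `2`: restrict
it to finitely many dyadic points, where it is attained at some index, and apply
`lintegral_shift_le` to that choice of indices. -/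
theorem lintegral_dyadicSup_le (N : RINorm (volume.restrict (Ioi (0 : ℝ)))) {G h : ℝ → ℝ≥0∞}
    (hG : Measurable G) (ht : N.ρ G ≠ ⊤)
    (hh : ∀ a y : ℝ, 0 < a → a ≤ y → y < 2 * a → h a ≤ 2 * h y) :
    ∫⁻ t in Ioi (0:ℝ), G t * dyadicSup h t ≤ 2 * (N.ρ G * N.assoc h) := by
  unfold dyadicSup
  simp only [ENNReal.mul_iSup]
  rw [lintegral_iSup (f := fun (M : ℕ) (t : ℝ) => G t *
    (Finset.Icc (Int.log 2 t + 1) (Int.log 2 t + 1 + M)).sup fun i : ℤ => h (2 ^ i))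
    (fun M => hG.mul (measurable_dyadicSup_aux h M))]
  · refine iSup_le fun M => ?_
    have hmax : ∀ k : ℤ, ∃ i : ℤ, k + 1 ≤ i ∧
        ((Finset.Icc (k + 1) (k + 1 + M)).sup fun i : ℤ => h (2 ^ i)) = h (2 ^ i) := fun k => by
      obtain ⟨i, hi, he⟩ := Finset.exists_mem_eq_sup (Finset.Icc (k + 1) (k + 1 + (M:ℤ)))
        (Finset.nonempty_Icc.2 (by omega)) fun i : ℤ => h (2 ^ i)
      exact ⟨i, (Finset.mem_Icc.1 hi).1, he⟩
    choose j hj1 hj2 using hmax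
    simp only [hj2]
    exact lintegral_shift_le N hG ht hh j hj1
  · intro M M' hM t
    refine mul_le_mul_right (Finset.sup_mono (Finset.Icc_subset_Icc le_rfl ?_)) _
    have : (M:ℤ) ≤ M' := by exact_mod_cast hM
    omega

theorem le_dyadicSup (h : ℝ → ℝ≥0∞) {t : ℝ} {i : ℤ} (hi : Int.log 2 t + 1 ≤ i) :
    h (2 ^ i) ≤ dyadicSup h t := by
  refine le_trans ?_ (le_iSup _ (i - (Int.log 2 t + 1)).toNat)
  exact Finset.le_sup (f := fun i : ℤ => h (2 ^ i)) (Finset.mem_Icc.2 ⟨hi, by omega⟩)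

/-- The gauge dual to `f`, namely `x ↦ ∫₀^∞ min(x, |{|f| > τ}|) dτ`. -/
def dualGauge {n : ℕ} (f : Euc n → ℝ) (x : ℝ≥0∞) : ℝ≥0∞ :=
  ∫⁻ τ in Ioi (0:ℝ), min x (volume {y | τ < |f y|})

theorem gauge_dualGauge {n : ℕ} (f : Euc n → ℝ) : Gauge (dualGauge f) := by
  refine ⟨fun a b hab => lintegral_mono fun τ => min_le_min hab le_rfl, by simp [dualGauge],
    fun M x => ?_⟩
  unfold dualGauge
  rcases Nat.eq_zero_or_pos M with rfl | hM
  · simp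
  rw [← lintegral_const_mul' _ _ (ENNReal.natCast_ne_top M)]
  refine lintegral_mono fun τ => ?_
  rw [mul_min]
  have : (1 : ℝ≥0∞) ≤ M := by exact_mod_cast hM
  exact min_le_min le_rfl (le_mul_of_one_le_left zero_le this)

/-- At a finite argument the dual gauge is bounded by `∫₀^t f*`; no measurability of `f` enters. -/
theorem dualGauge_le {n : ℕ} (f : Euc n → ℝ) (t : ℝ) :
    dualGauge f (ENNReal.ofReal t) ≤ ∫⁻ s in Ioo (0:ℝ) t, rearr volume f s := by
  have h1 : ∀ x : ℝ≥0∞, min (ENNReal.ofReal t) x ≤ prim ((Iio t).indicator 1) x := fun x => by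
    have := min_mul_le_prim (H := (Iio t).indicator 1) (A := 1) (s := t)
      (fun r _ hr => by rw [indicator_of_mem (show r ∈ Iio t from hr)]; rfl) x
    rwa [mul_one, min_comm] at this
  refine (lintegral_mono fun τ => h1 _).trans ((lam_prim_le f
    (measurable_one.indicator measurableSet_Iio)).trans (le_of_eq ?_))
  rw [← lintegral_indicator measurableSet_Ioi, ← lintegral_indicator measurableSet_Ioo]
  refine lintegral_congr fun s => ?_
  simp only [indicator_apply, mem_Ioi, mem_Iio, mem_Ioo, Pi.one_apply]
  by_cases ha : 0 < s <;> by_cases hb : s < t <;> simp [ha, hb]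

/-- The Hardy–Littlewood inequality, in the form `∫ |v f| ≤ ∫∫ min(|{|v| > σ}|, |{|f| > τ}|)`, with
no measurability assumed of `f`. -/
theorem lintegral_mul_le_lam {n : ℕ} {v : Euc n → ℝ} (hv : AEMeasurable v volume) (f : Euc n → ℝ) :
    ∫⁻ x, ENNReal.ofReal |v x| * ENNReal.ofReal |f x| ≤ Lam (dualGauge f) v := by
  wlog hvm : Measurable v generalizing v
  · have h := this hv.measurable_mk.aemeasurable hv.measurable_mk
    rw [lam_congr_ae _ hv.ae_eq_mk]
    refine le_trans (le_of_eq (lintegral_congr_ae ?_)) h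
    filter_upwards [hv.ae_eq_mk] with x hx
    rw [← hx]
  obtain ⟨w, hwm, hwle, hw⟩ := exists_measurable_le_lintegral_eq (volume : Measure (Euc n))
    fun x => ENNReal.ofReal |v x| * ENNReal.ofReal |f x|
  have hVm : Measurable fun x => ENNReal.ofReal |v x| := by fun_prop
  set F : Euc n → ℝ := fun x => (w x / ENNReal.ofReal |v x|).toReal with hF
  have hFm : Measurable F := (hwm.div hVm).ennreal_toReal
  have hFf : ∀ x, F x ≤ |f x| := fun x => by
    refine ENNReal.toReal_le_of_le_ofReal (abs_nonneg _) ?_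
    exact ENNReal.div_le_of_le_mul' (hwle x)
  have hF0 : ∀ x, 0 ≤ F x := fun x => ENNReal.toReal_nonneg
  have hwF : ∀ x, w x = ENNReal.ofReal (F x) * ENNReal.ofReal |v x| := fun x => by
    have hfin : w x / ENNReal.ofReal |v x| ≠ ⊤ := ne_top_of_le_ne_top
      (ENNReal.ofReal_ne_top (r := |f x|)) (ENNReal.div_le_of_le_mul' (hwle x))
    rw [hF, ENNReal.ofReal_toReal hfin]
    rcases eq_or_ne (ENNReal.ofReal |v x|) 0 with h0 | h0
    · have := hwle x
      simp only [h0, zero_mul] at this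
      rw [h0, mul_zero]; exact le_antisymm this zero_le
    · rw [ENNReal.div_mul_cancel h0 ENNReal.ofReal_ne_top]
  have hFm' : Measurable fun x => ENNReal.ofReal (F x) := by fun_prop
  rw [hw]
  calc ∫⁻ x, w x = ∫⁻ x, ENNReal.ofReal |v x| ∂(volume.withDensity fun x => ENNReal.ofReal (F x)) := by
        rw [lintegral_withDensity_eq_lintegral_mul _ hFm' hVm]
        exact lintegral_congr hwF
    _ = ∫⁻ τ in Ioi (0:ℝ), volume.withDensity (fun x => ENNReal.ofReal (F x)) {x | τ < |v x|} :=
        lintegral_eq_lintegral_meas_lt _ (Eventually.of_forall fun x => abs_nonneg _)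
          (by fun_prop)
    _ ≤ Lam (dualGauge f) v := lintegral_mono fun τ => by
        have hs : MeasurableSet {x | τ < |v x|} := measurableSet_lt measurable_const (by fun_prop)
        rw [withDensity_apply _ hs, lintegral_eq_lintegral_meas_lt _
          (Eventually.of_forall hF0) hFm.aemeasurable]
        refine lintegral_mono fun σ => le_min ?_ ?_
        · refine (measure_mono (subset_univ _)).trans (le_of_eq ?_)
          rw [Measure.restrict_apply_univ]
        · refine (Measure.restrict_apply_le _ _).trans (measure_mono fun x hx => ?_)
          exact lt_of_lt_of_le hx (hFf x)

/-- The gauge dual to `f`, raised to order `m`, is controlled by the norm of `X` as soon as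
`σ_m(f) ≤ 1`. -/
theorem lam_dual_le (N : RINorm (volume.restrict (Ioi (0 : ℝ)))) {n m : ℕ} (hmn : m < n)
    {g f : Euc n → ℝ} (hg : N.ρ (rearr volume g) < ⊤) (hf : sigmaNorm N n m f ≤ 1) :
    Lam (raiseJ n m (dualGauge f)) g ≤ 4 * N.ρ (rearr volume g) := by
  have hn0 : (0:ℝ) < n := by exact_mod_cast (by omega : 0 < n)
  set I : ℝ → ℝ≥0∞ := fun t => ∫⁻ s in Ioo (0:ℝ) t, rearr volume f s with hI
  have hImono : Monotone I := fun a b hab => lintegral_mono_set (Ioo_subset_Ioo le_rfl hab)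
  set h : ℝ → ℝ≥0∞ := fun t => ENNReal.ofReal (t ^ ((m : ℝ) / n)) * doubleStar volume f t with hh
  set θ : ℝ := (m:ℝ) / n - 1 with hθ
  have hθ0 : θ ≤ 0 := by rw [hθ, sub_nonpos, div_le_one hn0]; exact_mod_cast hmn.le
  have hθ1 : -1 ≤ θ := by
    rw [hθ]; have : 0 ≤ (m:ℝ) / n := by positivity
    linarith
  have hhI : ∀ t, 0 < t → h t = ENNReal.ofReal (t ^ θ) * I t := fun t ht => by
    simp only [hh, doubleStar, hI]
    rw [← mul_assoc, ← ENNReal.ofReal_inv_of_pos ht, ← ENNReal.ofReal_mul (by positivity), hθ,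
      Real.rpow_sub ht, Real.rpow_one, div_eq_mul_inv (t ^ ((m:ℝ) / n))]
  -- As `-1 ≤ θ ≤ 0`, the weight `t ^ θ` varies at most by the factor `2` within a dyadic interval.
  have hpow : ∀ a y : ℝ, 0 < a → a ≤ y → y ≤ 2 * a →
      ENNReal.ofReal (a ^ θ) ≤ 2 * ENNReal.ofReal (y ^ θ) := fun a y ha hay hy2 => by
    have hy : 0 < y := ha.trans_le hay
    rw [← ENNReal.ofReal_ofNat 2, ← ENNReal.ofReal_mul (by norm_num)]
    refine ENNReal.ofReal_le_ofReal ?_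
    have h1 : (2 * a) ^ θ ≤ y ^ θ := Real.rpow_le_rpow_of_nonpos hy hy2 hθ0
    have h2 : (2:ℝ)⁻¹ ≤ 2 ^ θ := by
      rw [← Real.rpow_neg_one]
      exact Real.rpow_le_rpow_of_exponent_le one_le_two hθ1
    rw [Real.mul_rpow two_pos.le ha.le] at h1
    have h3 : (2:ℝ)⁻¹ * a ^ θ ≤ 2 ^ θ * a ^ θ := mul_le_mul_of_nonneg_right h2 (by positivity)
    linarith
  have hlow : ∀ a y : ℝ, 0 < a → a ≤ y → y < 2 * a → h a ≤ 2 * h y := fun a y ha hay hy2 => by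
    rw [hhI a ha, hhI y (ha.trans_le hay), ← mul_assoc]
    exact mul_le_mul' (hpow a y ha hay hy2.le) (hImono hay)
  have hup : ∀ s t : ℝ, 0 < t → t < s → h s ≤ 2 * dyadicSup h t := fun s t ht hts => by
    have hs : 0 < s := ht.trans hts
    have h1 : Int.log 2 t ≤ Int.log 2 s := Int.log_mono_right ht hts.le
    refine le_trans ?_ (mul_le_mul_right (le_dyadicSup h (i := Int.log 2 s + 1) (by omega)) _)
    rw [hhI s hs, hhI _ (by positivity), ← mul_assoc]
    refine mul_le_mul' (hpow s _ hs (lt_zpow_log s).le ?_) (hImono (lt_zpow_log s).le)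
    rw [zpow_add_one₀ two_ne_zero, mul_comm]
    exact mul_le_mul_of_nonneg_left (zpow_log_le hs) two_pos.le
  have hle : ∀ x, raiseJ n m (dualGauge f) x ≤ prim (fun t => 2 * dyadicSup h t) x := fun x => by
    refine iSup₂_le fun s hs => ?_
    rw [mul_assoc]
    refine le_trans (mul_le_mul_right ?_ _) (min_mul_le_prim (fun t ht hts => hup s t ht hts) x)
    rw [hhI s hs]
    exact mul_le_mul_right (dualGauge_le f s) _
  have hGm : Measurable (rearr volume g) := (antitone_rearr volume g).measurable
  calc Lam (raiseJ n m (dualGauge f)) g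
      ≤ Lam (prim fun t => 2 * dyadicSup h t) g := lintegral_mono fun τ => hle _
    _ ≤ ∫⁻ t in Ioi (0:ℝ), rearr volume g t * (2 * dyadicSup h t) :=
        lam_prim_le g ((measurable_dyadicSup h).const_mul _)
    _ = 2 * ∫⁻ t in Ioi (0:ℝ), rearr volume g t * dyadicSup h t := by
        rw [← lintegral_const_mul' _ _ ENNReal.ofNat_ne_top]
        simp only [mul_left_comm]
    _ ≤ 2 * (2 * (N.ρ (rearr volume g) * N.assoc h)) :=
        mul_le_mul_right (lintegral_dyadicSup_le N hGm hg.ne hlow) _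
    _ ≤ 2 * (2 * (N.ρ (rearr volume g) * 1)) :=
        mul_le_mul_right (mul_le_mul_right (mul_le_mul_right hf _) _) _
    _ = _ := by ring

/-- (Main theorem, existence part.) Let X be an r.i. space over ℝⁿ, m < n,
with t^{m/n−1}χ_{(1,∞)} ∈ X'(0,∞), and let X^m be the r.i. space whose norm is the associate
norm of σ_m(f) = ‖t^{m/n} f**(t)‖_{X'(0,∞)}. Then there is C = C(m,n) such that for each
u ∈ V^m X(ℝⁿ) there is a polynomial P of degree ≤ m−1 with ‖u − P‖_{X^m} ≤ C‖∇^m u‖_X. -/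
theorem stmt_6 (n m : ℕ) (hn : 2 ≤ n) (hm : 0 < m) (hmn : m < n) :
    ∃ C : ℝ, 0 < C ∧
      ∀ (N : RINorm (volume.restrict (Ioi (0 : ℝ)))), WeightCond N n m →
        ∀ (u : Euc n → ℝ) (D : ∀ k : ℕ, (Fin k → Fin n) → Euc n → ℝ),
          HasWeakDerivs n m u D →
          N.ρ (rearr volume (gradAbs n m D)) < ⊤ →
          ∃ P : MvPolynomial (Fin n) ℝ, P.totalDegree ≤ m - 1 ∧
            XmNorm N n m (fun x => u x - polyEval P x) ≤
              ENNReal.ofReal C * N.ρ (rearr volume (gradAbs n m D)) := by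
  have hfin : chainConst n m * 4 ≠ ⊤ := ENNReal.mul_ne_top (chainConst_ne_top hn m) (by simp)
  refine ⟨(chainConst n m * 4).toReal + 1, by positivity, fun N hW u D hD hg => ?_⟩
  have hDu : D ([] : List (Fin n)).length ([] : List (Fin n)).get = u := hD.2.1 _
  obtain ⟨P, hPdeg, hP⟩ := higher_order hn m (chain_of_hasWeakDerivs hD) (by
    rw [chainAbs_eq_gradAbs]
    exact lt_of_le_of_lt (lintegral_mono fun τ => iterate_raise_le hm gauge_min_one.mono _)
      (lam_base_lt_top N hmn hW hg))
  rw [chainAbs_eq_gradAbs] at hP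
  simp only [hDu] at hP
  refine ⟨P, hPdeg, iSup₂_le fun f hf => ?_⟩
  have hv : AEMeasurable (fun x => u x - polyEval P x) volume :=
    (hD.1.aestronglyMeasurable.aemeasurable).sub (continuous_polyEval P).measurable.aemeasurable
  calc ∫⁻ x, ENNReal.ofReal |u x - polyEval P x| * ENNReal.ofReal |f x|
      ≤ Lam (dualGauge f) fun x => u x - polyEval P x := lintegral_mul_le_lam hv f
    _ ≤ chainConst n m * Lam ((raise n)^[m] (dualGauge f)) (gradAbs n m D) :=
        hP _ (gauge_dualGauge f)
    _ ≤ chainConst n m * Lam (raiseJ n m (dualGauge f)) (gradAbs n m D) :=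
        mul_le_mul_right (lintegral_mono fun τ => iterate_raise_le hm (gauge_dualGauge f).mono _) _
    _ ≤ chainConst n m * (4 * N.ρ (rearr volume (gradAbs n m D))) :=
        mul_le_mul_right (lam_dual_le N hmn hg hf) _
    _ = chainConst n m * 4 * N.ρ (rearr volume (gradAbs n m D)) := by rw [mul_assoc]
    _ ≤ _ := by
        refine mul_le_mul_left ?_ _
        rw [← ENNReal.ofReal_toReal hfin]
        exact ENNReal.ofReal_le_ofReal (by rw [ENNReal.toReal_ofReal (by positivity)]; linarith)
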